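/- arXiv:1512.00587 — 7 statements merged into one kernel-verified Lean document; each statement's English description precedes it below -/
import Mathlib

section
/- Let A be a finite alphabet with |A| ≥ 2. Every normal amenable subgroup of Aut(A^ℤ) is contained in Σ(A^ℤ), the subgroup consisting of the powers of the shift σ. -/
/-- The group of self-homeomorphisms of a topological space,
with `(f * g) x = f (g x)`. -/
instance homeoGroup (X : Type*) [TopologicalSpace X] : Group (X ≃ₜ X) where
  mul f g := g.trans f
  one := Homeomorph.refl X
  inv := Homeomorph.symm
  mul_assoc f g h := Homeomorph.ext fun _ => rfl
  one_mul f := Homeomorph.ext fun _ => rfl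
  mul_one f := Homeomorph.ext fun _ => rfl
  inv_mul_cancel f := Homeomorph.ext f.symm_apply_apply

/-- A group is amenable if there is a left-invariant mean on its
bounded real-valued functions. -/
def IsAmenable (G : Type*) [Group G] : Prop :=
  ∃ m : (G → ℝ) → ℝ,
    (∀ f₁ f₂ : G → ℝ, (∃ C, ∀ x, |f₁ x| ≤ C) → (∃ C, ∀ x, |f₂ x| ≤ C) →
      m (f₁ + f₂) = m f₁ + m f₂) ∧
    (∀ (c : ℝ) (f : G → ℝ), (∃ C, ∀ x, |f x| ≤ C) → m (c • f) = c * m f) ∧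
    (∀ f : G → ℝ, (∃ C, ∀ x, |f x| ≤ C) → (∀ x, 0 ≤ f x) → 0 ≤ m f) ∧
    m (fun _ => 1) = 1 ∧
    (∀ (g : G) (f : G → ℝ), (∃ C, ∀ x, |f x| ≤ C) →
      m (fun x => f (g * x)) = m f)

/-- The left shift `(σ x) m = x (m+1)` on `A^ℤ`, as a homeomorphism. -/
def shiftHomeo (A : Type*) [TopologicalSpace A] : (ℤ → A) ≃ₜ (ℤ → A) where
  toFun x := fun m => x (m + 1)
  invFun x := fun m => x (m - 1)
  left_inv x := funext fun m => by simp
  right_inv x := funext fun m => by simp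
  continuous_toFun := continuous_pi fun m => continuous_apply (m + 1)
  continuous_invFun := continuous_pi fun m => continuous_apply (m - 1)

/-- `Aut(A^ℤ)`: the group of homeomorphisms of `A^ℤ` commuting with the shift. -/
def ShiftAut (A : Type*) [TopologicalSpace A] : Subgroup ((ℤ → A) ≃ₜ (ℤ → A)) :=
  Subgroup.centralizer {shiftHomeo A}

/-!
The idea is that a nontrivial normal subgroup of a group acting extremely proximally is not
amenable. Fix a letter `o`, the blank, and consider the set `T` of configurations, not constant,
that are blank far to the left. An automorphism fixing the constant configuration `o` preserves
`T`.

Let `n ∈ N` be no power of the shift. After passing to a commutator, `n` fixes the constant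
configuration `o`. Let `y ∈ T` begin with `a a`, `a ≠ o`, and have a dense shift orbit. As `n y`
is not a translate of `y`, the element `n` moves a small cylinder `U` around `y`, taken modulo
translations, off itself. If `ν` is an `N`-invariant finitely additive measure with `ν T > 0`,
each automorphic image of `U` in `T` is moved off itself by a conjugate of `n`, hence has measure
at most `ν T / 2`.

Let `V ⊆ T` consist of the configurations whose second letter, counting from the first nonblank
one, is not `o`. A marker involution exchanges a word with a block of blanks in front of certain
nonblank letters. Since `y` has second letter `a`, such an involution can write the beginning of
`y` in front of every configuration in `T \ V`, thus mapping `T \ V` into `U`. Therefore every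
image of `V` in `T` has measure at least `ν T / 2`. But the markers `a o a`, `a o o a` and
`a o o o a` map `V` to three disjoint sets, so `ν T = 0`.
-/

section InvariantContents

open MeasureTheory Set Function
open scoped NNReal Pointwise

lemma isSetRing_univ (X : Type*) : IsSetRing (univ : Set (Set X)) :=
  ⟨trivial, fun _ _ _ _ => trivial, fun _ _ _ _ => trivial⟩

variable {G X : Type*} [Group G] [MulAction G X]

theorem IsAmenable.exists_invariant_addContent (hG : IsAmenable G) (x : X) :
    ∃ ν : AddContent ℝ≥0 (univ : Set (Set X)),
      (∀ (g : G) (E : Set X), ν (g • E) = ν E) ∧ ν (MulAction.orbit G x) = 1 := by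
  obtain ⟨m, hadd, -, hpos, hone, hinv⟩ := hG
  let ind (E : Set X) (g : G) : ℝ := E.indicator 1 (g • x)
  have ind_nonneg (E : Set X) (g : G) : 0 ≤ ind E g := indicator_nonneg (by simp) _
  have ind_bdd (E : Set X) : ∃ C, ∀ g, |ind E g| ≤ C :=
    ⟨1, fun g => by by_cases h : g • x ∈ E <;> simp [ind, h]⟩
  have ind_union {E F : Set X} (h : Disjoint E F) : ind (E ∪ F) = ind E + ind F :=
    funext fun g => congrFun (indicator_union_of_disjoint h 1) (g • x)
  have ind_smul (g : G) (E : Set X) : ind (g • E) = fun h => ind E (g⁻¹ * h) :=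
    funext fun h => by
      have hmem : h • x ∈ g • E ↔ (g⁻¹ * h) • x ∈ E := by
        rw [mem_smul_set_iff_inv_smul_mem, mul_smul]
      by_cases hx : h • x ∈ g • E <;> simp [ind, hx, ← hmem]
  let μ (E : Set X) : ℝ≥0 := ⟨m (ind E), hpos _ (ind_bdd E) (ind_nonneg E)⟩
  have μ_union {E F : Set X} (h : Disjoint E F) : μ (E ∪ F) = μ E + μ F :=
    NNReal.eq <| (congrArg m (ind_union h)).trans (hadd _ _ (ind_bdd E) (ind_bdd F))
  have μ_empty : μ ∅ = 0 := by simpa using μ_union (disjoint_bot_left (a := (∅ : Set X)))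
  refine ⟨(isSetRing_univ X).addContent_of_union μ μ_empty fun _ _ => μ_union, fun g E => ?_, ?_⟩
  · exact NNReal.eq ((congrArg m (ind_smul g E)).trans (hinv g⁻¹ _ (ind_bdd E)))
  · have ind_orbit : ind (MulAction.orbit G x) = fun _ => 1 :=
      funext fun g => indicator_of_mem (MulAction.mem_orbit x g) 1
    exact NNReal.eq ((congrArg m ind_orbit).trans hone)

theorem IsAmenable.exists_invariant_addContent_pos (hG : IsAmenable G) {T : Set X}
    (hT : T.Nonempty) (hfin : (MulAction.orbit G T).Finite) :
    ∃ ν : AddContent ℝ≥0 (univ : Set (Set X)), (∀ (g : G) (E : Set X), ν (g • E) = ν E) ∧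
      0 < ν T := by
  obtain ⟨x, hx⟩ := hT
  obtain ⟨ν, hinv, hone⟩ := hG.exists_invariant_addContent x
  refine ⟨ν, hinv, pos_of_ne_zero fun h0 => ?_⟩
  have hcover : MulAction.orbit G x ⊆ ⋃₀ (hfin.toFinset : Set (Set X)) := by
    rintro _ ⟨g, rfl⟩
    exact mem_sUnion_of_mem (smul_mem_smul_set hx) (by simp)
  have hzero : ∑ E ∈ hfin.toFinset, ν E = 0 := Finset.sum_eq_zero fun E hE => by
    obtain ⟨g, rfl⟩ := hfin.mem_toFinset.1 hE
    exact (hinv g T).trans h0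
  have hle := addContent_le_sum_of_subset_sUnion (m := ν) (isSetRing_univ X).isSetSemiring
    (subset_univ _) trivial hcover
  rw [hone, hzero] at hle
  exact absurd hle (by simp)

variable {N : Subgroup G} [N.Normal] {ν : AddContent ℝ≥0 (univ : Set (Set X))} {T U V : Set X}

/- The conjugate `k * n * k⁻¹`, which lies in `N`, moves `k • U` off itself inside `T`. -/
lemma two_mul_addContent_smul_le (hν : ∀ g ∈ N, ∀ E : Set X, ν (g • E) = ν E) {n k : G}
    (hn : n ∈ N) (hnT : n • T = T) (hkT : k • T = T) (hUT : U ⊆ T) (hnU : Disjoint (n • U) U) :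
    2 * ν (k • U) ≤ ν T := by
  have hconj : (k * n * k⁻¹) • k • U = k • n • U := by simp only [smul_smul, inv_mul_cancel_right]
  have hmass : ν (k • n • U) = ν (k • U) := by
    rw [← hconj, hν _ (‹N.Normal›.conj_mem n hn k)]
  have hsub : k • n • U ∪ k • U ⊆ T := by
    rw [← smul_set_union]
    conv_rhs => rw [← hkT]
    refine smul_set_mono (union_subset ?_ hUT)
    conv_rhs => rw [← hnT]
    exact smul_set_mono hUT
  calc 2 * ν (k • U) = ν (k • n • U) + ν (k • U) := by rw [hmass, two_mul]
    _ = ν (k • n • U ∪ k • U) :=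
      (addContent_union (isSetRing_univ X) trivial trivial (disjoint_smul_set.2 hnU)).symm
    _ ≤ ν T := addContent_mono (isSetRing_univ X).isSetSemiring trivial trivial hsub

lemma addContent_le_two_mul_smul (hν : ∀ g ∈ N, ∀ E : Set X, ν (g • E) = ν E) {n f h : G}
    (hn : n ∈ N) (hnT : n • T = T) (hfT : f • T = T) (hhT : h • T = T) (hUT : U ⊆ T)
    (hnU : Disjoint (n • U) U) (hf : f • (T \ V) ⊆ U) :
    ν T ≤ 2 * ν (h • V) := by
  have hkT : (h * f⁻¹) • T = T := by rw [mul_smul, inv_smul_eq_iff.2 hfT.symm, hhT]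
  have hcover : T ⊆ h • V ∪ (h * f⁻¹) • U := by
    rw [mul_smul, ← smul_set_union]
    conv_lhs => rw [← hhT]
    exact smul_set_mono (sdiff_subset_iff.1 (smul_set_subset_iff_subset_inv_smul_set.1 hf))
  have hle : ν T ≤ ν (h • V) + ν ((h * f⁻¹) • U) :=
    (addContent_mono (isSetRing_univ X).isSetSemiring trivial trivial hcover).trans
      (addContent_union_le (isSetRing_univ X) trivial trivial)
  have hhalf := two_mul_addContent_smul_le hν hn hnT hkT hUT hnU
  rw [← NNReal.coe_le_coe] at hle hhalf ⊢
  push_cast at hle hhalf ⊢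
  linarith

theorem addContent_eq_zero_of_disjoint_smul (hν : ∀ g ∈ N, ∀ E : Set X, ν (g • E) = ν E)
    {n f : G} (hn : n ∈ N) (hnT : n • T = T) (hfT : f • T = T) (hUT : U ⊆ T)
    (hnU : Disjoint (n • U) U) (hVT : V ⊆ T) (hf : f • (T \ V) ⊆ U)
    {ι : Type*} [Fintype ι] (hι : 2 < Fintype.card ι) {h : ι → G} (hhT : ∀ i, h i • T = T)
    (hhV : Pairwise (Disjoint on fun i => h i • V)) :
    ν T = 0 := by
  have hunion : ⋃ i, h i • V ⊆ T := iUnion_subset fun i => (smul_set_mono hVT).trans (hhT i).le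
  have hle : Fintype.card ι * ν T ≤ 2 * ν T :=
    calc Fintype.card ι * ν T = ∑ _i : ι, ν T := by simp
      _ ≤ ∑ i, 2 * ν (h i • V) :=
        Finset.sum_le_sum fun i _ => addContent_le_two_mul_smul hν hn hnT hfT (hhT i) hUT hnU hf
      _ = 2 * ν (⋃ i, h i • V) := by
        rw [← Finset.mul_sum, addContent_iUnion (m := ν) (fun _ => mem_univ _) hhV (mem_univ _)]
      _ ≤ 2 * ν T := by
        gcongr
        exact addContent_mono (isSetRing_univ X).isSetSemiring trivial trivial hunion
  by_contra h0
  exact absurd (le_of_mul_le_mul_right hle (pos_of_ne_zero h0)) (by exact_mod_cast hι.not_ge)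

end InvariantContents

/-- The tautological action of the self-homeomorphisms, providing the notation `g • x`, `g • E` for
automorphisms `g`, configurations `x` and sets `E` of configurations. -/
instance homeoMulAction (X : Type*) [TopologicalSpace X] : MulAction (X ≃ₜ X) X where
  smul f x := f x
  one_smul _ := rfl
  mul_smul _ _ _ := rfl

section DependsOn

open Set Function
open scoped Topology

variable {ι : Type*} {X : ι → Type*} [∀ i, TopologicalSpace (X i)] {β : Type*}
  [TopologicalSpace β]

lemma exists_finset_dependsOn [∀ i, CompactSpace (X i)] [DiscreteTopology β]
    {f : (∀ i, X i) → β} (hf : Continuous f) : ∃ s : Finset ι, DependsOn f s := by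
  classical
  have hbox (x : ∀ i, X i) : ∃ (I : Finset ι) (u : ∀ i, Set (X i)),
      (∀ i ∈ I, IsOpen (u i) ∧ x i ∈ u i) ∧ (I : Set ι).pi u ⊆ f ⁻¹' {f x} :=
    isOpen_pi_iff.1 ((isOpen_discrete {f x}).preimage hf) x rfl
  choose I u hu hIu using hbox
  obtain ⟨t, ht⟩ := CompactSpace.elim_nhds_subcover (fun x => (I x : Set ι).pi (u x)) fun x =>
    set_pi_mem_nhds (I x).finite_toSet fun i hi => (hu x i hi).1.mem_nhds (hu x i hi).2
  refine ⟨t.biUnion I, fun x y hxy => ?_⟩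
  obtain ⟨z, hzt, hxz⟩ := mem_iUnion₂.1 (ht.ge (mem_univ x))
  have hyz : y ∈ (I z : Set ι).pi (u z) := fun i hi =>
    hxy i (by simpa using ⟨z, hzt, hi⟩) ▸ hxz i hi
  exact (hIu z hxz).trans (hIu z hyz).symm

lemma mem_closure_of_forall_finset {S : Set (∀ i, X i)} {x : ∀ i, X i}
    (h : ∀ I : Finset ι, ∃ y ∈ S, ∀ i ∈ I, y i = x i) : x ∈ closure S := by
  refine mem_closure_iff.2 fun O hO hxO => ?_
  obtain ⟨I, u, hu, hIu⟩ := isOpen_pi_iff.1 hO x hxO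
  obtain ⟨y, hyS, hy⟩ := h I
  exact ⟨y, hIu fun i hi => hy i hi ▸ (hu i hi).2, hyS⟩

variable [∀ i, DiscreteTopology (X i)]

lemma continuous_of_dependsOn {f : (∀ i, X i) → β} {s : Set ι} (hs : s.Finite)
    (hf : DependsOn f s) : Continuous f :=
  continuous_iff_continuousAt.2 fun x =>
    have hbox : s.pi (fun i => {x i}) ∈ 𝓝 x := set_pi_mem_nhds hs fun _ _ => mem_nhds_discrete.2 rfl
    continuousAt_const.congr <| Filter.mem_of_superset hbox fun _ hy =>
      hf fun i hi => (hy i hi).symm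

end DependsOn

namespace FullShift

open Set Function
open scoped Pointwise

section Translate

variable {A : Type*}

/-- The configuration `x` translated by `k` places to the left, that is, `σ ^ k x`. -/
def translate (k : ℤ) (x : ℤ → A) : ℤ → A := fun m => x (m + k)

lemma translate_translate (j k : ℤ) (x : ℤ → A) :
    translate j (translate k x) = translate (j + k) x :=
  funext fun m => congrArg x (add_assoc m j k)

variable [TopologicalSpace A]

lemma shiftHomeo_zpow_smul (k : ℤ) (x : ℤ → A) : (shiftHomeo A ^ k) • x = translate k x := by
  induction k with
  | zero => ext m; simp [translate]
  | succ k ih =>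
    rw [add_comm, zpow_one_add, mul_smul, ih]
    exact translate_translate 1 k x
  | pred k ih =>
    rw [sub_eq_neg_add, zpow_add, zpow_neg_one, mul_smul, ih]
    exact translate_translate (-1) (-k) x

lemma smul_translate (g : ShiftAut A) (k : ℤ) (x : ℤ → A) :
    g • translate k x = translate k (g • x) := by
  have hcomm : Commute (shiftHomeo A) g.1 := (Subgroup.mem_centralizer_singleton_iff.1 g.2).symm
  simp only [← shiftHomeo_zpow_smul, Subgroup.smul_def, smul_smul, (hcomm.zpow_left k).eq]

lemma smul_const (g : ShiftAut A) (a : A) : ∃ b, g • const ℤ a = const ℤ b := by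
  refine ⟨(g • const ℤ a) 0, funext fun m => ?_⟩
  have h : translate m (g • const ℤ a) = g • const ℤ a := (smul_translate g m (const ℤ a)).symm
  simpa [translate] using congrFun h 0

/-- The Curtis–Hedlund–Lyndon theorem. -/
lemma exists_dependsOn_smul_Icc [Finite A] [DiscreteTopology A] (g : ShiftAut A) :
    ∃ r : ℕ, ∀ m : ℤ, DependsOn (fun x : ℤ → A => (g • x) m) (Icc (m - r) (m + r)) := by
  obtain ⟨s, hs⟩ := exists_finset_dependsOn
    (f := fun x : ℤ → A => (g • x) 0) ((continuous_apply 0).comp g.1.continuous)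
  refine ⟨s.sup Int.natAbs, fun m x y hxy => ?_⟩
  have hloc : (g • translate m x) 0 = (g • translate m y) 0 := hs fun i hi => by
    have := Finset.le_sup (f := Int.natAbs) hi
    exact hxy _ ⟨by omega, by omega⟩
  simpa [smul_translate, translate] using hloc

end Translate

section Lead

variable {A : Type*} {o : A} {u v w x : ℤ → A} {p q j k ℓ m : ℤ}

/-- The position `p` of the leftmost letter of `x` different from `o`, everything further to the
left being `o`. -/
def IsLead (o : A) (x : ℤ → A) (p : ℤ) : Prop := x p ≠ o ∧ ∀ i < p, x i = o

/-- The configurations, other than the constant one, that are equal to `o` far to the left. -/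
def leftTail (o : A) : Set (ℤ → A) := {x | ∃ p, IsLead o x p}

/-- The configurations some translate of which begins like `w`: it agrees with `w` on all positions
less than `ℓ`. -/
def cylinder (w : ℤ → A) (ℓ : ℤ) : Set (ℤ → A) := {x | ∃ p, EqOn (translate p x) w (Iio ℓ)}

/-- The configurations in `leftTail o` whose second letter, counting from the first letter different
from `o`, is not `b`. -/
def secondNe (o b : A) : Set (ℤ → A) := {x | ∃ p, IsLead o x p ∧ x (p + 1) ≠ b}

lemma IsLead.unique (hp : IsLead o x p) (hq : IsLead o x q) : p = q :=
  le_antisymm (not_lt.1 fun h => hq.1 (hp.2 q h)) (not_lt.1 fun h => hp.1 (hq.2 p h))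

lemma IsLead.of_eqOn (hw : IsLead o w p) (hp : p < ℓ) (h : EqOn (translate k x) w (Iio ℓ)) :
    IsLead o x (p + k) := by
  refine ⟨(h hp).trans_ne hw.1, fun i hi => ?_⟩
  simpa [translate, hw.2 (i - k) (by omega)] using h (show i - k < ℓ by omega)

lemma mem_leftTail_of_ne_const (hx : x ≠ const ℤ o) (hp : ∀ i < p, x i = o) : x ∈ leftTail o := by
  obtain ⟨q, hq, hmin⟩ := Int.exists_least_of_bdd (P := fun i => x i ≠ o)
    ⟨p, fun i hi => not_lt.1 fun h => hi (hp i h)⟩ (Function.ne_iff.1 hx)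
  exact ⟨q, hq, fun i hi => not_not.1 fun h => hi.not_ge (hmin i h)⟩

lemma secondNe_subset_leftTail (o b : A) : secondNe o b ⊆ leftTail o := fun _ ⟨p, hp, _⟩ => ⟨p, hp⟩

lemma leftTail_sdiff_secondNe_subset {b c : A} (h : b ≠ c) :
    leftTail o \ secondNe o b ⊆ secondNe o c := fun _ ⟨⟨p, hp⟩, hx⟩ =>
  ⟨p, hp, fun hc => hx ⟨p, hp, hc.trans_ne h.symm⟩⟩

lemma cylinder_subset_leftTail (hw : IsLead o w p) (hp : p < ℓ) : cylinder w ℓ ⊆ leftTail o :=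
  fun _ ⟨_, h⟩ => ⟨_, hw.of_eqOn hp h⟩

lemma disjoint_cylinder (hu : IsLead o u p) (hv : IsLead o v q) (hj : 0 ≤ j) (hℓ : p + j < ℓ)
    (hm : q + j < m) (hne : u (p + j) ≠ v (q + j)) : Disjoint (cylinder u ℓ) (cylinder v m) := by
  refine disjoint_left.2 fun x ⟨k, hk⟩ ⟨l, hl⟩ => hne ?_
  have hpos : p + k = q + l := (hu.of_eqOn (by omega) hk).unique (hv.of_eqOn (by omega) hl)
  calc u (p + j) = x (p + j + k) := (hk hℓ).symm
    _ = x (q + j + l) := congrArg x (by omega)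
    _ = v (q + j) := hl hm

variable [TopologicalSpace A] [DiscreteTopology A] [Finite A]

lemma exists_smul_cylinder_subset (g : ShiftAut A) :
    ∃ r : ℕ, ∀ (w : ℤ → A) (ℓ : ℤ), g • cylinder w ℓ ⊆ cylinder (g • w) (ℓ - r) := by
  obtain ⟨r, hr⟩ := exists_dependsOn_smul_Icc g
  refine ⟨r, ?_⟩
  rintro w ℓ _ ⟨x, ⟨p, hp⟩, rfl⟩
  refine ⟨p, fun m hm => ?_⟩
  rw [← smul_translate]
  exact hr m fun i hi => hp (by grind)

lemma smul_leftTail_subset {a b : A} {g : ShiftAut A} (hg : g • const ℤ a = const ℤ b) :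
    g • leftTail a ⊆ leftTail b := by
  obtain ⟨r, hr⟩ := exists_dependsOn_smul_Icc g
  rintro _ ⟨x, ⟨p, hp⟩, rfl⟩
  refine mem_leftTail_of_ne_const (p := p - r) (fun h => ?_) fun m hm => ?_
  · exact hp.1 (congrFun ((smul_left_cancel_iff g).1 (h.trans hg.symm)) p)
  · have hloc := @hr m x (const ℤ a) fun i hi => hp.2 i (by grind)
    exact hloc.trans (congrFun hg m)

lemma smul_leftTail {a b : A} {g : ShiftAut A} (hg : g • const ℤ a = const ℤ b) :
    g • leftTail a = leftTail b :=
  (smul_leftTail_subset hg).antisymm <| subset_smul_set_iff.2 <|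
    smul_leftTail_subset (inv_smul_eq_iff.2 hg.symm)

lemma finite_orbit_leftTail (N : Subgroup (ShiftAut A)) (o : A) :
    (MulAction.orbit N (leftTail o)).Finite := by
  refine (finite_range leftTail).subset ?_
  rintro _ ⟨g, rfl⟩
  obtain ⟨b, hb⟩ := smul_const (g : ShiftAut A) o
  exact ⟨b, (smul_leftTail hb).symm⟩

end Lead

section Transitive

variable {A : Type*} [TopologicalSpace A]

lemma exists_denseRange_translate [TopologicalSpace.SeparableSpace A] (z : ℤ → A) (p : ℤ) :
    ∃ y : ℤ → A, (∀ i < p, y i = z i) ∧ DenseRange fun k => translate k y := by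
  have : Nonempty (ℤ → A) := ⟨z⟩
  obtain ⟨d, hd⟩ := TopologicalSpace.exists_dense_seq (ℤ → A)
  -- The window `[p + s ^ 2, p + (s + 1) ^ 2)` shows the centre of `d k`, `k` being the second
  -- component of `s` under the pairing function, so that each `k` occurs for arbitrarily large `s`.
  let y (m : ℤ) : A :=
    if m < p then z m
    else d (m - p).toNat.sqrt.unpair.2 (m - p - (m - p).toNat.sqrt ^ 2 - (m - p).toNat.sqrt)
  refine ⟨y, fun i hi => if_pos hi, ?_⟩
  suffices hsub : range d ⊆ closure (range fun k => translate k y) from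
    dense_closure.1 (hd.mono hsub)
  rintro _ ⟨k, rfl⟩
  refine mem_closure_of_forall_finset fun I => ?_
  set s : ℕ := Nat.pair (I.sup Int.natAbs) k with hs
  refine ⟨_, ⟨p + s ^ 2 + s, rfl⟩, fun i hi => ?_⟩
  have hi : i.natAbs ≤ s := (Finset.le_sup hi).trans (Nat.left_le_pair _ _)
  obtain ⟨e, he⟩ := Int.eq_ofNat_of_zero_le (show 0 ≤ i + s by omega)
  have hoff : i + (p + s ^ 2 + s) - p = (s * s + e : ℕ) := by push_cast; linear_combination he
  have hsqrt : (s * s + e).sqrt = s := Nat.sqrt_add_eq s (by omega)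
  have hge : ¬ i + (p + s ^ 2 + s) < p := not_lt.2 (sub_nonneg.1 (hoff ▸ Int.natCast_nonneg _))
  have hk : s.unpair.2 = k := by rw [hs, Nat.unpair_pair]
  simp only [translate, y, if_neg hge, hoff, Int.toNat_natCast, hsqrt, hk]
  congr 1
  push_cast
  linear_combination -he

lemma mem_zpowers_of_smul_eq_translate [T2Space A] {y : ℤ → A}
    (hy : DenseRange fun k => translate k y) {n : ShiftAut A} {k : ℤ}
    (h : n • y = translate k y) :
    (n : (ℤ → A) ≃ₜ (ℤ → A)) ∈ Subgroup.zpowers (shiftHomeo A) := by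
  refine ⟨k, Homeomorph.ext fun x => congrFun (hy.equalizer (shiftHomeo A ^ k).continuous
    n.1.continuous (funext fun j => ?_)) x⟩
  calc (shiftHomeo A ^ k) • translate j y = translate (k + j) y := by
        rw [shiftHomeo_zpow_smul, translate_translate]
    _ = n • translate j y := by rw [smul_translate, h, translate_translate, add_comm]

variable [DiscreteTopology A] [Finite A]

lemma exists_disjoint_smul_cylinder {o : A} {y : ℤ → A} (hy₀ : IsLead o y 0)
    (hy : DenseRange fun k => translate k y) {n : ShiftAut A} (hno : n • const ℤ o = const ℤ o)
    (hn : (n : (ℤ → A) ≃ₜ (ℤ → A)) ∉ Subgroup.zpowers (shiftHomeo A)) :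
    ∀ᶠ ℓ in Filter.atTop, Disjoint (n • cylinder y ℓ) (cylinder y ℓ) := by
  obtain ⟨r, hr⟩ := exists_smul_cylinder_subset n
  obtain ⟨p, hp⟩ : n • y ∈ leftTail o :=
    (smul_leftTail hno).le (smul_mem_smul_set ⟨0, hy₀⟩)
  obtain ⟨j, hj, hne⟩ : ∃ j, 0 ≤ j ∧ (n • y) (p + j) ≠ y j := by
    by_contra! heq
    refine hn (mem_zpowers_of_smul_eq_translate hy (k := -p) (funext fun m => ?_))
    rcases lt_or_ge m p with hm | hm
    · exact (hp.2 m hm).trans (hy₀.2 _ (by omega)).symm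
    · simpa [translate, sub_eq_add_neg] using heq (m - p) (by omega)
  filter_upwards [Filter.eventually_gt_atTop (p + j + r), Filter.eventually_gt_atTop j] with ℓ h₁ h₂
  exact (disjoint_cylinder hp hy₀ hj (by omega) (by omega) (by rwa [zero_add])).mono_left (hr y ℓ)

end Transitive

section Marker

variable {A : Type*} {o : A} {x : ℤ → A} {i q q' : ℤ}

/-- The word `word 0 ⋯ word (length - 1)`, starting with a letter different from `o`. It is extended
to a configuration that vanishes (is equal to `o`) to the left; the letters at positions
`≥ length` are irrelevant. -/
structure Marker (o : A) where
  word : ℤ → A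
  length : ℤ
  isLead : IsLead o word 0
  two_le_length : 2 ≤ length

namespace Marker

variable (M : Marker o)

/-- The marker can be written or erased in `x` in front of `q`: the letter at `q` is not `o`, the
next one is not the second letter of the marker, and `q` is preceded either by `2 * M.length`
letters `o`, or by `M.length` letters `o` followed by the marker. -/
def IsActive (x : ℤ → A) (q : ℤ) : Prop :=
  x q ≠ o ∧ x (q + 1) ≠ M.word 1 ∧
    ((∀ i ∈ Ico (q - 2 * M.length) q, x i = o) ∨
      ∀ i ∈ Ico (q - 2 * M.length) q, x i = M.word (i - q + M.length))

open Classical in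
/-- The map exchanging the word `o ⋯ o` and the marker in front of every active position. -/
noncomputable def flip (x : ℤ → A) (i : ℤ) : A :=
  if h : ∃ q, i ∈ Ico (q - M.length) q ∧ M.IsActive x q
  then Equiv.swap o (M.word (i - h.choose + M.length)) (x i) else x i

variable {M}

lemma IsActive.eq_blank (hq : M.IsActive x q) (hi : i ∈ Ico (q - 2 * M.length) (q - M.length)) :
    x i = o := by
  obtain ⟨-, -, h | h⟩ := hq
  · exact h i (by grind [M.two_le_length])
  · exact (h i (by grind [M.two_le_length])).trans (M.isLead.2 _ (by grind))

/- Otherwise `q` would belong to a marker ending in front of `q'`. It is not the beginning of that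
marker, because of the letter at `q + 1`; hence the beginning lies in the window in front of `q`, so
that there is a marker in front of `q` as well, which begins among the blanks preceding the one in
front of `q'`. -/
lemma IsActive.add_lt_of_lt (hq : M.IsActive x q) (hq' : M.IsActive x q') (h : q < q') :
    q + 2 * M.length < q' := by
  have hℓ := M.two_le_length
  by_contra! hle
  have hmem : q ∈ Ico (q' - 2 * M.length) q' := ⟨by omega, h⟩
  have hq'w : ∀ i ∈ Ico (q' - 2 * M.length) q', x i = M.word (i - q' + M.length) :=
    hq'.2.2.resolve_left fun h0 => hq.1 (h0 q hmem)
  have hge : q' - M.length ≤ q := not_lt.1 fun hlt => hq.1 (hq'.eq_blank ⟨by omega, hlt⟩)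
  have hstart : x (q' - M.length) ≠ o := by
    rw [hq'w _ ⟨by omega, by omega⟩, show q' - M.length - q' + M.length = 0 by ring]
    exact M.isLead.1
  rcases hge.eq_or_lt with rfl | hlt
  · refine hq.2.1 ((hq'w _ ⟨by omega, by omega⟩).trans (congrArg M.word ?_))
    ring
  · have hqw := hq.2.2.resolve_left fun h0 => hstart (h0 _ ⟨by omega, hlt⟩)
    refine M.isLead.1 ?_
    calc M.word 0 = x (q - M.length) := by
          rw [hqw _ ⟨by omega, by omega⟩, show q - M.length - q + M.length = 0 by ring]
      _ = o := hq'.eq_blank ⟨by omega, by omega⟩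

lemma IsActive.eq_of_le (hq : M.IsActive x q) (hq' : M.IsActive x q')
    (h : q ≤ q' + 2 * M.length) (h' : q' ≤ q + 2 * M.length) : q = q' := by
  rcases lt_trichotomy q q' with hlt | heq | hlt
  · exact absurd (hq.add_lt_of_lt hq' hlt) h'.not_gt
  · exact heq
  · exact absurd (hq'.add_lt_of_lt hq hlt) h.not_gt

lemma IsActive.congr {y : ℤ → A} (hq : M.IsActive x q)
    (h : ∀ i ∈ Icc (q - 2 * M.length) (q + 1), x i = y i) : M.IsActive y q := by
  have hℓ := M.two_le_length
  have hwin {i : ℤ} (hi : i ∈ Ico (q - 2 * M.length) q) : x i = y i := h i ⟨hi.1, by grind⟩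
  refine ⟨h q ⟨by omega, by omega⟩ ▸ hq.1, h (q + 1) ⟨by omega, by omega⟩ ▸ hq.2.1, ?_⟩
  exact hq.2.2.imp (fun h0 i hi => (hwin hi).symm.trans (h0 i hi))
    fun hw i hi => (hwin hi).symm.trans (hw i hi)

lemma isActive_translate {k : ℤ} : M.IsActive (translate k x) q ↔ M.IsActive x (q + k) := by
  have hwin (P : ℤ → A → Prop) : (∀ i ∈ Ico (q - 2 * M.length) q, P (i - q) (x (i + k))) ↔
      ∀ i ∈ Ico (q + k - 2 * M.length) (q + k), P (i - (q + k)) (x i) :=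
    ⟨fun h i hi => by simpa [sub_sub, add_comm k] using h (i - k) (by grind),
      fun h i hi => by simpa using h (i + k) (by grind)⟩
  simp only [IsActive, translate, add_right_comm q 1 k]
  rw [hwin fun _ c => c = o, hwin fun j c => c = M.word (j + M.length)]

open Classical in
lemma flip_of_isActive (hq : M.IsActive x q) (hi : i ∈ Ico (q - M.length) q) :
    M.flip x i = Equiv.swap o (M.word (i - q + M.length)) (x i) := by
  have h : ∃ q, i ∈ Ico (q - M.length) q ∧ M.IsActive x q := ⟨q, hi, hq⟩
  have hchoose : h.choose = q :=
    h.choose_spec.2.eq_of_le hq (by grind [h.choose_spec.1]) (by grind [h.choose_spec.1])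
  rw [flip, dif_pos h, hchoose]

lemma flip_of_forall_not (h : ∀ q, i ∈ Ico (q - M.length) q → ¬ M.IsActive x q) :
    M.flip x i = x i :=
  dif_neg fun ⟨q, hi, hq⟩ => h q hi hq

lemma IsActive.flip (hq : M.IsActive x q) : M.IsActive (M.flip x) q := by
  have hℓ := M.two_le_length
  have hfix {i : ℤ} (hi : i ∈ Icc (q - 2 * M.length) (q + 1)) (hi' : i ∉ Ico (q - M.length) q) :
      M.flip x i = x i := flip_of_forall_not fun q' hiq' hq' =>
    hi' (hq.eq_of_le hq' (by grind) (by grind) ▸ hiq')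
  refine ⟨?_, ?_, ?_⟩
  · rw [hfix ⟨by omega, by omega⟩ (by simp)]
    exact hq.1
  · rw [hfix ⟨by omega, by omega⟩ (by simp)]
    exact hq.2.1
  · refine hq.2.2.symm.imp (fun hw i hi => ?_) fun h0 i hi => ?_
    · by_cases hi' : i ∈ Ico (q - M.length) q
      · simp only [flip_of_isActive hq hi', hw i hi, Equiv.swap_apply_right]
      · rw [hfix ⟨hi.1, by grind⟩ hi', hq.eq_blank ⟨hi.1, by grind⟩]
    · by_cases hi' : i ∈ Ico (q - M.length) q
      · simp only [flip_of_isActive hq hi', h0 i hi, Equiv.swap_apply_left]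
      · rw [hfix ⟨hi.1, by grind⟩ hi', h0 i hi, M.isLead.2 _ (by grind)]

lemma isActive_flip_iff : M.IsActive (M.flip x) q ↔ M.IsActive x q := by
  refine ⟨fun hq => by_contra fun hnot => ?_, IsActive.flip⟩
  refine hnot (hq.congr fun i hi => flip_of_forall_not fun q' hiq' hq' => hnot ?_)
  rwa [hq.eq_of_le hq'.flip (by grind) (by grind [M.two_le_length])]

lemma flip_flip (x : ℤ → A) : M.flip (M.flip x) = x := by
  funext i
  by_cases h : ∃ q, i ∈ Ico (q - M.length) q ∧ M.IsActive x q
  · obtain ⟨q, hi, hq⟩ := h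
    simp only [flip_of_isActive hq.flip hi, flip_of_isActive hq hi, Equiv.swap_apply_self]
  · push Not at h
    rw [flip_of_forall_not fun q hi => isActive_flip_iff.not.2 (h q hi), flip_of_forall_not h]

lemma flip_translate (k : ℤ) (x : ℤ → A) : M.flip (translate k x) = translate k (M.flip x) := by
  funext i
  change _ = M.flip x (i + k)
  by_cases h : ∃ q, i ∈ Ico (q - M.length) q ∧ M.IsActive (translate k x) q
  · obtain ⟨q, hi, hq⟩ := h
    rw [flip_of_isActive hq hi, flip_of_isActive (isActive_translate.1 hq) (by grind),
      add_sub_add_right_eq_sub]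
    rfl
  · push Not at h
    rw [flip_of_forall_not h, flip_of_forall_not fun q hi hq => ?_]
    · rfl
    · exact h (q - k) (by grind) (isActive_translate.2 (by rwa [sub_add_cancel]))

lemma dependsOn_flip (i : ℤ) :
    DependsOn (fun x => M.flip x i) (Icc (i - 2 * M.length) (i + M.length + 1)) := by
  intro x y hxy
  have hi : x i = y i := hxy i (by grind [M.two_le_length])
  have hcongr {q : ℤ} (hiq : i ∈ Ico (q - M.length) q) : M.IsActive x q ↔ M.IsActive y q :=
    ⟨fun hq => hq.congr fun j hj => hxy j (by grind),
      fun hq => hq.congr fun j hj => (hxy j (by grind)).symm⟩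
  by_cases h : ∃ q, i ∈ Ico (q - M.length) q ∧ M.IsActive x q
  · obtain ⟨q, hiq, hq⟩ := h
    simp only [flip_of_isActive hq hiq, flip_of_isActive ((hcongr hiq).1 hq) hiq, hi]
  · push Not at h
    have h' : ∀ q, i ∈ Ico (q - M.length) q → ¬ M.IsActive y q := fun q hiq =>
      (hcongr hiq).not.1 (h q hiq)
    simp only [flip_of_forall_not h, flip_of_forall_not h', hi]

lemma flip_eq_self (h : ∀ q, ∃ i ∈ Ico (q - 2 * M.length) (q - M.length), x i ≠ o) :
    M.flip x = x :=
  funext fun _ => flip_of_forall_not fun q _ hq =>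
    let ⟨_, hi, hne⟩ := h q
    hne (hq.eq_blank hi)

lemma flip_eq_self_of_notMem_Icc {k l : ℤ} (hkl : l - k + 1 < M.length)
    (h : ∀ i ∉ Icc k l, x i ≠ o) : M.flip x = x := by
  have hℓ := M.two_le_length
  refine flip_eq_self fun q => ?_
  by_cases hq : q - 2 * M.length < k
  · exact ⟨q - 2 * M.length, by grind, h _ (by grind)⟩
  · exact ⟨q - M.length - 1, by grind, h _ (by grind)⟩

lemma flip_const (c : A) : M.flip (const ℤ c) = const ℤ c := by
  rcases eq_or_ne c o with rfl | hc
  · exact funext fun _ => flip_of_forall_not fun q _ hq => hq.1 rfl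
  · exact flip_eq_self fun q => ⟨q - 2 * M.length, by grind [M.two_le_length], hc⟩

variable [TopologicalSpace A] [DiscreteTopology A]

lemma continuous_flip : Continuous M.flip :=
  continuous_pi fun i => continuous_of_dependsOn (finite_Icc _ _) (dependsOn_flip i)

variable (M) in
/-- The marker involution `flip` as an automorphism of the full shift. -/
noncomputable def flipAut : ShiftAut A where
  val :=
    { toFun := M.flip
      invFun := M.flip
      left_inv := flip_flip
      right_inv := flip_flip
      continuous_toFun := continuous_flip
      continuous_invFun := continuous_flip }
  property := Subgroup.mem_centralizer_singleton_iff.2 <| Homeomorph.ext (flip_translate 1)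

lemma flipAut_inv : M.flipAut⁻¹ = M.flipAut := rfl

lemma flipAut_smul_const (c : A) : M.flipAut • const ℤ c = const ℤ c := flip_const c

variable (M) in
lemma flipAut_smul_secondNe_subset :
    M.flipAut • secondNe o (M.word 1) ⊆ cylinder M.word M.length := by
  rintro _ ⟨x, ⟨p, hp, hne⟩, rfl⟩
  have hactive : M.IsActive x p := ⟨hp.1, hne, Or.inl fun i hi => hp.2 i hi.2⟩
  refine ⟨p - M.length, fun m hm => ?_⟩
  have hm' : m + (p - M.length) < p := by grind
  change M.flip x (m + (p - M.length)) = M.word m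
  rcases lt_or_ge m 0 with hneg | hpos
  · rw [M.isLead.2 m hneg, flip_of_forall_not, hp.2 _ hm']
    exact fun q hi hq => hq.1 (hp.2 q (by grind))
  · simp only [flip_of_isActive hactive ⟨by omega, hm'⟩, hp.2 _ hm', Equiv.swap_apply_left]
    exact congrArg M.word (by ring)

end Marker

end Marker

section Normal

open Marker
open scoped commutatorElement

variable {A : Type*} {o a : A}

/-- The marker `a ⋯ a` with `ℓ` letters. -/
def Marker.replicate (ha : a ≠ o) {ℓ : ℤ} (hℓ : 2 ≤ ℓ) : Marker o where
  word j := if j < 0 then o else a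
  length := ℓ
  isLead := ⟨ha, fun _ hi => if_pos hi⟩
  two_le_length := hℓ

/-- The marker `a o ⋯ o a` with `i + 1` letters `o` in between. -/
def Marker.gap (ha : a ≠ o) (i : ℕ) : Marker o where
  word j := if j = 0 ∨ j = i + 2 then a else o
  length := i + 3
  isLead := ⟨by simpa using ha, fun j hj => if_neg (by omega)⟩
  two_le_length := by omega

variable [TopologicalSpace A]

lemma exists_smul_eq_translate_of_commutator_mem {n h : ShiftAut A} {x : ℤ → A}
    (hnh : ((⁅n, h⁆ : ShiftAut A) : (ℤ → A) ≃ₜ (ℤ → A)) ∈ Subgroup.zpowers (shiftHomeo A))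
    (hx : h • n • x = n • x) : ∃ k, h • x = translate k x := by
  obtain ⟨k, hk⟩ := hnh
  refine ⟨k, (smul_left_cancel_iff n).1 ?_⟩
  calc n • h • x = ⁅n, h⁆ • n • x := by
        rw [commutatorElement_def, mul_smul _ h⁻¹, inv_smul_eq_iff.2 hx.symm]
        simp only [mul_smul, inv_smul_smul]
    _ = (shiftHomeo A ^ k) • n • x := congrArg (· • n • x) hk.symm
    _ = n • translate k x := by rw [shiftHomeo_zpow_smul, smul_translate]

variable [DiscreteTopology A]

lemma replicate_flipAut_smul_update_ne_translate (ha : a ≠ o) {ℓ : ℤ} (hℓ : 2 ≤ ℓ) (k : ℤ) :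
    (Marker.replicate ha hℓ).flipAut • update (const ℤ o) 0 a ≠
      translate k (update (const ℤ o) 0 a) := by
  intro h
  have hsecond : update (const ℤ o) 0 a ∈ secondNe o ((Marker.replicate ha hℓ).word 1) :=
    ⟨0, ⟨by simpa using ha, fun i hi => by simp [hi.ne]⟩, by simpa [Marker.replicate] using ha.symm⟩
  obtain ⟨p, hp⟩ := flipAut_smul_secondNe_subset _ (smul_mem_smul_set hsecond)
  rw [h, translate_translate] at hp
  have h₀ : update (const ℤ o) 0 a (0 + (p + k)) = a := hp (show 0 < ℓ by omega)
  have h₁ : update (const ℤ o) 0 a (1 + (p + k)) = a := hp (show 1 < ℓ by omega)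
  simp only [update_apply, const_apply, ite_eq_left_iff, ha.symm, imp_false, not_not] at h₀ h₁
  omega

lemma pairwise_disjoint_gap_flipAut_smul (ha : a ≠ o) :
    Pairwise (Disjoint on fun i => (Marker.gap ha i).flipAut • secondNe o o) := by
  refine (pairwise_disjoint_on _).2 fun i j hij => ?_
  have hsub (i : ℕ) : (Marker.gap ha i).flipAut • secondNe o o ⊆
      cylinder (Marker.gap ha i).word (i + 3) := by
    have hsecond : (Marker.gap ha i).word 1 = o := by
      simp only [Marker.gap, ite_eq_right_iff]
      omega
    have hsub := (Marker.gap ha i).flipAut_smul_secondNe_subset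
    rw [hsecond] at hsub
    exact hsub
  refine (disjoint_cylinder (Marker.gap ha i).isLead (Marker.gap ha j).isLead (j := i + 2)
    (by omega) (by omega) (by omega) ?_).mono (hsub i) (hsub j)
  have hi : (Marker.gap ha i).word (0 + (i + 2)) = a := if_pos (by omega)
  have hj : (Marker.gap ha j).word (0 + (i + 2)) = o := if_neg (by omega)
  rwa [hi, hj]

variable [Finite A] {N : Subgroup (ShiftAut A)} [N.Normal] {n : ShiftAut A}

lemma exists_mem_smul_const_eq (ha : a ≠ o) (hnN : n ∈ N)
    (hn : (n : (ℤ → A) ≃ₜ (ℤ → A)) ∉ Subgroup.zpowers (shiftHomeo A)) :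
    ∃ n' ∈ N, n' • const ℤ o = const ℤ o ∧
      (n' : (ℤ → A) ≃ₜ (ℤ → A)) ∉ Subgroup.zpowers (shiftHomeo A) := by
  obtain ⟨b, hb⟩ := smul_const n o
  rcases eq_or_ne b o with rfl | hbo
  · exact ⟨n, hnN, hb, hn⟩
  obtain ⟨r, hr⟩ := exists_dependsOn_smul_Icc n
  let M := Marker.replicate ha (show (2 : ℤ) ≤ 2 * r + 2 by omega)
  let x : ℤ → A := update (const ℤ o) 0 a
  -- The blanks in front of an active position would not fit into `[-r, r]`, off which `n • x` is
  -- equal to `b`. Hence `M.flipAut` fixes `n • x`, whereas it does not act on `x` as a translation.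
  have hfix : M.flipAut • n • x = n • x :=
    flip_eq_self_of_notMem_Icc (k := -r) (l := r) (show (r : ℤ) - -r + 1 < 2 * r + 2 by omega)
      fun i hi => by
        have hloc := @hr i x (const ℤ o) fun j hj => update_of_ne (by grind) _ _
        exact (hloc.trans (congrFun hb i)).trans_ne hbo
  refine ⟨⁅n, M.flipAut⁆, ?_, ?_, fun hcomm => ?_⟩
  · exact Subgroup.commutator_le_left N ⊤
      (Subgroup.commutator_mem_commutator hnN (Subgroup.mem_top _))
  · obtain ⟨c, hc⟩ := smul_const n⁻¹ o
    rw [commutatorElement_def, flipAut_inv, mul_smul, mul_smul, mul_smul, flipAut_smul_const, hc,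
      flipAut_smul_const, ← hc, smul_inv_smul]
  · obtain ⟨k, hk⟩ := exists_smul_eq_translate_of_commutator_mem hcomm hfix
    exact replicate_flipAut_smul_update_ne_translate ha _ k hk

lemma mem_zpowers_of_smul_const_eq (ha : a ≠ o) (hN : IsAmenable N) (hnN : n ∈ N)
    (hno : n • const ℤ o = const ℤ o) :
    (n : (ℤ → A) ≃ₜ (ℤ → A)) ∈ Subgroup.zpowers (shiftHomeo A) := by
  by_contra hn
  obtain ⟨y, hyz, hy⟩ := exists_denseRange_translate (Marker.replicate ha le_rfl).word 2
  have hy₀ : IsLead o y 0 :=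
    ⟨(hyz 0 two_pos).trans_ne ha, fun i hi => (hyz i (by omega)).trans (if_pos hi)⟩
  have hy₁ : y 1 = a := hyz 1 one_lt_two
  obtain ⟨ℓ, hdisj, hℓ⟩ :=
    ((exists_disjoint_smul_cylinder hy₀ hy hno hn).and (Filter.eventually_ge_atTop 2)).exists
  let M : Marker o := ⟨y, ℓ, hy₀, hℓ⟩
  have hM : M.flipAut • (leftTail o \ secondNe o o) ⊆ cylinder y ℓ :=
    (smul_set_mono (leftTail_sdiff_secondNe_subset (hy₁.trans_ne ha).symm)).trans
      M.flipAut_smul_secondNe_subset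
  obtain ⟨ν, hν, hpos⟩ :=
    hN.exists_invariant_addContent_pos (T := leftTail o) ⟨y, 0, hy₀⟩ (finite_orbit_leftTail N o)
  refine hpos.ne' (addContent_eq_zero_of_disjoint_smul (N := N) (fun g hg E => hν ⟨g, hg⟩ E) hnN
    (smul_leftTail hno) (smul_leftTail (flipAut_smul_const o))
    (cylinder_subset_leftTail hy₀ (by omega)) hdisj (secondNe_subset_leftTail o o) hM
    (ι := Fin 3) (by simp) (fun i => smul_leftTail (flipAut_smul_const o))
    ((pairwise_disjoint_gap_flipAut_smul ha).comp_of_injective Fin.val_injective))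

end Normal

end FullShift

/-- Every normal amenable subgroup of `Aut(A^ℤ)` is contained in `Σ(A^ℤ)`,
the subgroup consisting of the powers of the shift `σ`. -/
theorem normal_amenable_le_shifts
    (A : Type*) [Fintype A] [TopologicalSpace A] [DiscreteTopology A]
    (hA : 2 ≤ Fintype.card A)
    (N : Subgroup (ShiftAut A)) (hN : N.Normal) (hNa : IsAmenable N) :
    ∀ g ∈ N, ((g : ShiftAut A) : (ℤ → A) ≃ₜ (ℤ → A)) ∈ Subgroup.zpowers (shiftHomeo A) := by
  intro g hg
  obtain ⟨a, o, ha⟩ := Fintype.one_lt_card_iff.1 hA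
  by_contra hg_shift
  obtain ⟨n, hnN, hno, hn⟩ := FullShift.exists_mem_smul_const_eq ha hg hg_shift
  exact hn (FullShift.mem_zpowers_of_smul_const_eq ha hNa hnN hno)
end

section
/- Let A be a finite alphabet with |A| ≥ 2. The center of Aut(A^ℤ) is equal to Σ(A^ℤ), the subgroup consisting of the powers of the shift σ (Ryan's Theorem). -/
section Ryan

variable {A : Type*}

section ShiftAut

variable [TopologicalSpace A]

lemma shiftHomeo_zpow_apply (n : ℤ) (x : ℤ → A) (i : ℤ) : (shiftHomeo A ^ n) x i = x (i + n) := by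
  induction n generalizing x with
  | zero => simp
  | succ n ih =>
    rw [zpow_add_one]
    exact (ih (shiftHomeo A x)).trans (congrArg x (add_assoc i n 1))
  | pred n ih =>
    rw [zpow_sub_one]
    exact (ih ((shiftHomeo A).symm x)).trans (congrArg x (add_sub_assoc i (-n) 1))

lemma mem_shiftAut_iff {g : (ℤ → A) ≃ₜ (ℤ → A)} :
    g ∈ ShiftAut A ↔ Function.Commute g (shiftHomeo A) := by
  rw [ShiftAut, Subgroup.mem_centralizer_singleton_iff]
  exact ⟨fun h x => DFunLike.congr_fun h x, fun h => Homeomorph.ext h⟩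

lemma shiftHomeo_zpow_mem_shiftAut (n : ℤ) : shiftHomeo A ^ n ∈ ShiftAut A :=
  zpow_mem (mem_shiftAut_iff.2 (Function.Commute.refl _)) n

lemma apply_eq_apply_shiftHomeo_zpow_zero {φ : (ℤ → A) → ℤ → A}
    (hφ : ∀ g ∈ ShiftAut A, Function.Commute φ g) (x : ℤ → A) (i : ℤ) :
    φ x i = φ ((shiftHomeo A ^ i) x) 0 := by
  rw [hφ _ (shiftHomeo_zpow_mem_shiftAut i) x, shiftHomeo_zpow_apply, zero_add]

lemma eventually_forall_apply_eq_of_eqOn_Icc {B : Type*} [TopologicalSpace B]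
    [DiscreteTopology B] {f : (ℤ → A) → B} (hf : Continuous f) (x : ℤ → A) :
    ∀ᶠ r : ℕ in Filter.atTop, ∀ y : ℤ → A, Set.EqOn y x (Set.Icc (-r) r) → f y = f x := by
  obtain ⟨I, U, hU, hIU⟩ := isOpen_pi_iff.1 ((isOpen_discrete {f x}).preimage hf) x rfl
  have hI : ∀ᶠ r : ℕ in Filter.atTop, ∀ i ∈ I, i ∈ Set.Icc (-r : ℤ) r :=
    (Filter.eventually_all_finset I).2 fun i _ => by
      filter_upwards [Filter.eventually_ge_atTop i.natAbs] with r hr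
      exact ⟨by omega, by omega⟩
  filter_upwards [hI] with r hr y hy
  exact hIU fun i hi => hy (hr i hi) ▸ (hU i hi).2

end ShiftAut

section Contexts

/-- A context of `w` of radius `N` at position `i` in `x`: the word of `x` on `[i - N, i + N]`
agrees with the word of `w` on `[-N, N]`, except possibly for the central letter. -/
def IsContext (w : ℤ → A) (N : ℤ) (x : ℤ → A) (i : ℤ) : Prop :=
  Set.EqOn (fun s => x (i + s)) w (Set.Icc (-N) N \ {0})

/-- No context of `w` of radius `N` in any point has its central position in another one, so
that changing the central letter of a context does not affect the other contexts. -/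
def HasIsolatedContexts (w : ℤ → A) (N : ℤ) : Prop :=
  ∀ ⦃x : ℤ → A⦄ ⦃i s : ℤ⦄, s ∈ Set.Icc (-N) N → IsContext w N x i → IsContext w N x (i + s) →
    s = 0

open Classical in
/-- Apply the permutation `π` to the central letter of every context of `w` of radius `N`. -/
noncomputable def permContexts (π : Equiv.Perm A) (w : ℤ → A) (N : ℤ) (x : ℤ → A) : ℤ → A :=
  fun i => if IsContext w N x i then π (x i) else x i

variable {w : ℤ → A} {N : ℤ} {x : ℤ → A} {i : ℤ} {π : Equiv.Perm A}

lemma IsContext.apply_add (h : IsContext w N x i) {s : ℤ} (hs : s ∈ Set.Icc (-N) N)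
    (hs0 : s ≠ 0) : x (i + s) = w s :=
  h ⟨hs, hs0⟩

lemma isContext_self : IsContext w N w 0 := fun s _ => congrArg w (zero_add s)

lemma isContext_shiftHomeo [TopologicalSpace A] :
    IsContext w N (shiftHomeo A x) i ↔ IsContext w N x (i + 1) := by
  have hshift (s : ℤ) : shiftHomeo A x (i + s) = x (i + 1 + s) :=
    congrArg x (add_right_comm i s 1)
  simp only [IsContext, hshift]

lemma permContexts_of_isContext (h : IsContext w N x i) : permContexts π w N x i = π (x i) :=
  if_pos h

lemma permContexts_of_not_isContext (h : ¬ IsContext w N x i) : permContexts π w N x i = x i :=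
  if_neg h

lemma isContext_permContexts_iff (hw : HasIsolatedContexts w N) :
    IsContext w N (permContexts π w N x) i ↔ IsContext w N x i := by
  have preserves {j : ℤ} (h : IsContext w N x j) : IsContext w N (permContexts π w N x) j :=
    fun s hs => (permContexts_of_not_isContext fun h' => hs.2 (hw hs.1 h h')).trans (h hs)
  refine ⟨fun h s hs => ?_, preserves⟩
  have hnot : ¬ IsContext w N x (i + s) := fun h' => hs.2 (hw hs.1 h (preserves h'))
  exact (permContexts_of_not_isContext hnot).symm.trans (h hs)

lemma permContexts_symm_permContexts (hw : HasIsolatedContexts w N) (x : ℤ → A) :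
    permContexts π.symm w N (permContexts π w N x) = x := by
  funext i
  by_cases h : IsContext w N x i
  · rw [permContexts_of_isContext ((isContext_permContexts_iff hw).2 h),
      permContexts_of_isContext h, π.symm_apply_apply]
  · rw [permContexts_of_not_isContext (h ∘ (isContext_permContexts_iff hw).1),
      permContexts_of_not_isContext h]

lemma permContexts_shiftHomeo [TopologicalSpace A] (x : ℤ → A) :
    permContexts π w N (shiftHomeo A x) = shiftHomeo A (permContexts π w N x) := by
  classical
  exact funext fun i => if_congr isContext_shiftHomeo rfl rfl

variable [TopologicalSpace A] [DiscreteTopology A]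

lemma isClopen_setOf_isContext (w : ℤ → A) (N i : ℤ) : IsClopen {x | IsContext w N x i} := by
  have hinter : {x | IsContext w N x i} =
      ⋂ s ∈ Set.Icc (-N) N \ {0}, (fun x : ℤ → A => x (i + s)) ⁻¹' {w s} := by
    ext x
    simp only [IsContext, Set.EqOn, Set.mem_ofPred_eq, Set.mem_iInter, Set.mem_preimage,
      Set.mem_singleton_iff]
  rw [hinter]
  exact (Set.finite_Icc _ _).sdiff.isClopen_biInter fun s _ =>
    (isClopen_discrete {w s}).preimage (continuous_apply (i + s))

lemma continuous_permContexts : Continuous (permContexts π w N) := by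
  classical
  refine continuous_pi fun i => Continuous.if (fun x hx => ?_)
    (continuous_of_discreteTopology.comp (continuous_apply i)) (continuous_apply i)
  rw [(isClopen_setOf_isContext w N i).frontier_eq] at hx
  exact hx.elim

/-- `permContexts π w N` as a homeomorphism, with inverse `permContexts π.symm w N`. -/
noncomputable def permContextsHomeo (π : Equiv.Perm A) (hw : HasIsolatedContexts w N) :
    (ℤ → A) ≃ₜ (ℤ → A) where
  toFun := permContexts π w N
  invFun := permContexts π.symm w N
  left_inv := permContexts_symm_permContexts hw
  right_inv := permContexts_symm_permContexts (π := π.symm) hw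
  continuous_toFun := continuous_permContexts
  continuous_invFun := continuous_permContexts

lemma permContextsHomeo_mem_shiftAut (π : Equiv.Perm A) (hw : HasIsolatedContexts w N) :
    permContextsHomeo π hw ∈ ShiftAut A :=
  mem_shiftAut_iff.2 permContexts_shiftHomeo

lemma exists_isContext_apply [Nontrivial A] {φ : (ℤ → A) → ℤ → A} (hinj : φ.Injective)
    (hφ : ∀ g ∈ ShiftAut A, Function.Commute φ g) (hw : HasIsolatedContexts w N) :
    ∃ m, IsContext w N (φ w) m := by
  classical
  obtain ⟨b, hb⟩ := exists_ne (w 0)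
  let π := Equiv.swap (w 0) b
  have hcomm : φ (permContexts π w N w) = permContexts π w N (φ w) :=
    hφ _ (permContextsHomeo_mem_shiftAut π hw) w
  by_contra! hnone
  have hfix : permContexts π w N (φ w) = φ w :=
    funext fun m => permContexts_of_not_isContext (hnone m)
  have hw0 : permContexts π w N w 0 = w 0 := congrFun (hinj (hcomm.trans hfix)) 0
  rw [permContexts_of_isContext isContext_self, Equiv.swap_apply_left] at hw0
  exact hb hw0

end Contexts

section MarkedPoint

/-- The point `⋯ a a a . a b a u₀ ⋯ uₗ₋₁ b a a a ⋯`, where the letter following the dot is at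
position `0`. The two letters `b` delimit the block carrying the word `u`. -/
def markedPoint (a b : A) (l : ℕ) (u : ℤ → A) (j : ℤ) : A :=
  if j = 1 ∨ j = l + 3 then b else if 3 ≤ j ∧ j < l + 3 then u (j - 3) else a

/-- The point whose word on `[k * (2 * r + 1), (k + 1) * (2 * r + 1))` is the word of `v k` on
`[-r, r]`, for every `k`. -/
def concatWords (r : ℕ) (v : ℤ → ℤ → A) (j : ℤ) : A :=
  v (j / (2 * r + 1)) (j % (2 * r + 1) - r)

variable {a b : A} {l : ℕ} {u : ℤ → A}

lemma markedPoint_one : markedPoint a b l u 1 = b := by simp [markedPoint]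

lemma markedPoint_last : markedPoint a b l u (l + 3) = b := by simp [markedPoint]

lemma markedPoint_two : markedPoint a b l u 2 = a := by
  rw [markedPoint, if_neg (by omega), if_neg (by omega)]

lemma markedPoint_of_notMem_Icc {j : ℤ} (hj : j ∉ Set.Icc (1 : ℤ) (l + 3)) :
    markedPoint a b l u j = a := by
  rw [Set.mem_Icc] at hj
  rw [markedPoint, if_neg (by omega), if_neg (by omega)]

lemma markedPoint_add_three {j : ℤ} (hj : j ∈ Set.Ico (0 : ℤ) l) :
    markedPoint a b l u (j + 3) = u j := by
  rw [Set.mem_Ico] at hj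
  rw [markedPoint, if_neg (by omega), if_pos (by omega), add_sub_cancel_right]

lemma concatWords_apply {r : ℕ} (v : ℤ → ℤ → A) (k : ℤ) {s : ℤ}
    (hs : s ∈ Set.Icc (-r : ℤ) r) : concatWords r v (k * (2 * r + 1) + r + s) = v k s := by
  rw [Set.mem_Icc] at hs
  have hdiv : (k * (2 * r + 1) + r + s) / (2 * r + 1) = k := by
    rw [add_assoc, add_comm, Int.add_mul_ediv_right _ _ (by omega),
      Int.ediv_eq_zero_of_lt (by omega) (by omega), zero_add]
  have hmod : (k * (2 * r + 1) + r + s) % (2 * r + 1) = r + s := by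
    rw [add_assoc, add_comm, Int.add_mul_emod_self_right,
      Int.emod_eq_of_lt (by omega) (by omega)]
  rw [concatWords, hdiv, hmod, add_sub_cancel_left]

lemma eqOn_markedPoint_concatWords (a b : A) (r K : ℕ) (v : ℤ → ℤ → A) {k : ℤ}
    (hk : k ∈ Set.Ico (0 : ℤ) K) :
    Set.EqOn (fun s => markedPoint a b (K * (2 * r + 1)) (concatWords r v)
      (k * (2 * r + 1) + r + 3 + s)) (v k) (Set.Icc (-r) r) := by
  intro s hs
  have hpos : k * (2 * r + 1) + r + s ∈ Set.Ico (0 : ℤ) (K * (2 * r + 1) : ℕ) := by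
    rw [Set.mem_Icc] at hs
    push_cast
    constructor <;> nlinarith [hk.1, Int.add_one_le_iff.2 hk.2]
  beta_reduce
  rw [add_right_comm, markedPoint_add_three hpos, concatWords_apply v k hs]

/-- Two distinct contexts disagree: the letter `b` at offset `1` of the left one meets a letter
`a` of the right one, unless it is at the free center of the right one; in that case the letter
`a` at offset `2` meets the letter `b` at offset `1` of the right one. -/
lemma hasIsolatedContexts_markedPoint (hab : a ≠ b) {N : ℤ} (hN : 2 ≤ N) :
    HasIsolatedContexts (markedPoint a b l u) N := by
  have separated {x : ℤ → A} {i s : ℤ} (hs : s ∈ Set.Icc 1 N)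
      (hi : IsContext (markedPoint a b l u) N x i)
      (his : IsContext (markedPoint a b l u) N x (i + s)) : False := by
    obtain ⟨hs1, hsN⟩ := hs
    rcases hs1.eq_or_lt with rfl | hs1
    · have hleft : x (i + 2) = a := (hi.apply_add (by grind) two_ne_zero).trans markedPoint_two
      have hright : x (i + 1 + 1) = b :=
        (his.apply_add (by grind) one_ne_zero).trans markedPoint_one
      exact hab (hleft.symm.trans ((congrArg x (by ring)).trans hright))
    · have hleft : x (i + 1) = b := (hi.apply_add (by grind) one_ne_zero).trans markedPoint_one
      have hright : x (i + s + (1 - s)) = a :=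
        (his.apply_add (by grind) (by omega)).trans (markedPoint_of_notMem_Icc (by grind))
      exact hab (hright.symm.trans ((congrArg x (by ring)).trans hleft))
  intro x i s hs hi his
  by_contra hs0
  rcases lt_or_gt_of_ne hs0 with hneg | hpos
  · exact separated (s := -s) (by grind) his (by rwa [add_neg_cancel_right])
  · exact separated (by grind) hi his

lemma IsContext.mem_Icc_of_markedPoint (hab : a ≠ b) {R : ℕ} {N m : ℤ} (hN : l + 2 * R + 3 < N)
    {z : ℤ → A} {c : A} (hz : ∀ n ∉ Set.Ioc (-R : ℤ) (l + R + 3), z n = c)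
    (h : IsContext (markedPoint a b l u) N z m) : m ∈ Set.Icc (-R : ℤ) R := by
  have hca : c = a := by
    -- the letters `a` on the left of the center fill an interval longer than `(-R, l + R + 3]`
    obtain ⟨s, hs, hms⟩ : ∃ s ∈ Set.Icc (-N) (-1), m + s ∉ Set.Ioc (-R : ℤ) (l + R + 3) := by
      by_cases hm : m - 1 ≤ l + R + 3
      · exact ⟨-N, by grind, by grind⟩
      · exact ⟨-1, by grind, by grind⟩
    rw [← hz _ hms, h.apply_add (by grind) (by grind), markedPoint_of_notMem_Icc (by grind)]
  by_contra hm
  rw [Set.mem_Icc, not_and_or, not_le, not_le] at hm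
  rcases hm with hm | hm
  · have hzb : z (m + 1) = b := (h.apply_add (by grind) one_ne_zero).trans markedPoint_one
    exact hab (hca.symm.trans ((hz _ (by grind)).symm.trans hzb))
  · have hzb : z (m + (l + 3)) = b := (h.apply_add (by grind) (by omega)).trans markedPoint_last
    exact hab (hca.symm.trans ((hz _ (by grind)).symm.trans hzb))

end MarkedPoint

section Rigidity

variable [TopologicalSpace A] [DiscreteTopology A] {φ : (ℤ → A) → ℤ → A}

lemma exists_forall_isContext_markedPoint {a b : A} (hab : a ≠ b) (hinj : φ.Injective)
    (hcont : Continuous φ) (hφ : ∀ g ∈ ShiftAut A, Function.Commute φ g) :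
    ∃ R : ℕ, ∀ (l : ℕ) (u : ℤ → A), ∃ m ∈ Set.Icc (-R : ℤ) R,
      IsContext (markedPoint a b l u) (l + 2 * R + 4) (φ (markedPoint a b l u)) m := by
  have : Nontrivial A := ⟨a, b, hab⟩
  obtain ⟨R, hR⟩ := (eventually_forall_apply_eq_of_eqOn_Icc
    ((continuous_apply 0).comp hcont) (Function.const ℤ a)).exists
  refine ⟨R, fun l u => ?_⟩
  obtain ⟨m, hm⟩ := exists_isContext_apply hinj hφ
    (hasIsolatedContexts_markedPoint (l := l) (u := u) hab
      (show 2 ≤ (l + 2 * R + 4 : ℤ) by omega))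
  have hconst : ∀ n ∉ Set.Ioc (-R : ℤ) (l + R + 3),
      φ (markedPoint a b l u) n = φ (Function.const ℤ a) 0 := by
    intro n hn
    rw [apply_eq_apply_shiftHomeo_zpow_zero hφ]
    refine hR _ fun j hj => ?_
    rw [shiftHomeo_zpow_apply, markedPoint_of_notMem_Icc (by grind), Function.const_apply]
  exact ⟨m, hm.mem_Icc_of_markedPoint hab (by omega) hconst, hm⟩

lemma exists_forall_apply_zero_eq_apply (hinj : φ.Injective) (hcont : Continuous φ)
    (hφ : ∀ g ∈ ShiftAut A, Function.Commute φ g) : ∃ n : ℤ, ∀ y, φ y 0 = y n := by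
  rcases subsingleton_or_nontrivial A with _ | _
  · exact ⟨0, fun y => Subsingleton.elim _ _⟩
  obtain ⟨a, b, hab⟩ := exists_pair_ne A
  obtain ⟨R, hR⟩ := exists_forall_isContext_markedPoint hab hinj hcont hφ
  by_contra! hne
  choose y hy using hne
  obtain ⟨r, hrR, hr⟩ : ∃ r : ℕ, R ≤ r ∧ ∀ m ∈ Set.Icc (-R : ℤ) R, ∀ x,
      Set.EqOn x (y (-m)) (Set.Icc (-r) r) → φ x 0 = φ (y (-m)) 0 :=
    ((Filter.eventually_ge_atTop R).and ((Set.finite_Icc _ _).eventually_all.2 fun m _ =>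
      eventually_forall_apply_eq_of_eqOn_Icc ((continuous_apply 0).comp hcont) (y (-m)))).exists
  let v : ℤ → ℤ → A := fun k => y (R - k)
  let w := markedPoint a b ((2 * R + 1) * (2 * r + 1)) (concatWords r v)
  obtain ⟨m, hmR, hm⟩ : ∃ m ∈ Set.Icc (-R : ℤ) R, IsContext w _ (φ w) m := hR _ _
  let p : ℤ := (m + R) * (2 * r + 1) + r + 3
  have hword : Set.EqOn (fun s => w (p + s)) (y (-m)) (Set.Icc (-r) r) := by
    have := eqOn_markedPoint_concatWords a b r (2 * R + 1) v (k := m + R) (by grind)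
    rwa [show v (m + R) = y (-m) from congrArg y (by ring)] at this
  have hp : p - m ∈ Set.Icc (1 : ℤ) ((2 * R + 1) * (2 * r + 1) + 2 * R + 4) := by
    constructor <;> nlinarith [hmR.1, hmR.2]
  refine hy (-m) ?_
  calc φ (y (-m)) 0 = φ ((shiftHomeo A ^ p) w) 0 :=
        (hr m hmR _ fun s hs => by
          rw [shiftHomeo_zpow_apply, add_comm]; exact hword hs).symm
    _ = φ w (m + (p - m)) := by
        rw [← apply_eq_apply_shiftHomeo_zpow_zero hφ, add_sub_cancel]
    _ = w (p - m) := hm.apply_add (by push_cast; grind) (by grind)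
    _ = y (-m) (-m) := hword (by grind)

theorem exists_eq_shiftHomeo_zpow_of_forall_commute (hinj : φ.Injective)
    (hcont : Continuous φ) (hφ : ∀ g ∈ ShiftAut A, Function.Commute φ g) :
    ∃ n : ℤ, φ = ⇑(shiftHomeo A ^ n) := by
  obtain ⟨n, hn⟩ := exists_forall_apply_zero_eq_apply hinj hcont hφ
  refine ⟨n, funext fun x => funext fun i => ?_⟩
  rw [apply_eq_apply_shiftHomeo_zpow_zero hφ, hn, shiftHomeo_zpow_apply, shiftHomeo_zpow_apply,
    add_comm]

end Rigidity

end Ryan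

lemma zpowers_subgroupOf_centralizer_le_center {G : Type*} [Group G] (g : G) :
    (Subgroup.zpowers g).subgroupOf (Subgroup.centralizer {g}) ≤
      Subgroup.center (Subgroup.centralizer {g}) := by
  rintro ⟨_, _⟩ ⟨n, rfl⟩
  refine Subgroup.mem_center_iff.2 fun ⟨h, hh⟩ => Subtype.ext ?_
  exact Commute.zpow_right (Subgroup.mem_centralizer_singleton_iff.1 hh) n

theorem center_eq_shifts_general
    (A : Type*) [TopologicalSpace A] [DiscreteTopology A] :
    Subgroup.center (ShiftAut A) =
      (Subgroup.zpowers (shiftHomeo A)).subgroupOf (ShiftAut A) := by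
  refine le_antisymm (fun φ hφ => ?_) (zpowers_subgroupOf_centralizer_le_center _)
  have hcomm (g) (hg : g ∈ ShiftAut A) : Function.Commute φ.1 g := fun x =>
    (DFunLike.congr_fun (congrArg Subtype.val (Subgroup.mem_center_iff.1 hφ ⟨g, hg⟩)) x).symm
  obtain ⟨n, hn⟩ :=
    exists_eq_shiftHomeo_zpow_of_forall_commute φ.1.injective φ.1.continuous hcomm
  exact ⟨n, DFunLike.coe_injective hn.symm⟩

/-- Ryan's Theorem: the center of `Aut(A^ℤ)` is `Σ(A^ℤ)`, the subgroup
consisting of the powers of the shift `σ`. -/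
theorem center_eq_shifts
    (A : Type*) [Fintype A] [TopologicalSpace A] [DiscreteTopology A]
    (hA : 2 ≤ Fintype.card A) :
    Subgroup.center (ShiftAut A) =
      (Subgroup.zpowers (shiftHomeo A)).subgroupOf (ShiftAut A) :=
  center_eq_shifts_general A
end

section
/- Let A be a finite alphabet with |A| ≥ 2 and let d ≥ 1. Every normal amenable subgroup of Aut(A^{ℤ^d}) is contained in Σ(A^{ℤ^d}), the group of shifts. -/
/-- The shift `σ_v`, `(σ_v x) u = x (u + v)`, on `A^{ℤ^d}`, as a homeomorphism. -/
def shiftD (d : ℕ) (A : Type*) [TopologicalSpace A] (v : Fin d → ℤ) :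
    ((Fin d → ℤ) → A) ≃ₜ ((Fin d → ℤ) → A) where
  toFun x := fun u => x (u + v)
  invFun x := fun u => x (u - v)
  left_inv x := funext fun u => by simp
  right_inv x := funext fun u => by simp
  continuous_toFun := continuous_pi fun u => continuous_apply (u + v)
  continuous_invFun := continuous_pi fun u => continuous_apply (u - v)

/-- `Aut(A^{ℤ^d})`: the group of homeomorphisms of `A^{ℤ^d}` commuting with all shifts. -/
def ShiftAutD (d : ℕ) (A : Type*) [TopologicalSpace A] :
    Subgroup (((Fin d → ℤ) → A) ≃ₜ ((Fin d → ℤ) → A)) :=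
  Subgroup.centralizer (Set.range (shiftD d A))

namespace IsAmenable

theorem of_surjective {G H : Type*} [Group G] [Group H] (φ : G →* H)
    (hφ : Function.Surjective φ) (hG : IsAmenable G) : IsAmenable H := by
  obtain ⟨m, hadd, hsmul, hnonneg, hone, hinv⟩ := hG
  have hcomp : ∀ {f : H → ℝ}, (∃ C, ∀ x, |f x| ≤ C) → ∃ C, ∀ x, |f (φ x)| ≤ C :=
    fun ⟨C, hC⟩ => ⟨C, fun x => hC (φ x)⟩
  refine ⟨fun f => m (f ∘ φ), fun f₁ f₂ h₁ h₂ => hadd _ _ (hcomp h₁) (hcomp h₂),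
    fun c f hf => hsmul c _ (hcomp hf), fun f hf h0 => hnonneg _ (hcomp hf) fun x => h0 (φ x),
    hone, fun h f hf => ?_⟩
  obtain ⟨g, rfl⟩ := hφ h
  simpa only [Function.comp_def, map_mul] using hinv g (f ∘ φ) (hcomp hf)

end IsAmenable

namespace FullShift

open MeasureTheory Set
open scoped NNReal Pointwise

section InvariantContent

variable {Γ Ω : Type*}

theorem isSetRing_univ : IsSetRing (univ : Set (Set Ω)) :=
  ⟨mem_univ _, fun _ _ _ _ => mem_univ _, fun _ _ _ _ => mem_univ _⟩

/-- The content of `S` is the mean of the indicator function of `{g | g • x ∈ S}`. -/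
theorem exists_invariant_content [Group Γ] [MulAction Γ Ω] (hΓ : IsAmenable Γ) (x : Ω) :
    ∃ μ : AddContent ℝ≥0 (univ : Set (Set Ω)),
      (∀ (g : Γ) S, μ (g • S) = μ S) ∧ ∀ S, (∀ g : Γ, g • x ∈ S) → μ S = 1 := by
  obtain ⟨m, hadd, hsmul, hnonneg, hone, hinv⟩ := hΓ
  let χ (S : Set Ω) (g : Γ) : ℝ := S.indicator 1 (g • x)
  have hχ0 (S g) : 0 ≤ χ S g := indicator_nonneg (fun _ _ => zero_le_one) _
  have hχ (S) : ∃ C, ∀ g, |χ S g| ≤ C :=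
    ⟨1, fun g => (abs_of_nonneg (hχ0 S g)).trans_le
      (indicator_le_self' (f := 1) (fun _ _ => zero_le_one) _)⟩
  have hempty : χ ∅ = (0 : ℝ) • χ ∅ := by
    funext g
    simp [χ]
  let μ : AddContent ℝ≥0 (univ : Set (Set Ω)) :=
    isSetRing_univ.addContent_of_union (fun S => (m (χ S)).toNNReal)
      (by rw [hempty, hsmul _ _ (hχ _), zero_mul, Real.toNNReal_zero])
      (by
        intro S T _ _ hST
        rw [← Real.toNNReal_add (hnonneg _ (hχ S) (hχ0 S)) (hnonneg _ (hχ T) (hχ0 T)),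
          ← hadd _ _ (hχ S) (hχ T)]
        congr 2
        funext g
        exact congrFun (indicator_union_of_disjoint hST 1) (g • x))
  refine ⟨μ, fun g S => ?_, fun S hS => ?_⟩
  · have hgS : χ (g • S) = fun h => χ S (g⁻¹ * h) := by
      funext h
      have hmem : h • x ∈ g • S ↔ (g⁻¹ * h) • x ∈ S := by
        rw [mem_smul_set_iff_inv_smul_mem, mul_smul]
      classical simp only [χ, indicator_apply, hmem, Pi.one_apply]
    change (m (χ (g • S))).toNNReal = (m (χ S)).toNNReal
    rw [hgS, hinv _ _ (hχ S)]
  · have hS1 : χ S = fun _ => 1 := funext fun g => indicator_of_mem (hS g) 1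
    change (m (χ S)).toNNReal = 1
    rw [hS1, hone, Real.toNNReal_one]

variable {μ : AddContent ℝ≥0 (univ : Set (Set Ω))}

theorem content_pos_of_finite_translates [Group Γ] [MulAction Γ Ω]
    (hinv : ∀ (g : Γ) S, μ (g • S) = μ S) {x : Ω} (hx : ∀ S, (∀ g : Γ, g • x ∈ S) → μ S = 1)
    {X : Set Ω} (hxX : x ∈ X) (hX : (range fun g : Γ => g • X).Finite) : 0 < μ X := by
  have hone : μ (⋃₀ ↑hX.toFinset) = 1 := hx _ fun g =>
    ⟨g • X, by simp, smul_mem_smul_set hxX⟩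
  have hle := addContent_sUnion_le_sum (m := μ) isSetRing_univ.isSetSemiring hX.toFinset
    (fun _ _ => mem_univ _) (mem_univ _)
  have hsum : ∑ T ∈ hX.toFinset, μ T = hX.toFinset.card • μ X :=
    Finset.sum_eq_card_nsmul fun T hT => by
      obtain ⟨g, rfl⟩ := hX.mem_toFinset.1 hT
      exact hinv g X
  rw [hone, hsum] at hle
  exact pos_iff_ne_zero.2 fun h0 => by simp [h0] at hle

variable [Group Γ] [MulAction Γ Ω] {N : Subgroup Γ}

/-- The conjugate `φ * g * φ⁻¹` moves `φ • U` into `φ • (X \ U)`, so this set carries at least half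
of the mass of `X`. -/
theorem content_le_two_mul_content_smul_diff (hinv : ∀ (g : N) S, μ (g • S) = μ S)
    {X U : Set Ω} (hUX : U ⊆ X) {g : Γ} (hg : g ∈ N) (hgX : g • X = X)
    (hgU : Disjoint (g • U) U) {φ : Γ} (hφ : φ ∈ Subgroup.normalizer (N : Set Γ))
    (hφX : φ • X = X) : μ X ≤ 2 * μ (φ • (X \ U)) := by
  have hsub : g • U ⊆ X \ U :=
    subset_sdiff.2 ⟨hgX ▸ smul_set_mono hUX, hgU⟩
  have hconj : (φ * g * φ⁻¹) • φ • U = φ • g • U := by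
    simp only [smul_smul, inv_mul_cancel_right]
  have hμU : μ (φ • U) ≤ μ (φ • (X \ U)) := calc
    μ (φ • U) = μ (φ • g • U) := by
      rw [← hconj]
      exact (hinv ⟨_, (Subgroup.mem_normalizer_iff.1 hφ g).1 hg⟩ _).symm
    _ ≤ μ (φ • (X \ U)) := addContent_mono isSetRing_univ.isSetSemiring (mem_univ _)
      (mem_univ _) (smul_set_mono hsub)
  calc μ X = μ (φ • U ∪ φ • (X \ U)) := by rw [← smul_set_union, union_sdiff_cancel hUX, hφX]
    _ = μ (φ • U) + μ (φ • (X \ U)) :=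
      addContent_union isSetRing_univ (mem_univ _) (mem_univ _)
        ((disjoint_smul_set).2 disjoint_sdiff_right)
    _ ≤ 2 * μ (φ • (X \ U)) := by rw [two_mul]; gcongr

/-- If `N` were amenable, then `U` would carry the full mass of `X` by
`content_le_two_mul_content_smul_diff`, and so would its complement, which contains `g • U`. -/
theorem not_isAmenable_of_disjoint_smul {X U : Set Ω} (hX : X.Nonempty)
    (hNX : (range fun n : N => n • X).Finite) (hUX : U ⊆ X) {g : Γ} (hg : g ∈ N)
    (hgX : g • X = X) (hgU : Disjoint (g • U) U) {φ ψ : Γ}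
    (hφ : φ ∈ Subgroup.normalizer (N : Set Γ)) (hψ : ψ ∈ Subgroup.normalizer (N : Set Γ))
    (hφX : φ • X = X) (hψX : ψ • X = X) (hφU : φ • (X \ U) ⊆ U) (hψU : ψ • (X \ U) ⊆ U)
    (hφψ : Disjoint (φ • (X \ U)) (ψ • (X \ U))) : ¬ IsAmenable N := by
  intro hN
  obtain ⟨x, hx⟩ := hX
  obtain ⟨μ, hinv, hone⟩ := exists_invariant_content hN x
  have hpos : 0 < μ X := content_pos_of_finite_translates hinv hone hx hNX
  have hmono {S T : Set Ω} (h : S ⊆ T) : μ S ≤ μ T :=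
    addContent_mono isSetRing_univ.isSetSemiring (mem_univ _) (mem_univ _) h
  have hunion {S T : Set Ω} (h : Disjoint S T) : μ (S ∪ T) = μ S + μ T :=
    addContent_union isSetRing_univ (mem_univ _) (mem_univ _) h
  have hfull : 2 * μ X ≤ 2 * μ U := calc
    2 * μ X = μ X + μ X := two_mul _
    _ ≤ 2 * μ (φ • (X \ U)) + 2 * μ (ψ • (X \ U)) :=
      add_le_add (content_le_two_mul_content_smul_diff hinv hUX hg hgX hgU hφ hφX)
        (content_le_two_mul_content_smul_diff hinv hUX hg hgX hgU hψ hψX)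
    _ = 2 * μ (φ • (X \ U) ∪ ψ • (X \ U)) := by rw [hunion hφψ, mul_add]
    _ ≤ 2 * μ U := by gcongr; exact hmono (union_subset hφU hψU)
  have hdouble : 2 * μ U ≤ μ X := calc
    2 * μ U = μ (g • U) + μ U := by rw [two_mul, ← hinv ⟨g, hg⟩ U]; rfl
    _ = μ (g • U ∪ U) := (hunion hgU).symm
    _ ≤ μ X := hmono (union_subset (hgX ▸ smul_set_mono hUX) hUX)
  exact (lt_two_mul_self hpos).not_ge (hfull.trans hdouble)

end InvariantContent

section CellularAutomata

variable {A G : Type*}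

/-- A cellular automaton over an additive group `G`: a self-map of `A^G` that commutes with the
shifts and has a finite memory set, i.e. a finite set of cells determining the value at `0`. -/
structure IsCellularAutomaton [AddGroup G] (f : (G → A) → G → A) : Prop where
  apply_add : ∀ (y : G → A) (v u : G), f (fun t => y (t + v)) u = f y (u + v)
  exists_memory : ∃ S : Finset G, DependsOn (fun y => f y 0) (S : Set G)

namespace IsCellularAutomaton

theorem apply_eq [AddGroup G] {f : (G → A) → G → A} (hf : IsCellularAutomaton f) (y : G → A)
    (u : G) : f y u = f (fun t => y (t + u)) 0 := by
  rw [hf.apply_add, zero_add]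

theorem apply_const [AddGroup G] {f : (G → A) → G → A} (hf : IsCellularAutomaton f) (a : A) :
    ∃ b, f (fun _ => a) = fun _ => b :=
  ⟨f (fun _ => a) 0, funext fun u => hf.apply_eq _ u⟩

theorem continuous [AddGroup G] [TopologicalSpace A] [DiscreteTopology A]
    {f : (G → A) → G → A} (hf : IsCellularAutomaton f) : Continuous f := by
  obtain ⟨S, hS⟩ := hf.exists_memory
  have hzero : Continuous fun y => f y 0 := by
    refine IsLocallyConstant.continuous ((IsLocallyConstant.iff_exists_open _).2 fun y => ?_)
    exact ⟨(S : Set G).pi fun t => {y t},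
      isOpen_set_pi S.finite_toSet fun _ _ => isOpen_discrete _, fun _ _ => rfl,
      fun y' hy' => hS hy'⟩
  refine continuous_pi fun u => ?_
  simp only [hf.apply_eq _ u]
  exact hzero.comp (continuous_pi fun t => continuous_apply (t + u))

theorem exists_radius {f : (ℤ → A) → ℤ → A} (hf : IsCellularAutomaton f) :
    ∃ r : ℕ, ∀ (Y Y' : ℤ → A) u, EqOn Y Y' (Icc (u - r) (u + r)) → f Y u = f Y' u := by
  obtain ⟨S, hS⟩ := hf.exists_memory
  refine ⟨S.sup Int.natAbs, fun Y Y' u h => ?_⟩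
  rw [hf.apply_eq, hf.apply_eq Y']
  refine hS fun s hs => h ?_
  have := Finset.le_sup (f := Int.natAbs) hs
  simp only [mem_Icc]
  omega

end IsCellularAutomaton

end CellularAutomata

section LeftAsymptotic

variable {A : Type*} {z : A} {Y : ℤ → A} {p q : ℤ}

/-- The leftmost letter of `Y` other than the background letter `z` is at position `p`. -/
def IsFront (z : A) (Y : ℤ → A) (p : ℤ) : Prop :=
  (∀ i < p, Y i = z) ∧ Y p ≠ z

theorem IsFront.unique (hp : IsFront z Y p) (hq : IsFront z Y q) : p = q :=
  le_antisymm (not_lt.1 fun h => hq.2 (hp.1 q h)) (not_lt.1 fun h => hp.2 (hq.1 p h))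

theorem IsFront.add (h : IsFront z Y p) (v : ℤ) : IsFront z (fun t => Y (t + v)) (p - v) :=
  ⟨fun i hi => h.1 _ (by omega), by simpa using h.2⟩

theorem isFront_update {a : A} (ha : a ≠ z) (p : ℤ) :
    IsFront z (Function.update (fun _ => z) p a) p :=
  ⟨fun i hi => Function.update_of_ne hi.ne _ _, by rwa [Function.update_self]⟩

theorem exists_isFront (hY : ∀ i < p, Y i = z) (hne : Y ≠ fun _ => z) : ∃ q, IsFront z Y q := by
  obtain ⟨q, hq, hmin⟩ := Int.exists_least_of_bdd (P := fun q => Y q ≠ z)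
    ⟨p, fun i hi => not_lt.1 fun hlt => hi (hY i hlt)⟩ (Function.ne_iff.1 hne)
  exact ⟨q, fun i hi => by_contra fun h => (hmin i h).not_gt hi, hq⟩

/-- The configurations that are equal to `z` far to the left, except the constant one. -/
def leftAsymptotic (z : A) : Set (ℤ → A) :=
  {Y | ∃ p, IsFront z Y p}

theorem mem_leftAsymptotic_iff :
    Y ∈ leftAsymptotic z ↔ (∃ p, ∀ i < p, Y i = z) ∧ Y ≠ fun _ => z :=
  ⟨fun ⟨p, hp⟩ => ⟨⟨p, hp.1⟩, fun h => hp.2 (congrFun h p)⟩,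
    fun ⟨⟨_, hp⟩, hne⟩ => exists_isFront hp hne⟩

theorem image_leftAsymptotic_subset {f : (ℤ → A) → ℤ → A} (hf : IsCellularAutomaton f)
    (hinj : Function.Injective f) {b : A} (hz : f (fun _ => z) = fun _ => b) :
    f '' leftAsymptotic z ⊆ leftAsymptotic b := by
  rintro _ ⟨Y, hY, rfl⟩
  obtain ⟨⟨p, hp⟩, hne⟩ := mem_leftAsymptotic_iff.1 hY
  obtain ⟨r, hr⟩ := hf.exists_radius
  refine mem_leftAsymptotic_iff.2 ⟨⟨p - r, fun i hi => ?_⟩, fun h => hne (hinj (h.trans hz.symm))⟩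
  rw [hr Y (fun _ => z) i fun t ht => hp t (by have := ht.2; omega), hz]

theorem smul_leftAsymptotic {f : Equiv.Perm (ℤ → A)} (hf : IsCellularAutomaton f)
    (hf' : IsCellularAutomaton (f⁻¹ : Equiv.Perm (ℤ → A))) {b : A}
    (hz : f (fun _ => z) = fun _ => b) : f • leftAsymptotic z = leftAsymptotic b := by
  have hinv : f⁻¹ • leftAsymptotic b ⊆ leftAsymptotic z :=
    image_leftAsymptotic_subset hf' (f⁻¹).injective (Equiv.Perm.inv_eq_iff_eq.2 hz.symm)
  exact (image_leftAsymptotic_subset hf f.injective hz).antisymm (subset_smul_set_iff.2 hinv)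

/-- The configurations that spell `ζ 0, …, ζ (k - 1)` from their first letter other than `z` on,
provided that `IsFront z ζ 0` and `0 < k`; prescribing also `z` to the left of that letter is the
same as prescribing `ζ` on a left half-line. -/
def cyl (ζ : ℤ → A) (k : ℤ) : Set (ℤ → A) :=
  {Y | ∃ p, ∀ i < k, Y (i + p) = ζ i}

variable {ζ : ℤ → A} {k : ℤ}

theorem IsFront.of_eq (hζ : IsFront z ζ 0) (hk : 0 < k) (hY : ∀ i < k, Y (i + p) = ζ i) :
    IsFront z Y p := by
  refine ⟨fun i hi => ?_, ?_⟩
  · rw [← hζ.1 (i - p) (by omega), ← hY (i - p) (by omega), sub_add_cancel]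
  · rw [← zero_add p, hY 0 hk]
    exact hζ.2

theorem IsFront.update (hζ : IsFront z ζ 0) (hk : 0 < k) (a : A) :
    IsFront z (Function.update ζ k a) 0 :=
  ⟨fun i hi => by rw [Function.update_of_ne (by omega), hζ.1 i hi],
    by rw [Function.update_of_ne hk.ne]; exact hζ.2⟩

theorem cyl_subset_leftAsymptotic (hζ : IsFront z ζ 0) (hk : 0 < k) :
    cyl ζ k ⊆ leftAsymptotic z :=
  fun _ ⟨p, hp⟩ => ⟨p, .of_eq hζ hk hp⟩

theorem cyl_update_subset (ζ : ℤ → A) (k : ℤ) (a : A) :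
    cyl (Function.update ζ k a) (k + 1) ⊆ cyl ζ k :=
  fun _ ⟨p, hp⟩ => ⟨p, fun i hi => by rw [hp i (by omega), Function.update_of_ne hi.ne]⟩

theorem disjoint_cyl_update (hζ : IsFront z ζ 0) (hk : 0 < k) {a b : A} (hab : a ≠ b) :
    Disjoint (cyl (Function.update ζ k a) (k + 1)) (cyl (Function.update ζ k b) (k + 1)) := by
  rw [disjoint_left]
  rintro Y ⟨p, hp⟩ ⟨q, hq⟩
  have hk' : 0 < k + 1 := by omega
  obtain rfl := (IsFront.of_eq (hζ.update hk a) hk' hp).unique (.of_eq (hζ.update hk b) hk' hq)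
  have := (hp k (by omega)).symm.trans (hq k (by omega))
  rw [Function.update_self, Function.update_self] at this
  exact hab this

end LeftAsymptotic

section Swap

variable {A : Type*} {z : A} {ζ Y Y' : ℤ → A} {k p q u v : ℤ}

/-- A position `p` at which `swap z ζ k` acts on `Y`: the `k` cells from `p` on are filled with `z`
or spell the word `ζ 0, …, ζ (k - 1)`, they are preceded by `k` letters `z`, and they are followed
by a letter other than `z` at which no copy of the word starts. The preceding letters are covered by
the negative `t`, at which `ζ` is `z`. -/
structure IsSite (z : A) (ζ : ℤ → A) (k : ℤ) (Y : ℤ → A) (p : ℤ) : Prop where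
  window : (∀ t, -k ≤ t → t < k → Y (t + p) = z) ∨ ∀ t, -k ≤ t → t < k → Y (t + p) = ζ t
  boundary : Y (k + p) ≠ z
  not_word : ∃ t, 0 ≤ t ∧ t < k ∧ Y (t + (k + p)) ≠ ζ t

theorem isSite_add_iff : IsSite z ζ k (fun t => Y (t + v)) p ↔ IsSite z ζ k Y (p + v) := by
  constructor <;> rintro ⟨h₁, h₂, h₃⟩ <;>
    exact ⟨by simpa only [add_assoc] using h₁, by simpa only [add_assoc] using h₂,
      by simpa only [add_assoc] using h₃⟩

namespace IsSite

theorem pos (hp : IsSite z ζ k Y p) : 0 < k :=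
  have ⟨_, h₁, h₂, _⟩ := hp.not_word
  h₁.trans_lt h₂

theorem congr (hp : IsSite z ζ k Y p)
    (h : ∀ t, -k ≤ t → t < 2 * k → Y (t + p) = Y' (t + p)) : IsSite z ζ k Y' p := by
  obtain ⟨hwin, hbd, s, hs0, hsk, hs⟩ := hp
  refine ⟨?_, h k (by omega) (by omega) ▸ hbd, s, hs0, hsk, ?_⟩
  · exact hwin.imp (fun hY t h₁ h₂ => h t h₁ (by omega) ▸ hY t h₁ h₂)
      (fun hY t h₁ h₂ => h t h₁ (by omega) ▸ hY t h₁ h₂)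
  · rw [← add_assoc, ← h (s + k) (by omega) (by omega), add_assoc]
    exact hs

theorem eq_background (hζ : IsFront z ζ 0) (hp : IsSite z ζ k Y p)
    (h₁ : p - k ≤ u) (h₂ : u < p) : Y u = z := by
  rw [← sub_add_cancel u p]
  rcases hp.window with h | h
  · exact h _ (by omega) (by omega)
  · exact (h _ (by omega) (by omega)).trans (hζ.1 _ (by omega))

theorem eq_word (hp : IsSite z ζ k Y p) (hpu : p ≤ u) (huk : u < p + k)
    (hu : Y u ≠ z) {t : ℤ} (h₁ : -k ≤ t) (h₂ : t < k) : Y (t + p) = ζ t := by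
  rcases hp.window with h | h
  · exact absurd (h (u - p) (by omega) (by omega)) (by rwa [sub_add_cancel])
  · exact h t h₁ h₂

/-- Otherwise the letter other than `z` at `p + k` belongs to the window of `q`, which thus spells
the word. Then `q = p + k` contradicts `not_word`; and if `q < p + k`, the window of `p` spells the
word, too, although the cell `p` is one of the `k` letters `z` before `q`. -/
theorem add_two_mul_le (hζ : IsFront z ζ 0) (hp : IsSite z ζ k Y p)
    (hq : IsSite z ζ k Y q) (hpq : p < q) : p + 2 * k ≤ q := by
  have hk := hp.pos
  by_contra! hlt
  have hqp : q ≤ k + p := by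
    by_contra! h
    exact hp.boundary (hq.eq_background hζ (by omega) h)
  have hword (t) (h₁ : -k ≤ t) (h₂ : t < k) : Y (t + q) = ζ t :=
    hq.eq_word hqp (by omega) hp.boundary h₁ h₂
  have hYq : Y q ≠ z := by
    have := hword 0 (by omega) hk
    rw [zero_add] at this
    exact this ▸ hζ.2
  rcases hqp.eq_or_lt with rfl | hqp
  · obtain ⟨t, h₁, h₂, ht⟩ := hp.not_word
    exact ht (hword t (by omega) h₂)
  · have hYp := hp.eq_word hpq.le (by omega) hYq (t := 0) (by omega) hk
    rw [zero_add, hq.eq_background hζ (by omega) hpq] at hYp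
    exact hζ.2 hYp.symm

theorem eq_or_far (hζ : IsFront z ζ 0) (hp : IsSite z ζ k Y p)
    (hq : IsSite z ζ k Y q) : p = q ∨ p + 2 * k ≤ q ∨ q + 2 * k ≤ p := by
  rcases lt_trichotomy p q with h | h | h
  · exact .inr (.inl (hp.add_two_mul_le hζ hq h))
  · exact .inl h
  · exact .inr (.inr (hq.add_two_mul_le hζ hp h))

end IsSite

open Classical in
/-- The cellular automaton that exchanges `z^k` and the word `ζ 0, …, ζ (k - 1)` in the window of
each site. It is used with `IsFront z ζ 0`, so that the first letter of the window tells which of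
the two it contains. -/
noncomputable def swap (z : A) (ζ : ℤ → A) (k : ℤ) (Y : ℤ → A) (u : ℤ) : A :=
  if h : ∃ p, IsSite z ζ k Y p ∧ u ∈ Ico p (p + k) then
    if Y h.choose = z then ζ (u - h.choose) else z
  else Y u

open Classical in
theorem swap_of_isSite (hζ : IsFront z ζ 0) (hp : IsSite z ζ k Y p)
    (hu : u ∈ Ico p (p + k)) : swap z ζ k Y u = if Y p = z then ζ (u - p) else z := by
  have h : ∃ p, IsSite z ζ k Y p ∧ u ∈ Ico p (p + k) := ⟨p, hp, hu⟩
  have hpc : h.choose = p := by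
    have hc := h.choose_spec.2
    rw [mem_Ico] at hc hu
    rcases h.choose_spec.1.eq_or_far hζ hp with h | h | h <;> omega
  rw [swap, dif_pos h, hpc]

theorem swap_of_forall_not_isSite (h : ∀ p, IsSite z ζ k Y p → u ∉ Ico p (p + k)) :
    swap z ζ k Y u = Y u :=
  dif_neg fun ⟨p, hp, hu⟩ => h p hp hu

theorem IsSite.swap (hζ : IsFront z ζ 0) (hp : IsSite z ζ k Y p) :
    IsSite z ζ k (swap z ζ k Y) p := by
  have hk := hp.pos
  have hoff (t) (ht : p - k ≤ t) (ht' : t < p + 2 * k) (hout : t < p ∨ p + k ≤ t) :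
      FullShift.swap z ζ k Y t = Y t := by
    refine swap_of_forall_not_isSite fun q hq => ?_
    rw [mem_Ico]
    rcases hp.eq_or_far hζ hq with h | h | h <;> omega
  have hleft (t) (h₁ : -k ≤ t) (h₂ : t < 0) : FullShift.swap z ζ k Y (t + p) = z := by
    rw [hoff _ (by omega) (by omega) (by omega)]
    exact hp.eq_background hζ (by omega) (by omega)
  obtain ⟨s, hs0, hsk, hs⟩ := hp.not_word
  refine ⟨?_, ?_, s, hs0, hsk, ?_⟩
  · have hmem (t) (h₁ : 0 ≤ t) (h₂ : t < k) : t + p ∈ Ico p (p + k) := by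
      simp only [mem_Ico]; omega
    by_cases hz : Y p = z
    · refine .inr fun t h₁ h₂ => ?_
      rcases lt_or_ge t 0 with ht | ht
      · rw [hleft t h₁ ht, hζ.1 t ht]
      · rw [swap_of_isSite hζ hp (hmem t ht h₂), if_pos hz, add_sub_cancel_right]
    · refine .inl fun t h₁ h₂ => ?_
      rcases lt_or_ge t 0 with ht | ht
      · exact hleft t h₁ ht
      · rw [swap_of_isSite hζ hp (hmem t ht h₂), if_neg hz]
  · rw [hoff _ (by omega) (by omega) (by omega)]
    exact hp.boundary
  · rw [hoff _ (by omega) (by omega) (by omega)]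
    exact hs

theorem isSite_swap_iff (hζ : IsFront z ζ 0) :
    IsSite z ζ k (swap z ζ k Y) p ↔ IsSite z ζ k Y p := by
  refine ⟨fun hp => ?_, fun hp => hp.swap hζ⟩
  by_contra hn
  refine hn (hp.congr fun t h₁ h₂ => swap_of_forall_not_isSite fun q hq => ?_)
  rw [mem_Ico]
  rcases hp.eq_or_far hζ (hq.swap hζ) with rfl | h | h
  · exact absurd hq hn
  all_goals omega

theorem swap_involutive (hζ : IsFront z ζ 0) :
    Function.Involutive (swap z ζ k) := by
  intro Y
  funext u
  by_cases h : ∃ p, IsSite z ζ k Y p ∧ u ∈ Ico p (p + k)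
  · obtain ⟨p, hp, hu⟩ := h
    have hk := hp.pos
    rw [swap_of_isSite hζ (hp.swap hζ) hu,
      swap_of_isSite hζ hp (left_mem_Ico.2 (lt_add_of_pos_right p hk)), sub_self]
    rw [mem_Ico] at hu
    by_cases hz : Y p = z
    · rw [if_pos hz, if_neg hζ.2]
      rcases hp.window with h | h
      · simpa using (h (u - p) (by omega) (by omega)).symm
      · exact absurd ((h 0 (by omega) hk).symm.trans (by rwa [zero_add])) hζ.2
    · rw [if_neg hz, if_pos rfl, ← hp.eq_word le_rfl (by omega) hz (by omega) (by omega),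
        sub_add_cancel]
  · rw [swap_of_forall_not_isSite, swap_of_forall_not_isSite]
    · exact fun p hp hu => h ⟨p, hp, hu⟩
    · exact fun p hp hu => h ⟨p, (isSite_swap_iff hζ).1 hp, hu⟩

theorem swap_apply_add (hζ : IsFront z ζ 0) (Y : ℤ → A) (v u : ℤ) :
    swap z ζ k (fun t => Y (t + v)) u = swap z ζ k Y (u + v) := by
  by_cases h : ∃ p, IsSite z ζ k Y (p + v) ∧ u ∈ Ico p (p + k)
  · obtain ⟨p, hp, hu⟩ := h
    have hu' : u + v ∈ Ico (p + v) (p + v + k) := by rw [mem_Ico] at *; omega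
    rw [swap_of_isSite hζ (isSite_add_iff.2 hp) hu, swap_of_isSite hζ hp hu',
      add_sub_add_right_eq_sub]
  · rw [swap_of_forall_not_isSite, swap_of_forall_not_isSite]
    · exact fun p hp hu => h ⟨p - v, by simpa using hp, by rw [mem_Ico] at *; omega⟩
    · exact fun p hp hu => h ⟨p, isSite_add_iff.1 hp, hu⟩

theorem swap_congr (hζ : IsFront z ζ 0) (hk : 0 < k)
    (h : EqOn Y Y' (Ico (u - 2 * k) (u + 2 * k))) : swap z ζ k Y u = swap z ζ k Y' u := by
  by_cases hu : ∃ p, IsSite z ζ k Y p ∧ u ∈ Ico p (p + k)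
  · obtain ⟨p, hp, hu⟩ := hu
    have := mem_Ico.1 hu
    have hp' : IsSite z ζ k Y' p := hp.congr fun t h₁ h₂ => h (by rw [mem_Ico]; omega)
    rw [swap_of_isSite hζ hp hu, swap_of_isSite hζ hp' hu, h (by rw [mem_Ico]; omega)]
  · rw [swap_of_forall_not_isSite, swap_of_forall_not_isSite, h (by rw [mem_Ico]; omega)]
    · intro p hp hpu
      have := mem_Ico.1 hpu
      exact hu ⟨p, hp.congr fun t h₁ h₂ => (h (by rw [mem_Ico]; omega)).symm, hpu⟩
    · exact fun p hp hpu => hu ⟨p, hp, hpu⟩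

theorem isCellularAutomaton_swap (hζ : IsFront z ζ 0) (hk : 0 < k) :
    IsCellularAutomaton (swap z ζ k) where
  apply_add := swap_apply_add hζ
  exists_memory := ⟨Finset.Ico (-(2 * k)) (2 * k), fun Y Y' h =>
    swap_congr hζ hk fun t ht => h t (by simpa using ht)⟩

theorem swap_const (hζ : IsFront z ζ 0) (a : A) :
    swap z ζ k (fun _ => a) = fun _ => a :=
  funext fun _ => swap_of_forall_not_isSite fun _ hp =>
    absurd (hp.eq_background hζ le_rfl (sub_lt_self _ hp.pos)) hp.boundary

theorem swap_eq_self (hζ : IsFront z ζ 0) (h : ∀ p, ∃ u, p - k ≤ u ∧ u < p ∧ Y u ≠ z) :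
    swap z ζ k Y = Y :=
  funext fun _ => swap_of_forall_not_isSite fun p hp =>
    have ⟨_, h₁, h₂, hu⟩ := h p
    absurd (hp.eq_background hζ h₁ h₂) hu

/-- `swap z ζ k` as a permutation of `A^ℤ`. -/
noncomputable def swapPerm (hζ : IsFront z ζ 0) (k : ℤ) : Equiv.Perm (ℤ → A) :=
  (swap_involutive (k := k) hζ).toPerm

theorem smul_swapPerm_leftAsymptotic (hζ : IsFront z ζ 0) (hk : 0 < k) :
    swapPerm hζ k • leftAsymptotic z = leftAsymptotic z :=
  have hCA := isCellularAutomaton_swap hζ hk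
  smul_leftAsymptotic hCA hCA (swap_const hζ z)

/-- If the front of `Y` is at `p`, then `p - k` is a site unless the word starts at `p`, and
`swap z ζ k` inserts the word there. -/
theorem smul_swapPerm_sdiff_subset (hζ : IsFront z ζ 0) (hk : 0 < k) :
    swapPerm hζ k • (leftAsymptotic z \ cyl ζ k) ⊆ cyl ζ k := by
  rintro _ ⟨Y, ⟨⟨p, hp⟩, hY⟩, rfl⟩
  have hsite : IsSite z ζ k Y (p - k) := by
    refine ⟨.inl fun t _ _ => hp.1 _ (by omega), by simpa using hp.2, ?_⟩
    by_contra! h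
    simp only [add_sub_cancel] at h
    refine hY ⟨p, fun i hi => ?_⟩
    rcases lt_or_ge i 0 with hi0 | hi0
    · rw [hp.1 _ (by omega), hζ.1 i hi0]
    · exact h i hi0 hi
  refine ⟨p - k, fun i hi => ?_⟩
  change swap z ζ k Y (i + (p - k)) = ζ i
  rcases lt_or_ge i 0 with hi0 | hi0
  · rw [hζ.1 i hi0, swap_of_forall_not_isSite, hp.1 _ (by omega)]
    intro q hq
    rw [mem_Ico]
    rcases hsite.eq_or_far hζ hq with rfl | h | h
    · omega
    · omega
    · exact absurd (hp.1 _ (by omega)) hq.boundary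
  · rw [swap_of_isSite hζ hsite (by rw [mem_Ico]; omega), if_pos (hp.1 _ (by omega)),
      add_sub_cancel_right]

end Swap

section Recurrence

variable {A : Type*} {z : A} {f : (ℤ → A) → ℤ → A} {ζ : ℤ → A} {k m : ℤ}

namespace IsCellularAutomaton

/-- The constant `m` is the leftmost position of the front of `f ζ`, for `ζ` with front at `0`. -/
theorem exists_forall_isFront_apply [Nontrivial A] (hf : IsCellularAutomaton f)
    (hinj : Function.Injective f) (hz : f (fun _ => z) = fun _ => z) :
    ∃ (m : ℤ) (ζ : ℤ → A) (k : ℤ), IsFront z ζ 0 ∧ 0 < k ∧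
      ∀ Y, (∀ i < k, Y i = ζ i) → IsFront z (f Y) m := by
  obtain ⟨r, hr⟩ := hf.exists_radius
  have hfront {Y : ℤ → A} (hY : IsFront z Y 0) : ∃ q, IsFront z (f Y) q :=
    image_leftAsymptotic_subset hf hinj hz ⟨Y, ⟨0, hY⟩, rfl⟩
  obtain ⟨a, ha⟩ := exists_ne z
  obtain ⟨m, ⟨ζ, hζ, hζm⟩, hmin⟩ := Int.exists_least_of_bdd
    (P := fun m => ∃ Y, IsFront z Y 0 ∧ IsFront z (f Y) m)
    ⟨-r, fun m ⟨Y, hY, hYm⟩ => by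
      by_contra! hlt
      refine hYm.2 ?_
      rw [hr Y (fun _ => z) m fun t ht => hY.1 t (by have := ht.2; omega), hz]⟩
    ((hfront (isFront_update ha 0)).imp fun q hq => ⟨_, isFront_update ha 0, hq⟩)
  refine ⟨m, ζ, max 1 (m + r + 1), hζ, by omega, fun Y hY => ?_⟩
  have hY0 : IsFront z Y 0 := .of_eq hζ (k := max 1 (m + r + 1)) (by omega) (by simpa using hY)
  obtain ⟨q, hq⟩ := hfront hY0
  have hYm : f Y m ≠ z := by
    rw [hr Y ζ m fun t ht => hY t (by have := ht.2; omega)]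
    exact hζm.2
  have hmq : m = q := (hmin q ⟨Y, hY0, hq⟩).antisymm (not_lt.1 fun h => hYm (hq.1 m h))
  exact hmq ▸ hq

theorem apply_add_eq_of_recurrent (hf : IsCellularAutomaton f)
    (hrec : ∀ (ξ : ℤ → A) (n : ℤ), IsFront z ξ 0 → 0 < n → (f '' cyl ξ n ∩ cyl ξ n).Nonempty)
    (hζ : IsFront z ζ 0) (hk : 0 < k) (hm : ∀ Y, (∀ i < k, Y i = ζ i) → IsFront z (f Y) m)
    {Y : ℤ → A} (hY : ∀ i < k, Y i = ζ i) (t : ℤ) : f Y (t + m) = Y t := by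
  obtain ⟨r, hr⟩ := hf.exists_radius
  obtain ⟨n, hkn, htn, hrn⟩ : ∃ n, k ≤ n ∧ t < n ∧ t + m + r < n :=
    ⟨max k (max (t + 1) (t + m + r + 1)), by omega, by omega, by omega⟩
  have hY0 : IsFront z Y 0 := hζ.of_eq hk (by simpa using hY)
  obtain ⟨_, ⟨Y₁, ⟨p, hp⟩, rfl⟩, q, hq⟩ := hrec Y n hY0 (by omega)
  have hfY₁ : f (fun i => Y₁ (i + p)) = fun i => f Y₁ (i + p) := funext (hf.apply_add Y₁ p)
  have hmq : m = q - p := by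
    refine (hm (fun i => Y₁ (i + p)) fun i hi => (hp i (by omega)).trans (hY i hi)).unique ?_
    rw [hfY₁]
    exact (hY0.of_eq (by omega) hq).add p
  calc f Y (t + m) = f (fun i => Y₁ (i + p)) (t + m) :=
        hr _ _ _ fun i hi => (hp i (by have := hi.2; omega)).symm
    _ = f Y₁ (t + q) := by rw [hf.apply_add, hmq, add_assoc, sub_add_cancel]
    _ = Y t := hq t htn

theorem apply_eq_of_forall_eq_left (hf : IsCellularAutomaton f)
    (h : ∀ Y, (∀ i < k, Y i = ζ i) → ∀ t, f Y (t + m) = Y t) (Y : ℤ → A) (u : ℤ) :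
    f Y u = Y (u - m) := by
  obtain ⟨r, hr⟩ := hf.exists_radius
  obtain ⟨q, hqr, hqm⟩ : ∃ q, k ≤ q - r ∧ k ≤ q - m :=
    ⟨max (k + r) (k + m), by omega, by omega⟩
  let Y' (i : ℤ) : A := if i < k then ζ i else Y (i + (u - q))
  calc f Y u = f (fun i => Y (i + (u - q))) q := by rw [hf.apply_add, add_sub_cancel]
    _ = f Y' (q - m + m) := by
      rw [sub_add_cancel]
      exact hr _ _ _ fun i hi => (if_neg (by have := hi.1; omega)).symm
    _ = Y' (q - m) := h Y' (fun i hi => if_pos hi) _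
    _ = Y (q - m + (u - q)) := if_neg (by omega)
    _ = Y (u - m) := by congr 1; ring

theorem exists_shift_of_recurrent [Nontrivial A] (hf : IsCellularAutomaton f)
    (hinj : Function.Injective f) (hz : f (fun _ => z) = fun _ => z)
    (hrec : ∀ (ξ : ℤ → A) (n : ℤ), IsFront z ξ 0 → 0 < n → (f '' cyl ξ n ∩ cyl ξ n).Nonempty) :
    ∃ v, ∀ Y u, f Y u = Y (u + v) := by
  obtain ⟨m, ζ, k, hζ, hk, hm⟩ := hf.exists_forall_isFront_apply hinj hz
  exact ⟨-m, hf.apply_eq_of_forall_eq_left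
    fun _ hY => hf.apply_add_eq_of_recurrent hrec hζ hk hm hY⟩

end IsCellularAutomaton

end Recurrence

section OneDimensional

variable {A : Type*} {N : Subgroup (Equiv.Perm (ℤ → A))}

theorem finite_range_smul_leftAsymptotic [Finite A] (hCA : ∀ f ∈ N, IsCellularAutomaton f) (z : A) :
    (range fun f : N => f • leftAsymptotic z).Finite := by
  refine (finite_range (leftAsymptotic (A := A))).subset ?_
  rintro _ ⟨f, rfl⟩
  obtain ⟨b, hb⟩ := (hCA f f.2).apply_const z
  exact ⟨b, (smul_leftAsymptotic (hCA f f.2) (hCA _ (inv_mem f.2)) hb).symm⟩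

theorem exists_shift_of_apply_const_eq [Finite A] [Nontrivial A] (hN : IsAmenable N)
    (hCA : ∀ f ∈ N, IsCellularAutomaton f)
    (hswap : ∀ {z : A} {ζ : ℤ → A} (hζ : IsFront z ζ 0) {k : ℤ}, 0 < k →
      swapPerm hζ k ∈ Subgroup.normalizer (N : Set (Equiv.Perm (ℤ → A))))
    {g : Equiv.Perm (ℤ → A)} (hg : g ∈ N) {z : A} (hz : g (fun _ => z) = fun _ => z) :
    ∃ v, ∀ Y u, g Y u = Y (u + v) := by
  refine (hCA g hg).exists_shift_of_recurrent g.injective hz fun ζ k hζ hk => ?_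
  rw [← not_disjoint_iff_nonempty_inter]
  intro hdisj
  obtain ⟨a, haz⟩ := exists_ne z
  have hk' : 0 < k + 1 := by omega
  have hsub (c : A) : swapPerm (hζ.update hk c) (k + 1) • (leftAsymptotic z \ cyl ζ k) ⊆
      cyl (Function.update ζ k c) (k + 1) :=
    (smul_set_mono (sdiff_subset_sdiff_right (cyl_update_subset ζ k c))).trans
      (smul_swapPerm_sdiff_subset _ hk')
  have hne : (leftAsymptotic z).Nonempty := ⟨ζ, 0, hζ⟩
  exact not_isAmenable_of_disjoint_smul hne (finite_range_smul_leftAsymptotic hCA z)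
    (cyl_subset_leftAsymptotic hζ hk) hg
    (smul_leftAsymptotic (hCA g hg) (hCA _ (inv_mem hg)) hz) hdisj
    (hswap (hζ.update hk a) hk') (hswap (hζ.update hk z) hk')
    (smul_swapPerm_leftAsymptotic _ hk') (smul_swapPerm_leftAsymptotic _ hk')
    ((hsub a).trans (cyl_update_subset ζ k a)) ((hsub z).trans (cyl_update_subset ζ k z))
    ((disjoint_cyl_update hζ hk haz).mono (hsub a) (hsub z)) hN

theorem update_const_notMem_cyl {z b : A} {ζ : ℤ → A} {k : ℤ} (h₀ : ζ 0 ≠ z) (h₁ : ζ 1 ≠ z)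
    (hk : 1 < k) : Function.update (fun _ => z) 0 b ∉ cyl ζ k := by
  rintro ⟨p, hp⟩
  rcases eq_or_ne p 0 with rfl | hp0
  · exact h₁ ((hp 1 hk).symm.trans (Function.update_of_ne (by omega) _ _))
  · exact h₀ ((hp 0 (by omega)).symm.trans (Function.update_of_ne (by omega) _ _))

theorem exists_swap_apply_update_eq {f : (ℤ → A) → ℤ → A} (hf : IsCellularAutomaton f) {z b : A}
    (hz : f (fun _ => z) = fun _ => b) (hbz : b ≠ z) {ζ : ℤ → A} (hζ : IsFront z ζ 0) (a : A) :
    ∃ k > 1, swap z ζ k (f (Function.update (fun _ => z) 0 a)) =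
      f (Function.update (fun _ => z) 0 a) := by
  obtain ⟨r, hr⟩ := hf.exists_radius
  have hout (t : ℤ) (ht : t < -r ∨ r < t) : f (Function.update (fun _ => z) 0 a) t ≠ z := by
    have heq : EqOn (Function.update (fun _ => z) 0 a) (fun _ => z) (Icc (t - r) (t + r)) := by
      rintro s ⟨_, _⟩
      exact Function.update_of_ne (by omega) _ _
    rwa [hr _ _ t heq, hz]
  refine ⟨2 * r + 2, by omega, swap_eq_self hζ fun p => ?_⟩
  rcases le_or_gt p (r + 1) with hp | hp
  · exact ⟨p - (2 * r + 2), by omega, by omega, hout _ (by omega)⟩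
  · exact ⟨p - 1, by omega, by omega, hout _ (by omega)⟩

/-- If `g` maps `z^ℤ` to `b^ℤ` with `b ≠ z`, then the commutator of `g` and a suitable `swap` fixes
`z^ℤ` and undoes this `swap` on a configuration with a single letter other than `z`. -/
theorem exists_shift_of_isAmenable [Finite A] [Nontrivial A] (hN : IsAmenable N)
    (hCA : ∀ f ∈ N, IsCellularAutomaton f)
    (hswap : ∀ {z : A} {ζ : ℤ → A} (hζ : IsFront z ζ 0) {k : ℤ}, 0 < k →
      swapPerm hζ k ∈ Subgroup.normalizer (N : Set (Equiv.Perm (ℤ → A))))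
    {g : Equiv.Perm (ℤ → A)} (hg : g ∈ N) : ∃ v, ∀ Y u, g Y u = Y (u + v) := by
  obtain ⟨z⟩ := (inferInstance : Nonempty A)
  obtain ⟨b, hb⟩ := (hCA g hg).apply_const z
  rcases eq_or_ne b z with rfl | hbz
  · exact exists_shift_of_apply_const_eq hN hCA hswap hg hb
  let ζ (i : ℤ) : A := if i < 0 then z else b
  have hζ : IsFront z ζ 0 := ⟨fun i hi => if_pos hi, hbz⟩
  let Y : ℤ → A := Function.update (fun _ => z) 0 b
  obtain ⟨k, hk, hφgY⟩ : ∃ k > 1, swapPerm hζ k (g Y) = g Y :=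
    exists_swap_apply_update_eq (hCA g hg) hb hbz hζ b
  let φ := swapPerm hζ k
  have hφconst (c : A) : φ (fun _ => c) = fun _ => c := swap_const hζ c
  have hmem : g⁻¹ * (φ * g * φ⁻¹) ∈ N :=
    mul_mem (inv_mem hg) ((Subgroup.mem_normalizer_iff.1 (hswap hζ (by omega)) g).1 hg)
  have hz : (g⁻¹ * (φ * g * φ⁻¹)) (fun _ => z) = fun _ => z := by
    have hφz : φ⁻¹ (fun _ => z) = fun _ => z := Equiv.Perm.inv_eq_iff_eq.2 (hφconst z).symm
    simp only [Equiv.Perm.mul_apply, hφz, hb, hφconst]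
    exact Equiv.Perm.inv_eq_iff_eq.2 hb.symm
  obtain ⟨v, hv⟩ := exists_shift_of_apply_const_eq hN hCA hswap hmem hz
  have hY : Y ∉ cyl ζ k := update_const_notMem_cyl hbz hbz hk
  have hφY : φ Y ∈ cyl ζ k :=
    smul_swapPerm_sdiff_subset hζ (by omega)
      (smul_mem_smul_set ⟨⟨0, isFront_update hbz 0⟩, hY⟩)
  have hYv (t : ℤ) : Y t = φ Y (t + v) := by
    rw [← hv (φ Y) t]
    simp [φ, hφgY]
  obtain ⟨p, hp⟩ := hφY
  refine absurd ⟨p - v, fun i hi => ?_⟩ hY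
  rw [hYv, add_assoc, sub_add_cancel, hp i hi]

end OneDimensional

section Reduction

variable {A V : Type*} [AddCommGroup V] {c : V →+ ℤ} {e : V}

/-- The action of a self-map `F` of `A^V` on the configurations `Y ∘ c`, identified with `A^ℤ`; here
`c e = 1`, so that `t ↦ t • e` is a section of `c`. -/
def restrict (c : V →+ ℤ) (e : V) (F : (V → A) → V → A) (Y : ℤ → A) (t : ℤ) : A :=
  F (fun u => Y (c u)) (t • e)

/-- The action of a self-map `f` of `A^ℤ` on all the rows `t ↦ y (u + t • e)` of a configuration. -/
def rows (e : V) (f : (ℤ → A) → ℤ → A) (y : V → A) (u : V) : A :=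
  f (fun t => y (u + t • e)) 0

variable {F : (V → A) → V → A} {f f' : (ℤ → A) → ℤ → A}

theorem restrict_apply_map (hF : IsCellularAutomaton F) (he : c e = 1) (Y : ℤ → A) (u : V) :
    restrict c e F Y (c u) = F (fun u => Y (c u)) u := by
  have h := hF.apply_add (fun u => Y (c u)) (c u • e - u) u
  simpa [restrict, he] using h.symm

theorem isCellularAutomaton_restrict (hF : IsCellularAutomaton F) (he : c e = 1) :
    IsCellularAutomaton (restrict c e F) where
  apply_add Y v u := by
    have h := hF.apply_add (fun u => Y (c u)) (v • e) (u • e)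
    simpa [restrict, he, add_smul] using h
  exists_memory := by
    obtain ⟨S, hS⟩ := hF.exists_memory
    refine ⟨S.image c, fun Y Y' h => ?_⟩
    simp only [restrict, zero_smul]
    exact hS fun s hs => h _ (Finset.mem_image_of_mem c hs)

theorem isCellularAutomaton_rows (hf : IsCellularAutomaton f) (e : V) :
    IsCellularAutomaton (rows e f) where
  apply_add y v u := by simp only [rows, add_right_comm]
  exists_memory := by
    classical
    obtain ⟨S, hS⟩ := hf.exists_memory
    refine ⟨S.image (· • e), fun y y' h => hS fun s hs => ?_⟩
    change y (0 + s • e) = y' (0 + s • e)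
    rw [zero_add]
    exact h _ (Finset.mem_image_of_mem (· • e) hs)

theorem restrict_rows (hf : IsCellularAutomaton f) (he : c e = 1) :
    restrict c e (rows e f) = f := by
  funext Y t
  simp [restrict, rows, he, hf.apply_eq Y t, add_comm]

theorem rows_rows (hf' : IsCellularAutomaton f') (h : Function.LeftInverse f f') (y : V → A) :
    rows e f (rows e f' y) = y := by
  funext u
  have hrow : (fun t : ℤ => rows e f' y (u + t • e)) = f' (fun s => y (u + s • e)) := by
    funext t
    rw [hf'.apply_eq _ t]
    simp only [rows, add_smul, add_assoc, add_comm (t • e)]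
  rw [rows, hrow, h, zero_smul, add_zero]

theorem exists_shift_of_restrict (hF : IsCellularAutomaton F) {S : Finset V}
    (hS : DependsOn (fun y => F y 0) (S : Set V)) (hc : InjOn c S) {v : ℤ}
    (hv : ∀ Y u, restrict c e F Y u = Y (u + v)) : ∃ b, ∀ y u, F y u = y (u + b) := by
  let b := Function.invFunOn c S
  have hzero (y : V → A) : F y 0 = y (b v) :=
    calc F y 0 = F (fun u => y (b (c u))) 0 :=
          hS fun s hs => congrArg y (hc.leftInvOn_invFunOn hs).symm
      _ = restrict c e F (fun t => y (b t)) 0 := by simp only [restrict, zero_smul]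
      _ = y (b v) := by rw [hv, zero_add]
  exact ⟨b v, fun y u => by rw [hF.apply_eq, hzero, add_comm]⟩

/-- The vectors are read as coefficients of polynomials, which are separated by evaluation at all
but finitely many integers. -/
theorem exists_addMonoidHom_injOn {d : ℕ} (hd : 1 ≤ d) (S : Finset (Fin d → ℤ)) :
    ∃ (c : (Fin d → ℤ) →+ ℤ) (e : Fin d → ℤ), c e = 1 ∧ InjOn c S := by
  let P : Polynomial ℤ := ∏ x ∈ S.offDiag, (Polynomial.ofFn d x.1 - Polynomial.ofFn d x.2)
  have hP : P ≠ 0 := Finset.prod_ne_zero_iff.2 fun x hx =>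
    sub_ne_zero.2 fun h => (Finset.mem_offDiag.1 hx).2.2 (Polynomial.injective_ofFn d h)
  obtain ⟨K, hK⟩ : ∃ K, P.eval K ≠ 0 := by
    by_contra! h
    exact hP (Polynomial.funext fun K => by rw [h, Polynomial.eval_zero])
  refine ⟨(Polynomial.leval K ∘ₗ Polynomial.ofFn d).toAddMonoidHom, Pi.single ⟨0, hd⟩ 1, ?_,
    fun s hs t ht hst => ?_⟩
  · simp [Polynomial.ofFn_eq_sum_monomial, Pi.single_apply]
  · by_contra hne
    rw [Polynomial.eval_prod] at hK
    refine Finset.prod_ne_zero_iff.1 hK (s, t) (Finset.mem_offDiag.2 ⟨hs, ht, hne⟩) ?_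
    rw [Polynomial.eval_sub]
    exact sub_eq_zero.2 hst

end Reduction

section Automorphisms

theorem exists_finset_dependsOn {ι B : Type*} {X : ι → Type*} [∀ i, TopologicalSpace (X i)]
    [∀ i, CompactSpace (X i)] [TopologicalSpace B] [DiscreteTopology B] {f : (∀ i, X i) → B}
    (hf : Continuous f) : ∃ S : Finset ι, DependsOn f (S : Set ι) := by
  classical
  suffices h : ∃ S : Finset ι, ∀ y ∈ univ, ∀ y', (∀ i ∈ S, y i = y' i) → f y = f y' by
    obtain ⟨S, hS⟩ := h
    exact ⟨S, fun y y' => hS y (mem_univ y) y'⟩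
  refine isCompact_univ.induction_on ⟨∅, fun _ h => h.elim⟩
    (fun s t hst ⟨S, hS⟩ => ⟨S, fun y hy => hS y (hst hy)⟩)
    (fun s t ⟨S, hS⟩ ⟨T, hT⟩ => ⟨S ∪ T, ?_⟩) fun y _ => ?_
  · rintro y (hy | hy) y' h
    · exact hS y hy y' fun i hi => h i (Finset.mem_union_left T hi)
    · exact hT y hy y' fun i hi => h i (Finset.mem_union_right S hi)
  · obtain ⟨S, u, hu, hsub⟩ := isOpen_pi_iff.1 ((isOpen_discrete {f y}).preimage hf) y rfl
    refine ⟨(S : Set ι).pi u, mem_nhdsWithin_of_mem_nhds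
      (set_pi_mem_nhds S.finite_toSet fun i hi => (hu i hi).1.mem_nhds (hu i hi).2), S,
      fun y₁ hy₁ y₂ h => ?_⟩
    rw [show f y₁ = f y from hsub hy₁, show f y₂ = f y from hsub fun i hi => h i hi ▸ hy₁ i hi]

variable {A : Type*} [TopologicalSpace A] [DiscreteTopology A] {d : ℕ}

/-- The theorem of Curtis, Hedlund and Lyndon. -/
theorem isCellularAutomaton_shiftAutD [Finite A] (g : ShiftAutD d A) :
    IsCellularAutomaton g.1 where
  apply_add y v u :=
    have hcomm := Subgroup.mem_centralizer_iff.1 g.2 (shiftD d A v) ⟨v, rfl⟩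
    congrFun (DFunLike.congr_fun hcomm y).symm u
  exists_memory := exists_finset_dependsOn ((continuous_apply 0).comp g.1.continuous)

/-- The automorphism of `A^{ℤ^d}` acting by `f` on the rows in the direction `e`. -/
def rowsAut (e : Fin d → ℤ) (f : Equiv.Perm (ℤ → A)) (hf : IsCellularAutomaton f)
    (hf' : IsCellularAutomaton f.symm) : ShiftAutD d A where
  val :=
    { toFun := rows e f
      invFun := rows e f.symm
      left_inv := rows_rows hf f.symm_apply_apply
      right_inv := rows_rows hf' f.apply_symm_apply
      continuous_toFun := (isCellularAutomaton_rows hf e).continuous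
      continuous_invFun := (isCellularAutomaton_rows hf' e).continuous }
  property := Subgroup.mem_centralizer_iff.2 fun _ ⟨v, hv⟩ => hv ▸
    Homeomorph.ext fun y => funext fun u => ((isCellularAutomaton_rows hf e).apply_add y v u).symm

/-- The homomorphism sending an automorphism of `A^{ℤ^d}` to its action on the configurations
`Y ∘ c`. -/
def restrictHom [Finite A] {c : (Fin d → ℤ) →+ ℤ} {e : Fin d → ℤ} (he : c e = 1) :
    ShiftAutD d A →* Equiv.Perm (ℤ → A) :=
  MonoidHom.toHomPerm
    { toFun g := restrict c e g.1
      map_one' := by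
        funext Y t
        change Y (c (t • e)) = Y t
        rw [map_zsmul, he, smul_eq_mul, mul_one]
      map_mul' g h := by
        funext Y t
        have hh := funext (restrict_apply_map (isCellularAutomaton_shiftAutD h) he Y)
        exact (congrArg (g.1 · (t • e)) hh).symm }

theorem restrictHom_rowsAut [Finite A] {c : (Fin d → ℤ) →+ ℤ} {e : Fin d → ℤ} (he : c e = 1)
    {f : Equiv.Perm (ℤ → A)} (hf : IsCellularAutomaton f) (hf' : IsCellularAutomaton f.symm) :
    restrictHom he (rowsAut e f hf hf') = f :=
  Equiv.coe_fn_injective (restrict_rows hf he)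

theorem swapPerm_mem_normalizer_map [Finite A] {c : (Fin d → ℤ) →+ ℤ} {e : Fin d → ℤ}
    (he : c e = 1) (N : Subgroup (ShiftAutD d A)) [N.Normal] {z : A} {ζ : ℤ → A}
    (hζ : IsFront z ζ 0) {k : ℤ} (hk : 0 < k) :
    swapPerm hζ k ∈
      Subgroup.normalizer (N.map (restrictHom he) : Set (Equiv.Perm (ℤ → A))) := by
  have hswap := isCellularAutomaton_swap hζ hk
  rw [← restrictHom_rowsAut he (f := swapPerm hζ k) hswap hswap]
  refine Subgroup.le_normalizer_map _ (Subgroup.mem_map_of_mem _ ?_)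
  rw [Subgroup.normalizer_eq_top]
  exact Subgroup.mem_top _

end Automorphisms

end FullShift

/-- Every normal amenable subgroup of `Aut(A^{ℤ^d})` is contained in
`Σ(A^{ℤ^d})`, the group of shifts. -/
theorem normal_amenable_le_shiftsD
    (d : ℕ) (hd : 1 ≤ d)
    (A : Type*) [Fintype A] [TopologicalSpace A] [DiscreteTopology A]
    (hA : 2 ≤ Fintype.card A)
    (N : Subgroup (ShiftAutD d A)) (hN : N.Normal) (hNa : IsAmenable N) :
    ∀ g ∈ N, ∃ v : Fin d → ℤ,
      ((g : ShiftAutD d A) : ((Fin d → ℤ) → A) ≃ₜ ((Fin d → ℤ) → A)) = shiftD d A v := by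
  intro g hg
  have : Nontrivial A := Fintype.one_lt_card_iff_nontrivial.1 hA
  have hgCA := FullShift.isCellularAutomaton_shiftAutD g
  obtain ⟨S, hS⟩ := hgCA.exists_memory
  obtain ⟨c, e, he, hc⟩ := FullShift.exists_addMonoidHom_injOn hd S
  let ρ : ShiftAutD d A →* Equiv.Perm (ℤ → A) := FullShift.restrictHom he
  have hCA : ∀ f ∈ N.map ρ, FullShift.IsCellularAutomaton f := by
    rintro _ ⟨h, -, rfl⟩
    exact FullShift.isCellularAutomaton_restrict (FullShift.isCellularAutomaton_shiftAutD h) he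
  have hamenable : IsAmenable (N.map ρ) :=
    hNa.of_surjective (ρ.subgroupMap N) (ρ.subgroupMap_surjective N)
  obtain ⟨v, hv⟩ := FullShift.exists_shift_of_isAmenable hamenable hCA
    (FullShift.swapPerm_mem_normalizer_map he N) (Subgroup.mem_map_of_mem ρ hg)
  obtain ⟨b, hb⟩ := FullShift.exists_shift_of_restrict hgCA hS hc hv
  exact ⟨b, Homeomorph.ext fun y => funext (hb y)⟩
end

section
/- Let A be a finite alphabet with |A| ≥ 2 and let d ≥ 1. The center of Aut(A^{ℤ^d}) is equal to Σ(A^{ℤ^d}), the group of shifts. -/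
theorem exists_finset_dependsOn_of_continuous {ι β : Type*} {X : ι → Type*}
    [∀ i, TopologicalSpace (X i)] [∀ i, CompactSpace (X i)]
    [TopologicalSpace β] [DiscreteTopology β] {F : (∀ i, X i) → β} (hF : Continuous F) :
    ∃ M : Finset ι, DependsOn F (M : Set ι) := by
  classical
  have hbox (x : ∀ i, X i) := isOpen_pi_iff.1 ((isOpen_discrete {F x}).preimage hF) x rfl
  choose I U hU hsub using hbox
  obtain ⟨t, -, ht⟩ := isCompact_univ.elim_nhds_subcover (fun x => (I x : Set ι).pi (U x))
    fun x _ => (isOpen_set_pi (I x).finite_toSet fun i hi => (hU x i hi).1).mem_nhds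
      fun i hi => (hU x i hi).2
  refine ⟨t.biUnion I, fun x y hxy => ?_⟩
  obtain ⟨z, hz, hxz⟩ := Set.mem_iUnion₂.1 (ht (Set.mem_univ x))
  have hyz : y ∈ (I z : Set ι).pi (U z) := fun i hi =>
    hxy i (Finset.mem_coe.2 (Finset.mem_biUnion.2 ⟨z, hz, hi⟩)) ▸ hxz i hi
  have hFx : F x = F z := hsub z hxz
  have hFy : F y = F z := hsub z hyz
  exact hFx.trans hFy.symm

section Shift

variable {G : Type*} [AddCommGroup G]

/-- The shift `σ_v`, `(σ_v x) u = x (u + v)`, on the configurations over an abelian group `G`. -/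
def shift (A : Type*) [TopologicalSpace A] (v : G) : (G → A) ≃ₜ (G → A) where
  toFun x := fun u => x (u + v)
  invFun x := fun u => x (u - v)
  left_inv x := funext fun u => by simp
  right_inv x := funext fun u => by simp
  continuous_toFun := continuous_pi fun u => continuous_apply (u + v)
  continuous_invFun := continuous_pi fun u => continuous_apply (u - v)

/-- `Aut(A^G)`: the group of homeomorphisms of `A^G` commuting with all shifts. -/
def shiftAut (G A : Type*) [AddCommGroup G] [TopologicalSpace A] : Subgroup ((G → A) ≃ₜ (G → A)) :=
  Subgroup.centralizer (Set.range (shift A))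

/-- `M` is a memory set of the cellular automaton `f`: the value of `f x` at `s` depends only on the
block `x (s + ·)` on `M`, through a local rule that does not depend on `s`. -/
def IsMemorySet {A : Type*} (M : Finset G) (f : (G → A) → (G → A)) : Prop :=
  ∀ ⦃x y : G → A⦄ ⦃s t : G⦄, (∀ m ∈ M, x (s + m) = y (t + m)) → f x s = f y t

variable {A : Type*} [TopologicalSpace A] {f : (G → A) ≃ₜ (G → A)}

theorem mem_shiftAut_iff_s3 : f ∈ shiftAut G A ↔ ∀ v x, f (shift A v x) = shift A v (f x) := by
  rw [shiftAut, Subgroup.mem_centralizer_iff, Set.forall_mem_range]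
  exact forall_congr' fun v => eq_comm.trans DFunLike.ext_iff

theorem exists_isMemorySet [Finite A] [DiscreteTopology A] (hf : f ∈ shiftAut G A) :
    ∃ M, IsMemorySet M f := by
  obtain ⟨M, hM⟩ := exists_finset_dependsOn_of_continuous ((continuous_apply 0).comp f.continuous)
  have apply_eq (x : G → A) (s : G) : f x s = f (shift A s x) 0 := by
    rw [mem_shiftAut_iff_s3.1 hf s x]
    exact congrArg (f x) (zero_add s).symm
  refine ⟨M, fun x y s t hxy => ?_⟩
  rw [apply_eq x s, apply_eq y t]
  refine hM fun m hm => ?_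
  change x (m + s) = y (m + t)
  rw [add_comm m s, add_comm m t, hxy m hm]

end Shift

section Marker

variable {G A : Type*} [AddCommGroup G]

/-- The pattern `p` on `S` occurs in `x` around the site `u`. A pattern on a finite set `S` is
encoded by any configuration extending it; the values of `p` outside `S` play no role. -/
def Occurs (S : Finset G) (p x : G → A) (u : G) : Prop :=
  ∀ s ∈ S, x (u + s) = p s

/-- A copy of the pattern `p` on `S` and its translate by `v` prescribe different symbols at a
common site, so the two cannot both occur. -/
def Clash (S : Finset G) (p : G → A) (v : G) : Prop :=
  ∃ t ∈ S, v + t ∈ S ∧ p (v + t) ≠ p t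

/-- A marker is a pattern whose displacement by any element of its support `S` clashes, so that the
symbols forming one occurrence never sit at the centre of another. -/
def IsMarker (S : Finset G) (p : G → A) : Prop :=
  ∀ s ∈ S, Clash S p s

/-- The pattern `p` on `S` contains a translate of the block of `y` on `M`. -/
def ContainsBlock (S : Finset G) (p : G → A) (M : Finset G) (y : G → A) : Prop :=
  ∃ s, ∀ m ∈ M, s + m ∈ S ∧ p (s + m) = y m

open Classical in
/-- The conditional permutation: apply `π` at every site around which the pattern occurs. -/
noncomputable def markerMap (S : Finset G) (p : G → A) (π : Equiv.Perm A) (x : G → A) : G → A :=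
  fun u => if Occurs S p x u then π (x u) else x u

variable {S : Finset G} {p x : G → A} {π : Equiv.Perm A} {u v : G}

theorem occurs_self_zero : Occurs S p p 0 := fun s _ => by rw [zero_add]

theorem Clash.not_occurs_add (hv : Clash S p v) (hu : Occurs S p x u) :
    ¬ Occurs S p x (u + v) := by
  intro huv
  obtain ⟨t, ht, hvt, hne⟩ := hv
  exact hne (by rw [← hu _ hvt, ← huv _ ht, add_assoc])

theorem Clash.mono {S' : Finset G} {p' : G → A} (hS : S ⊆ S') (hp : ∀ s ∈ S, p' s = p s)
    (hv : Clash S p v) : Clash S' p' v := by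
  obtain ⟨t, ht, hvt, hne⟩ := hv
  exact ⟨t, hS ht, hS hvt, by rwa [hp _ hvt, hp _ ht]⟩

theorem ContainsBlock.mono {S' M : Finset G} {p' y : G → A} (hS : S ⊆ S')
    (hp : ∀ s ∈ S, p' s = p s) (hy : ContainsBlock S p M y) : ContainsBlock S' p' M y := by
  obtain ⟨s, hs⟩ := hy
  exact ⟨s, fun m hm => ⟨hS (hs m hm).1, (hp _ (hs m hm).1).trans (hs m hm).2⟩⟩

theorem markerMap_apply_of_occurs (hu : Occurs S p x u) : markerMap S p π x u = π (x u) :=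
  if_pos hu

theorem markerMap_apply_of_not_occurs (hu : ¬ Occurs S p x u) : markerMap S p π x u = x u :=
  if_neg hu

theorem occurs_of_markerMap_apply_ne (hu : markerMap S p π x u ≠ x u) : Occurs S p x u :=
  not_not.1 fun h => hu (markerMap_apply_of_not_occurs h)

theorem markerMap_self_ne (h : π (p 0) ≠ p 0) : markerMap S p π p ≠ p := fun heq =>
  h ((markerMap_apply_of_occurs occurs_self_zero).symm.trans (congrFun heq 0))

theorem IsMarker.occurs_markerMap_iff (h : IsMarker S p) :
    Occurs S p (markerMap S p π x) u ↔ Occurs S p x u := by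
  have preserved {v : G} (hv : Occurs S p x v) : Occurs S p (markerMap S p π x) v := fun s hs => by
    rw [markerMap_apply_of_not_occurs ((h s hs).not_occurs_add hv), hv s hs]
  refine ⟨fun hu s hs => ?_, preserved⟩
  -- A symbol of a new occurrence at `u` altered at `u + s` would make `u + s` an occurrence too.
  by_contra hne
  have hus : Occurs S p x (u + s) :=
    occurs_of_markerMap_apply_ne (π := π) fun heq => hne (heq.symm.trans (hu s hs))
  exact (h s hs).not_occurs_add hu (preserved hus)

theorem IsMarker.markerMap_symm_markerMap (h : IsMarker S p) (π : Equiv.Perm A) (x : G → A) :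
    markerMap S p π.symm (markerMap S p π x) = x := by
  funext u
  by_cases hu : Occurs S p x u
  · rw [markerMap_apply_of_occurs (h.occurs_markerMap_iff.2 hu), markerMap_apply_of_occurs hu,
      π.symm_apply_apply]
  · rw [markerMap_apply_of_not_occurs (mt h.occurs_markerMap_iff.1 hu),
      markerMap_apply_of_not_occurs hu]

theorem continuous_markerMap [TopologicalSpace A] [DiscreteTopology A] :
    Continuous (markerMap S p π) := by
  classical
  refine continuous_pi fun u => ?_
  let rule : A × (S → A) → A := fun q => if ∀ s, q.2 s = p s then π q.1 else q.1
  have hocc (x : G → A) : Occurs S p x u ↔ ∀ s : S, x (u + s) = p s := by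
    simp only [Occurs, Subtype.forall]
  have hrule : (fun x => markerMap S p π x u) = fun x => rule (x u, fun s => x (u + s)) :=
    funext fun x => if_congr (hocc x) rfl rfl
  rw [hrule]
  exact (continuous_of_discreteTopology (f := rule)).comp (by fun_prop)

theorem markerMap_shift [TopologicalSpace A] (v : G) (x : G → A) :
    markerMap S p π (shift A v x) = shift A v (markerMap S p π x) := by
  classical
  funext u
  have hocc : Occurs S p (shift A v x) u ↔ Occurs S p x (u + v) :=
    forall₂_congr fun s _ => by rw [add_right_comm]; rfl
  exact if_congr hocc rfl rfl

/-- The conditional permutation attached to a marker, as a homeomorphism. -/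
noncomputable def IsMarker.homeomorph [TopologicalSpace A] [DiscreteTopology A]
    (h : IsMarker S p) (π : Equiv.Perm A) : (G → A) ≃ₜ (G → A) where
  toFun := markerMap S p π
  invFun := markerMap S p π.symm
  left_inv := h.markerMap_symm_markerMap π
  right_inv := h.markerMap_symm_markerMap π.symm
  continuous_toFun := continuous_markerMap
  continuous_invFun := continuous_markerMap

theorem IsMarker.homeomorph_mem_shiftAut [TopologicalSpace A] [DiscreteTopology A]
    (h : IsMarker S p) (π : Equiv.Perm A) : h.homeomorph π ∈ shiftAut G A :=
  mem_shiftAut_iff_s3.2 markerMap_shift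

-- The model is `𝔽₂³` with basis `s, t, t'`, where `-t = t` and the two sets consist of the
-- nonzero vectors other than `t + t'`. In general the displacement `s + t + t'` clashes only
-- thanks to `-t`.
theorem clash_of_two_symbols [DecidableEq G] {a b : A} (hab : a ≠ b) {s t t' : G}
    (ha : ∀ v ∈ ({s, t, t', -t} : Finset G), p v = a)
    (hb : ∀ v ∈ ({s + t, s + t', s + t + t'} : Finset G), p v = b) :
    ∀ v ∈ ({s, t, t', -t} ∪ {s + t, s + t', s + t + t'} : Finset G),
      Clash ({s, t, t', -t} ∪ {s + t, s + t', s + t + t'}) p v := by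
  have clash {v q r : G} (hq : q ∈ ({s, t, t', -t} : Finset G))
      (hr : r ∈ ({s + t, s + t', s + t + t'} : Finset G)) (h : v + q = r ∨ v + r = q) :
      Clash ({s, t, t', -t} ∪ {s + t, s + t', s + t + t'}) p v := by
    have hne : p q ≠ p r := by rwa [ha q hq, hb r hr]
    rcases h with rfl | rfl
    · exact ⟨q, Finset.mem_union_left _ hq, Finset.mem_union_right _ hr, hne.symm⟩
    · exact ⟨r, Finset.mem_union_right _ hr, Finset.mem_union_left _ hq, hne⟩
  simp only [Finset.forall_mem_union, Finset.forall_mem_insert, Finset.mem_singleton, forall_eq]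
  refine ⟨⟨?_, ?_, ?_, ?_⟩, ?_, ?_, ?_⟩
  · exact clash (q := t) (r := s + t) (by simp) (by simp) (Or.inl rfl)
  · exact clash (q := s) (r := s + t) (by simp) (by simp) (Or.inl (add_comm t s))
  · exact clash (q := s) (r := s + t') (by simp) (by simp) (Or.inl (add_comm t' s))
  · exact clash (q := s) (r := s + t) (by simp) (by simp) (Or.inr (by abel))
  · exact clash (q := t') (r := s + t + t') (by simp) (by simp) (Or.inl rfl)
  · exact clash (q := t) (r := s + t + t') (by simp) (by simp) (Or.inl (by abel))
  · exact clash (q := -t) (r := s + t') (by simp) (by simp) (Or.inl (by abel))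

end Marker

section Existence

open scoped Pointwise

variable {G A : Type*} [AddCommGroup G] [Infinite G]

theorem exists_notMem_finset_add_self_ne (F : Finset G) {s : G} (hs : s ≠ 0) :
    ∃ t ∉ F, t + t ≠ s := by
  classical
  by_contra! hF
  obtain ⟨t, ht⟩ := Infinite.exists_notMem_finset F
  obtain ⟨t', ht'⟩ := Infinite.exists_notMem_finset (F ∪ F.image (· + t))
  rw [Finset.mem_union, not_or] at ht'
  have hdiff : t' - t ∉ F := fun h =>
    ht'.2 (Finset.mem_image.2 ⟨_, h, sub_add_cancel t' t⟩)
  have hzero : t' - t + (t' - t) = 0 := by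
    rw [sub_add_sub_comm, hF t' ht'.1, hF t ht, sub_self]
  exact hs ((hF _ hdiff).symm.trans hzero)

theorem exists_fresh_pair [DecidableEq G] (S : Finset G) {s : G} (hs : s ≠ 0) :
    ∃ t t' : G, Disjoint S {t, t', -t} ∧ Disjoint S {s + t, s + t', s + t + t'} ∧
      Disjoint ({t, t', -t} : Finset G) {s + t, s + t', s + t + t'} := by
  obtain ⟨t, ht, htt⟩ := exists_notMem_finset_add_self_ne
    (S ∪ -S ∪ (-s +ᵥ S) ∪ {-s}) (neg_ne_zero.2 hs)
  obtain ⟨t', ht'⟩ := Infinite.exists_notMem_finset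
    (S ∪ (-s +ᵥ S) ∪ (-(s + t) +ᵥ S) ∪ {t - s, -s, s + t, -t - s, -t - t - s})
  simp only [Finset.mem_union, Finset.mem_neg', Finset.mem_neg_vadd_finset_iff, vadd_eq_add,
    Finset.mem_insert, Finset.mem_singleton, not_or] at ht ht'
  refine ⟨t, t', ?_, ?_, ?_⟩
  · simp [ht, ht']
  · simp [ht, ht']
  · simp only [Finset.disjoint_left, Finset.mem_insert, Finset.mem_singleton]
    grind

theorem exists_superset_clash [Nontrivial A] {S : Finset G} (p : G → A) {s : G} (hs : s ∈ S)
    (hs0 : s ≠ 0) :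
    ∃ (S' : Finset G) (p' : G → A), S ⊆ S' ∧ (∀ v ∈ S, p' v = p v) ∧
      ∀ v ∈ S', v = s ∨ v ∉ S → Clash S' p' v := by
  classical
  obtain ⟨t, t', hST, hSU, hTU⟩ := exists_fresh_pair S hs0
  obtain ⟨b, hb⟩ := exists_ne (p s)
  let T : Finset G := {t, t', -t}
  let U : Finset G := {s + t, s + t', s + t + t'}
  let p' : G → A := S.piecewise p (T.piecewise (fun _ => p s) fun _ => b)
  have p'_of_mem_S : ∀ v ∈ S, p' v = p v := fun v hv => S.piecewise_eq_of_mem _ _ hv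
  have p'_of_mem_T : ∀ v ∈ T, p' v = p s := fun v hv =>
    (S.piecewise_eq_of_notMem _ _ (Finset.disjoint_right.1 hST hv)).trans
      (T.piecewise_eq_of_mem _ _ hv)
  have p'_of_mem_U : ∀ v ∈ U, p' v = b := fun v hv =>
    (S.piecewise_eq_of_notMem _ _ (Finset.disjoint_right.1 hSU hv)).trans
      (T.piecewise_eq_of_notMem _ _ (Finset.disjoint_right.1 hTU hv))
  have hclash : ∀ v ∈ insert s T ∪ U, Clash (insert s T ∪ U) p' v :=
    clash_of_two_symbols hb.symm
      ((Finset.forall_mem_insert _ _ _).2 ⟨p'_of_mem_S s hs, p'_of_mem_T⟩) p'_of_mem_U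
  refine ⟨S ∪ (insert s T ∪ U), p', Finset.subset_union_left, p'_of_mem_S, fun v hv hvS => ?_⟩
  refine (hclash v ?_).mono Finset.subset_union_right fun _ _ => rfl
  rcases hvS with rfl | hvS
  · exact Finset.mem_union_left _ (Finset.mem_insert_self v T)
  · exact (Finset.mem_union.1 hv).resolve_left hvS

theorem exists_isMarker_superset [Nontrivial A] {S : Finset G} (hS : 0 ∉ S) (p : G → A) :
    ∃ (S' : Finset G) (p' : G → A), S ⊆ S' ∧ (∀ v ∈ S, p' v = p v) ∧ IsMarker S' p' := by
  classical
  suffices H : ∀ U : Finset G, 0 ∉ U → ∀ (S : Finset G) (p : G → A),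
      (∀ v ∈ S, v ∉ U → Clash S p v) →
      ∃ (S' : Finset G) (p' : G → A), S ⊆ S' ∧ (∀ v ∈ S, p' v = p v) ∧ IsMarker S' p' from
    H S hS S p fun v hv hv' => absurd hv hv'
  intro U
  induction U using Finset.induction_on with
  | empty => exact fun _ S p h => ⟨S, p, subset_rfl, fun _ _ => rfl, fun v hv => h v hv (by simp)⟩
  | insert s U _ ih =>
    intro hU S p h
    rw [Finset.mem_insert, not_or] at hU
    by_cases hs : s ∈ S
    · obtain ⟨S₁, p₁, hSS₁, hp₁, hclash⟩ := exists_superset_clash p hs (Ne.symm hU.1)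
      have h₁ : ∀ v ∈ S₁, v ∉ U → Clash S₁ p₁ v := fun v hv hvU => by
        by_cases hvS : v = s ∨ v ∉ S
        · exact hclash v hv hvS
        · rw [not_or, not_not] at hvS
          exact (h v hvS.2 (by simp [hvS.1, hvU])).mono hSS₁ hp₁
      obtain ⟨S', p', hS₁S', hp', hmarker⟩ := ih hU.2 S₁ p₁ h₁
      exact ⟨S', p', hSS₁.trans hS₁S',
        fun v hv => (hp' v (hSS₁ hv)).trans (hp₁ v hv), hmarker⟩
    · exact ih hU.2 S p fun v hv hvU => h v hv (by grind)

theorem exists_containsBlock_of_finset [Nonempty A] (M : Finset G) (Y : Finset (G → A)) :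
    ∃ (S : Finset G) (p : G → A), 0 ∉ S ∧ ∀ y ∈ Y, ContainsBlock S p M y := by
  classical
  induction Y using Finset.induction_on with
  | empty => exact ⟨∅, fun _ => Classical.arbitrary A, by simp, by simp⟩
  | insert y Y _ ih =>
    obtain ⟨S, p, hS, hY⟩ := ih
    obtain ⟨s, hs⟩ := Infinite.exists_notMem_finset (insert 0 S - M)
    have hfresh : ∀ m ∈ M, s + m ∉ insert 0 S := fun m hm h =>
      hs (by simpa using Finset.sub_mem_sub h hm)
    have hSM : ∀ v ∈ S, S.piecewise p (fun v => y (v - s)) v = p v := fun v hv =>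
      S.piecewise_eq_of_mem _ _ hv
    have hzero : 0 ∉ s +ᵥ M := fun h => by
      obtain ⟨m, hm, hsm⟩ := Finset.mem_vadd_finset.1 h
      exact hfresh m hm (hsm ▸ Finset.mem_insert_self 0 S)
    refine ⟨S ∪ (s +ᵥ M), S.piecewise p fun v => y (v - s), ?_, ?_⟩
    · rw [Finset.mem_union, not_or]
      exact ⟨hS, hzero⟩
    · refine (Finset.forall_mem_insert _ _ _).2
        ⟨⟨s, fun m hm => ⟨?_, ?_⟩⟩, fun z hz => (hY z hz).mono Finset.subset_union_left hSM⟩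
      · exact Finset.mem_union_right _ (Finset.vadd_mem_vadd_finset hm)
      · rw [S.piecewise_eq_of_notMem _ _ fun h => hfresh m hm (Finset.mem_insert_of_mem h),
          add_sub_cancel_left]

theorem exists_isMarker_forall_containsBlock [Finite A] [Nontrivial A] (M : Finset G) :
    ∃ (S : Finset G) (p : G → A), IsMarker S p ∧ ∀ y, ContainsBlock S p M y := by
  let extend (w : M → A) : G → A := Function.extend Subtype.val w fun _ => Classical.arbitrary A
  obtain ⟨S, p, hS, hblock⟩ :=
    exists_containsBlock_of_finset M (Set.toFinite (Set.range extend)).toFinset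
  obtain ⟨S', p', hSS', hp', hmarker⟩ := exists_isMarker_superset hS p
  refine ⟨S', p', hmarker, fun y => ?_⟩
  obtain ⟨s, hs⟩ := (hblock (extend (M.restrict y)) (by simp)).mono hSS' hp'
  refine ⟨s, fun m hm => ⟨(hs m hm).1, (hs m hm).2.trans ?_⟩⟩
  exact Subtype.val_injective.extend_apply (M.restrict y) _ ⟨m, hm⟩

end Existence

section Center

variable {G A : Type*} [AddCommGroup G] {M S : Finset G} {p : G → A} {f : (G → A) → (G → A)}

theorem IsMemorySet.exists_occurs {π : Equiv.Perm A} (hM : IsMemorySet M f)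
    (hf : Function.Injective f) (hcomm : Function.Commute f (markerMap S p π))
    (hπ : π (p 0) ≠ p 0) :
    ∃ u, ∃ m ∈ M, Occurs S p (f p) u ∧ Occurs S p p (u + m) := by
  have hmove : f (markerMap S p π p) ≠ f p := hf.ne (markerMap_self_ne hπ)
  obtain ⟨u, hu⟩ := Function.ne_iff.1 hmove
  have hlocal : ∃ m ∈ M, markerMap S p π p (u + m) ≠ p (u + m) := by
    by_contra! hfix
    exact hu (hM hfix)
  obtain ⟨m, hm, hum⟩ := hlocal
  rw [hcomm p] at hu
  exact ⟨u, m, hm, occurs_of_markerMap_apply_ne hu, occurs_of_markerMap_apply_ne hum⟩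

theorem IsMemorySet.apply_eq_of_occurs {x : G → A} {u m : G} (hM : IsMemorySet M f) (hm : m ∈ M)
    (hblock : ∀ y, ContainsBlock S p M y) (hfx : Occurs S p (f x) u)
    (hx : Occurs S p x (u + m)) (y : G → A) (t : G) : f y t = y (t + m) := by
  obtain ⟨s, hs⟩ := hblock fun w => y (t + w)
  -- The block of `y` at `t` is read in `x` at `u + m + s`, which is the site `s + m` of the
  -- occurrence at `u` in `f x`.
  have hread : ∀ w ∈ M, y (t + w) = x (u + m + s + w) := fun w hw =>
    calc y (t + w) = p (s + w) := (hs w hw).2.symm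
      _ = x (u + m + (s + w)) := (hx _ (hs w hw).1).symm
      _ = x (u + m + s + w) := by rw [add_assoc (u + m)]
  calc f y t = f x (u + m + s) := hM hread
    _ = f x (u + (s + m)) := by rw [add_assoc, add_comm m]
    _ = p (s + m) := hfx _ (hs m hm).1
    _ = y (t + m) := (hs m hm).2

variable [TopologicalSpace A]

theorem mem_center_shiftAut_of_eq_shift {g : shiftAut G A} {v : G}
    (hg : (g : (G → A) ≃ₜ (G → A)) = shift A v) : g ∈ Subgroup.center (shiftAut G A) := by
  refine Subgroup.mem_center_iff.2 fun h => Subtype.ext ?_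
  rw [Subgroup.coe_mul, Subgroup.coe_mul, hg]
  exact (Subgroup.mem_centralizer_iff.1 h.2 _ ⟨v, rfl⟩).symm

theorem exists_eq_shift_of_mem_center [Infinite G] [Finite A] [Nontrivial A] [DiscreteTopology A]
    {g : shiftAut G A} (hg : g ∈ Subgroup.center (shiftAut G A)) :
    ∃ v : G, (g : (G → A) ≃ₜ (G → A)) = shift A v := by
  classical
  obtain ⟨M, hM⟩ := exists_isMemorySet g.2
  obtain ⟨S, p, hmarker, hblock⟩ := exists_isMarker_forall_containsBlock (A := A) M
  obtain ⟨b, hb⟩ := exists_ne (p 0)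
  let π : Equiv.Perm A := Equiv.swap (p 0) b
  have hπ : π (p 0) ≠ p 0 := by rwa [Equiv.swap_apply_left]
  have hcomm : Function.Commute g.1 (markerMap S p π) := fun x =>
    have h := Subgroup.mem_center_iff.1 hg ⟨hmarker.homeomorph π, hmarker.homeomorph_mem_shiftAut π⟩
    (DFunLike.congr_fun (congrArg Subtype.val h) x).symm
  obtain ⟨u, m, hm, hgp, hp⟩ := hM.exists_occurs g.1.injective hcomm hπ
  exact ⟨m, Homeomorph.ext fun y => funext (hM.apply_eq_of_occurs hm hblock hgp hp y)⟩

theorem center_eq_shiftsD_general [Infinite G] [Finite A] [Nontrivial A] [DiscreteTopology A]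
    (g : shiftAut G A) :
    g ∈ Subgroup.center (shiftAut G A) ↔ ∃ v : G, (g : (G → A) ≃ₜ (G → A)) = shift A v :=
  ⟨exists_eq_shift_of_mem_center, fun ⟨_, hv⟩ => mem_center_shiftAut_of_eq_shift hv⟩

end Center

/-- The center of `Aut(A^{ℤ^d})` equals `Σ(A^{ℤ^d})`, the group of shifts. -/
theorem center_eq_shiftsD
    (d : ℕ) (hd : 1 ≤ d)
    (A : Type*) [Fintype A] [TopologicalSpace A] [DiscreteTopology A]
    (hA : 2 ≤ Fintype.card A) :
    ∀ g : ShiftAutD d A,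
      g ∈ Subgroup.center (ShiftAutD d A) ↔
        ∃ v : Fin d → ℤ,
          (g : ((Fin d → ℤ) → A) ≃ₜ ((Fin d → ℤ) → A)) = shiftD d A v := by
  have : Nonempty (Fin d) := Fin.pos_iff_nonempty.1 hd
  have : Nontrivial A := Fintype.one_lt_card_iff_nontrivial.1 hA
  exact center_eq_shiftsD_general (G := Fin d → ℤ)
end

section
/- Let G be a discrete group acting by homeomorphisms on a compact metric space X such that the action is minimal and strongly proximal, and such that the kernel of the action is exactly the center Z(G) (equivalently, the induced action of G/Z(G) on X is faithful). Then every normal amenable subgroup of G is contained in Z(G). -/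
/-!
Averaging continuous functions along an orbit of `N` with the invariant mean gives an `N`-invariant
state on `C(X, ℝ)`, that is, an `N`-invariant probability measure `μ` on `X`. Since `N` is normal,
every translate of `μ` under `G` is again `N`-invariant, and so is every weak limit of translates.
By strong proximality one of these limits is a point mass, so `N` has a fixed point. The fixed
points of `N` form a closed `G`-invariant set, which by minimality is all of `X`.
-/

open Filter MeasureTheory

open scoped CompactlySupported

section InvariantMeasure

theorem IsAmenable.exists_invariant_state {H : Type*} [Group H] (hH : IsAmenable H)
    (X : Type*) [TopologicalSpace X] [CompactSpace X] [Nonempty X] [MulAction H X]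
    [ContinuousConstSMul H X] :
    ∃ Λ : C(X, ℝ) →ₚ[ℝ] ℝ, Λ 1 = 1 ∧
      ∀ (h : H) (f : C(X, ℝ)), Λ (f.comp ⟨(h • ·), continuous_const_smul h⟩) = Λ f := by
  obtain ⟨m, m_add, m_smul, m_nonneg, m_one, m_inv⟩ := hH
  obtain ⟨x₀⟩ := ‹Nonempty X›
  have bounded_on_orbit (f : C(X, ℝ)) : ∃ C, ∀ h : H, |f (h • x₀)| ≤ C :=
    ⟨‖f‖, fun h => f.norm_coe_le_norm (h • x₀)⟩
  let L : C(X, ℝ) →ₗ[ℝ] ℝ :=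
    { toFun := fun f => m fun h => f (h • x₀)
      map_add' := fun f₁ f₂ => m_add _ _ (bounded_on_orbit f₁) (bounded_on_orbit f₂)
      map_smul' := fun c f => m_smul c _ (bounded_on_orbit f) }
  refine ⟨.mk₀ L fun f hf => m_nonneg _ (bounded_on_orbit f) fun h => hf (h • x₀), m_one,
    fun h f => ?_⟩
  calc m (fun k => f (h • k • x₀))
      = m fun k => f ((h * k) • x₀) := by simp only [mul_smul]
    _ = m fun k => f (k • x₀) := m_inv h _ (bounded_on_orbit f)

theorem smulInvariantMeasure_of_integral_smul_eq {H X : Type*} [Group H] [TopologicalSpace X]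
    [T2Space X] [LocallyCompactSpace X] [MeasurableSpace X] [BorelSpace X] [MulAction H X]
    [ContinuousConstSMul H X] (μ : Measure X) [μ.Regular]
    (hμ : ∀ (h : H) (f : C_c(X, ℝ)), ∫ x, f (h • x) ∂μ = ∫ x, f x ∂μ) :
    SMulInvariantMeasure H X μ := by
  refine ((smulInvariantMeasure_tfae H μ).out 0 5).2 fun h => ?_
  have : (μ.map (h • ·)).Regular := Measure.Regular.map (Homeomorph.smul h)
  refine Measure.ext_of_integral_eq_on_compactlySupported fun f => ?_
  calc ∫ x, f x ∂(μ.map (h • ·))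
      = ∫ x, f (h • x) ∂μ := (measurableEmbedding_const_smul h).integral_map _
    _ = ∫ x, f x ∂μ := hμ h f

variable {X : Type*} [TopologicalSpace X] [T2Space X] [CompactSpace X] [MeasurableSpace X]
  [BorelSpace X]

theorem exists_regular_probabilityMeasure_integral_eq (Λ : C(X, ℝ) →ₚ[ℝ] ℝ) (hΛ : Λ 1 = 1) :
    ∃ μ : ProbabilityMeasure X, (μ : Measure X).Regular ∧ ∀ f : C(X, ℝ), ∫ x, f x ∂μ = Λ f := by
  let Λc : C_c(X, ℝ) →ₚ[ℝ] ℝ :=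
    { toFun := fun f => Λ f
      map_add' := fun f₁ f₂ => map_add Λ (f₁ : C(X, ℝ)) f₂
      map_smul' := fun c f => map_smul Λ c (f : C(X, ℝ))
      monotone' := fun _ _ hf => Λ.monotone' hf }
  have integral_eq (f : C(X, ℝ)) : ∫ x, f x ∂(RealRMK.rieszMeasure Λc) = Λ f :=
    RealRMK.integral_rieszMeasure Λc (CompactlySupportedContinuousMap.continuousMapEquiv f)
  have measureReal_univ : (RealRMK.rieszMeasure Λc).real Set.univ = 1 := by
    simpa [hΛ] using integral_eq 1
  have isProbabilityMeasure : IsProbabilityMeasure (RealRMK.rieszMeasure Λc) :=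
    ⟨(ENNReal.toReal_eq_one_iff _).1 measureReal_univ⟩
  exact ⟨⟨_, isProbabilityMeasure⟩, RealRMK.regular_rieszMeasure Λc, integral_eq⟩

theorem IsAmenable.exists_smulInvariant_probabilityMeasure {H : Type*} [Group H]
    (hH : IsAmenable H) [Nonempty X] [MulAction H X] [ContinuousConstSMul H X] :
    ∃ μ : ProbabilityMeasure X, SMulInvariantMeasure H X (μ : Measure X) := by
  obtain ⟨Λ, Λ_one, Λ_inv⟩ := hH.exists_invariant_state X
  obtain ⟨μ, _, integral_eq⟩ := exists_regular_probabilityMeasure_integral_eq Λ Λ_one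
  refine ⟨μ, smulInvariantMeasure_of_integral_smul_eq _ fun h f => ?_⟩
  calc ∫ x, f (h • x) ∂μ
      = Λ ((f : C(X, ℝ)).comp ⟨(h • ·), continuous_const_smul h⟩) :=
        integral_eq ((f : C(X, ℝ)).comp ⟨(h • ·), continuous_const_smul h⟩)
    _ = Λ f := Λ_inv h f
    _ = ∫ x, f x ∂μ := (integral_eq f).symm

end InvariantMeasure

section NormalSubgroup

variable {G X : Type*} [Group G] [MulAction G X] {N : Subgroup G} [N.Normal]

theorem smulInvariantMeasure_map_smul_of_normal [MeasurableSpace X] [MeasurableConstSMul G X]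
    (μ : Measure X) [SMulInvariantMeasure N X μ] (g : G) :
    SMulInvariantMeasure N X (μ.map (g • ·)) := by
  refine ((smulInvariantMeasure_tfae N _).out 0 5).2 fun n => ?_
  let n' : N := ⟨g⁻¹ * n * g, ‹N.Normal›.conj_mem' n n.2 g⟩
  have conj_smul : (n • ·) ∘ (g • ·) = (g • · : X → X) ∘ (n' • ·) := by
    ext x
    simp [n', Subgroup.smul_def, smul_smul, mul_assoc]
  calc (μ.map (g • ·)).map (n • ·)
      = (μ.map (n' • ·)).map (g • ·) := by
        rw [Measure.map_map (measurable_const_smul n) (measurable_const_smul g), conj_smul,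
          Measure.map_map (measurable_const_smul g) (measurable_const_smul n')]
    _ = μ.map (g • ·) := by rw [(measurePreserving_smul n' μ).map_eq]

instance continuousConstSMul_subgroup [TopologicalSpace X] [ContinuousConstSMul G X]
    (H : Subgroup G) : ContinuousConstSMul H X :=
  ⟨fun h => continuous_const_smul (h : G)⟩

theorem fixedPoints_eq_univ_of_normal_of_isMinimal [TopologicalSpace X] [T2Space X]
    [ContinuousConstSMul G X] [MulAction.IsMinimal G X]
    (hN : (MulAction.fixedPoints N X).Nonempty) : MulAction.fixedPoints N X = Set.univ := by
  have isClosed_fixedPoints : IsClosed (MulAction.fixedPoints N X) := by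
    simp only [MulAction.fixedPoints, Set.ofPred_forall]
    exact isClosed_iInter fun n => isClosed_eq (continuous_const_smul n) continuous_id
  refine (eq_empty_or_univ_of_smul_invariant_closed G isClosed_fixedPoints ?_).resolve_left
    hN.ne_empty
  rintro g _ ⟨x, hx, rfl⟩
  exact smul_mem_fixedPoints_of_normal g hx

end NormalSubgroup

section WeakLimits

variable {X : Type*} [TopologicalSpace X] [MeasurableSpace X]

theorem mem_fixedPoints_of_diracProba_mem_closure [T2Space X] [CompactSpace X] [BorelSpace X]
    {H : Type*} [Group H] [MulAction H X] [ContinuousConstSMul H X] {x : X}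
    (hx : diracProba x ∈
      closure {ν : ProbabilityMeasure X | SMulInvariantMeasure H X (ν : Measure X)}) :
    x ∈ MulAction.fixedPoints H X := by
  intro h
  by_contra hne
  obtain ⟨f, f_cont, f_ne⟩ := separatesPoints_continuous_of_t35Space hne
  lift f to C(X, ℝ) using f_cont
  let S : Set (ProbabilityMeasure X) := {ν | ∫ y, f (h • y) ∂ν = ∫ y, f y ∂ν}
  have isClosed_S : IsClosed S := isClosed_eq
    (ProbabilityMeasure.continuous_integral_continuousMap
      (f.comp ⟨(h • ·), continuous_const_smul h⟩))
    (ProbabilityMeasure.continuous_integral_continuousMap f)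
  have invariant_subset_S :
      {ν : ProbabilityMeasure X | SMulInvariantMeasure H X (ν : Measure X)} ⊆ S := by
    intro ν hν
    have : SMulInvariantMeasure H X (ν : Measure X) := hν
    exact integral_smul_eq_self f
  have integral_dirac_eq : ∫ y, f (h • y) ∂(Measure.dirac x) = ∫ y, f y ∂(Measure.dirac x) :=
    closure_minimal invariant_subset_S isClosed_S hx
  exact f_ne (by simpa only [integral_dirac] using integral_dirac_eq)

/-- Strong proximality of an action: the weak closure of the orbit of every Borel probability
measure contains a point mass. Closures replace limits of sequences so that the notion is the usual
one also for non-metrizable `X`. -/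
def IsStronglyProximal (G X : Type*) [SMul G X] [TopologicalSpace X] [MeasurableSpace X]
    [OpensMeasurableSpace X] [MeasurableConstSMul G X] : Prop :=
  ∀ μ : ProbabilityMeasure X, ∃ x : X,
    diracProba x ∈ closure (Set.range fun g : G => μ.map (measurable_const_smul g).aemeasurable)

theorem diracProba_mem_closure_range_map_smul_of_tendsto_integral [OpensMeasurableSpace X]
    {G : Type*} [SMul G X] [MeasurableConstSMul G X] {μ : ProbabilityMeasure X} {x : X} {ι : Type*}
    {l : Filter ι} [l.NeBot] {g : ι → G}
    (hg : ∀ f : BoundedContinuousFunction X ℝ,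
      Tendsto (fun i => ∫ y, f (g i • y) ∂μ) l (nhds (f x))) :
    diracProba x ∈
      closure (Set.range fun g : G => μ.map (measurable_const_smul g).aemeasurable) := by
  refine mem_closure_of_tendsto (b := l)
    (f := fun i => μ.map (measurable_const_smul (g i)).aemeasurable)
    (ProbabilityMeasure.tendsto_iff_forall_integral_tendsto.2 fun f => ?_)
    (.of_forall fun i => Set.mem_range_self (g i))
  have integral_map_smul (i : ι) :
      ∫ y, f y ∂(μ : Measure X).map (g i • ·) = ∫ y, f (g i • y) ∂μ :=
    integral_map (measurable_const_smul (g i)).aemeasurable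
      f.continuous.measurable.aestronglyMeasurable
  have integral_diracProba : ∫ y, f y ∂(diracProba x : Measure X) = f x :=
    integral_dirac' _ _ f.continuous.measurable.stronglyMeasurable
  simpa only [ProbabilityMeasure.toMeasure_map, integral_map_smul, integral_diracProba] using hg f

theorem IsStronglyProximal.of_tendsto_integral [OpensMeasurableSpace X] {G : Type*} [SMul G X]
    [MeasurableConstSMul G X]
    (h : ∀ μ : Measure X, IsProbabilityMeasure μ →
      ∃ (g : ℕ → G) (x : X), ∀ f : BoundedContinuousFunction X ℝ,
        Tendsto (fun k => ∫ y, f (g k • y) ∂μ) atTop (nhds (f x))) :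
    IsStronglyProximal G X := by
  intro μ
  obtain ⟨g, x, hg⟩ := h μ inferInstance
  exact ⟨x, diracProba_mem_closure_range_map_smul_of_tendsto_integral hg⟩

end WeakLimits

theorem IsStronglyProximal.fixedPoints_nonempty_of_normal_of_isAmenable {G X : Type*} [Group G]
    [TopologicalSpace X] [T2Space X] [CompactSpace X] [Nonempty X] [MeasurableSpace X]
    [BorelSpace X] [MulAction G X] [ContinuousConstSMul G X] (hprox : IsStronglyProximal G X)
    {N : Subgroup G} [N.Normal] (hN : IsAmenable N) : (MulAction.fixedPoints N X).Nonempty := by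
  obtain ⟨μ, _⟩ := hN.exists_smulInvariant_probabilityMeasure (X := X)
  obtain ⟨x, hx⟩ := hprox μ
  refine ⟨x, mem_fixedPoints_of_diracProba_mem_closure (closure_mono ?_ hx)⟩
  rintro _ ⟨g, rfl⟩
  exact smulInvariantMeasure_map_smul_of_normal (μ : Measure X) g

theorem normal_amenable_le_center_of_boundary_general {G X : Type*} [Group G]
    [TopologicalSpace X] [T2Space X] [CompactSpace X] [MeasurableSpace X] [BorelSpace X]
    [MulAction G X] [ContinuousConstSMul G X] [MulAction.IsMinimal G X]
    (hprox : IsStronglyProximal G X) (N : Subgroup G) [N.Normal] (hN : IsAmenable N) :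
    N ≤ (MulAction.toPermHom G X).ker := by
  refine fun n hn => Equiv.ext fun x => ?_
  have : Nonempty X := ⟨x⟩
  have fixedPoints_eq_univ : MulAction.fixedPoints N X = Set.univ :=
    fixedPoints_eq_univ_of_normal_of_isMinimal
      (hprox.fixedPoints_nonempty_of_normal_of_isAmenable hN)
  exact Set.eq_univ_iff_forall.1 fixedPoints_eq_univ x ⟨n, hn⟩

/-- If a group `G` acts on a compact metric space `X` by homeomorphisms,
the action is minimal and strongly proximal (i.e. `X` is a topological boundary
of `G`), and the kernel of the action is exactly the center of `G`, then every
normal amenable subgroup of `G` is contained in the center of `G`. -/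
theorem normal_amenable_le_center_of_boundary
    {G X : Type*} [Group G] [MetricSpace X] [CompactSpace X]
    [MeasurableSpace X] [BorelSpace X] [MulAction G X]
    (hcont : ∀ g : G, Continuous fun x : X => g • x)
    (hmin : ∀ x : X, Dense (MulAction.orbit G x))
    (hprox : ∀ μ : Measure X, IsProbabilityMeasure μ →
      ∃ (g : ℕ → G) (x : X), ∀ f : BoundedContinuousFunction X ℝ,
        Tendsto (fun k => ∫ y, f (g k • y) ∂μ) atTop (nhds (f x)))
    (hker : ∀ g : G, (∀ x : X, g • x = x) ↔ g ∈ Subgroup.center G)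
    (N : Subgroup G) (hN : N.Normal) (hNa : IsAmenable N) :
    N ≤ Subgroup.center G := by
  have : ContinuousConstSMul G X := ⟨hcont⟩
  have : MulAction.IsMinimal G X := ⟨hmin⟩
  exact fun n hn => (hker n).1 <| Equiv.congr_fun <|
    normal_amenable_le_center_of_boundary_general (.of_tendsto_integral hprox) N hNa hn
end

section
/- Let H be a discrete group acting by homeomorphisms on a compact metric space X with at least three points, such that the action is minimal and extremely proximal. Then H contains a free subgroup on two generators (Glasner's Theorem). -/
open Filter

/-!
Minimality and extreme proximality combine into a single topological property: the complement of
any nonempty open set can be moved inside any nonempty open set. If `X` were finite, singletons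
would be open, and the complement of a singleton, which has at least two points, could be moved
into that singleton. So `X` is infinite, and therefore contains infinitely many pairwise disjoint
nonempty open sets. Pair them up as `(Uᵢ, Vᵢ)`; elements `aᵢ` mapping the complement of `Vᵢ` into
`Uᵢ` play ping-pong, since `aᵢ⁻¹` then maps the complement of `Uᵢ` into `Vᵢ`.
-/

open scoped Pointwise Topology Function

universe u

lemma smul_compl_subset_comm {H X : Type*} [Group H] [MulAction H X] {g : H} {U V : Set X} :
    g • Uᶜ ⊆ V ↔ g⁻¹ • Vᶜ ⊆ U := by
  rw [Set.smul_set_subset_iff_subset_inv_smul_set, Set.compl_subset_comm, Set.smul_set_compl]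

lemma injective_freeGroupLift_of_smul_compl_subset {ι H : Type u} {X : Type*} [Nontrivial ι]
    [Group H] [MulAction H X] {a : ι → H} {U : ι ⊕ ι → Set X} (hne : ∀ s, (U s).Nonempty)
    (hdisj : Pairwise (Disjoint on U)) (ha : ∀ i, a i • (U (.inr i))ᶜ ⊆ U (.inl i)) :
    Function.Injective (FreeGroup.lift a) :=
  FreeGroup.injective_lift_of_ping_pong a (U ∘ .inl) (U ∘ .inr) (fun i => hne (.inl i))
    (hdisj.comp_of_injective Sum.inl_injective) (hdisj.comp_of_injective Sum.inr_injective)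
    (fun _ _ => hdisj Sum.inl_ne_inr) ha (fun i => smul_compl_subset_comm.1 (ha i))

/-- Strong boundary actions in the sense of Laca and Spielberg, here without compactness of `X`:
the complement of every nonempty open set can be moved into every nonempty open set. -/
def IsStrongBoundaryAction (H X : Type*) [SMul H X] [TopologicalSpace X] : Prop :=
  ∀ ⦃U V : Set X⦄, IsOpen U → U.Nonempty → IsOpen V → V.Nonempty → ∃ g : H, g • Uᶜ ⊆ V

namespace IsStrongBoundaryAction

lemma infinite {H X : Type*} [Group H] [MulAction H X] [TopologicalSpace X] [T1Space X]
    (hX : IsStrongBoundaryAction H X) (hcard : ∃ x y z : X, x ≠ y ∧ x ≠ z ∧ y ≠ z) :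
    Infinite X := by
  obtain ⟨x, y, z, hxy, hxz, hyz⟩ := hcard
  by_contra hfin
  rw [not_infinite_iff_finite] at hfin
  have hz : IsOpen {z} := isOpen_discrete {z}
  obtain ⟨g, hg⟩ := hX hz (Set.singleton_nonempty z) hz (Set.singleton_nonempty z)
  have hgx : g • x = z := hg (Set.smul_mem_smul_set hxz)
  have hgy : g • y = z := hg (Set.smul_mem_smul_set hyz)
  exact hxy (MulAction.injective g (hgx.trans hgy.symm))

lemma exists_injective_freeGroupLift {ι H : Type u} {X : Type*} [Nontrivial ι] [Group H]
    [MulAction H X] [TopologicalSpace X] (hX : IsStrongBoundaryAction H X) {U : ι ⊕ ι → Set X}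
    (hopen : ∀ s, IsOpen (U s)) (hne : ∀ s, (U s).Nonempty) (hdisj : Pairwise (Disjoint on U)) :
    ∃ a : ι → H, Function.Injective (FreeGroup.lift a) := by
  choose a ha using fun i : ι => hX (hopen (.inr i)) (hne (.inr i)) (hopen (.inl i)) (hne (.inl i))
  exact ⟨a, injective_freeGroupLift_of_smul_compl_subset hne hdisj ha⟩

end IsStrongBoundaryAction

/-- Extreme proximality: every nonempty proper closed set can be shrunk to a point by a sequence of
group elements, in the Hausdorff metric. The empty set is left out: its Hausdorff distance to a
point is the junk value `0`. -/
def IsExtremelyProximal (H X : Type*) [SMul H X] [PseudoMetricSpace X] : Prop :=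
  ∀ Y : Set X, IsClosed Y → Y.Nonempty → Y ≠ Set.univ →
    ∃ (g : ℕ → H) (x : X), Tendsto (fun k => Metric.hausdorffDist (g k • Y) {x}) atTop (𝓝 0)

lemma eventually_subset_of_tendsto_hausdorffDist_singleton {ι X : Type*} [PseudoMetricSpace X]
    {l : Filter ι} {s : ι → Set X} {x : X} {U : Set X} (hbdd : ∀ i, Bornology.IsBounded (s i))
    (hs : Tendsto (fun i => Metric.hausdorffDist (s i) {x}) l (𝓝 0)) (hU : U ∈ 𝓝 x) :
    ∀ᶠ i in l, s i ⊆ U := by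
  obtain ⟨ε, hε, hball⟩ := Metric.mem_nhds_iff.1 hU
  filter_upwards [hs.eventually_lt_const hε] with i hi y hy
  have hfin : Metric.hausdorffEDist (s i) {x} ≠ ⊤ :=
    Metric.hausdorffEDist_ne_top_of_nonempty_of_bounded ⟨y, hy⟩ (Set.singleton_nonempty x)
      (hbdd i) Bornology.isBounded_singleton
  obtain ⟨_, rfl, hyx⟩ := Metric.exists_dist_lt_of_hausdorffDist_lt hy hi hfin
  exact hball hyx

lemma IsExtremelyProximal.isStrongBoundaryAction {H X : Type*} [Monoid H] [MulAction H X]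
    [PseudoMetricSpace X] [BoundedSpace X] [ContinuousConstSMul H X] [MulAction.IsMinimal H X]
    (hX : IsExtremelyProximal H X) : IsStrongBoundaryAction H X := by
  intro U V hU hUne hV hVne
  obtain hempty | hne := Uᶜ.eq_empty_or_nonempty
  · exact ⟨1, by simp only [hempty, Set.smul_set_empty, Set.empty_subset]⟩
  have hproper : Uᶜ ≠ Set.univ := fun h => hUne.ne_empty (Set.compl_univ_iff.1 h)
  obtain ⟨g, x, hg⟩ := hX Uᶜ hU.isClosed_compl hne hproper
  obtain ⟨t, htx⟩ := hV.exists_smul_mem H x hVne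
  have hnhds : (t • ·) ⁻¹' V ∈ 𝓝 x := (hV.preimage (continuous_const_smul t)).mem_nhds htx
  obtain ⟨k, hk⟩ := (eventually_subset_of_tendsto_hausdorffDist_singleton
    (fun _ => Bornology.IsBounded.all _) hg hnhds).exists
  refine ⟨t * g k, ?_⟩
  rw [mul_smul]
  exact Set.image_subset_iff.2 hk

theorem free_subgroup_of_extremely_proximal_general {ι H X : Type*} [Countable ι] [Group H]
    [TopologicalSpace X] [T2Space X] [MulAction H X]
    (hcard : ∃ x y z : X, x ≠ y ∧ x ≠ z ∧ y ≠ z) (hX : IsStrongBoundaryAction H X) :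
    ∃ f : FreeGroup ι →* H, Function.Injective f := by
  have : Infinite X := hX.infinite hcard
  obtain ⟨U, hinf, hopen, hdisj⟩ := exists_seq_infinite_isOpen_pairwise_disjoint X
  obtain ⟨n, hn⟩ := exists_injective_nat (ULift ℕ ⊕ ULift ℕ)
  -- `ULift` places the generators in the universe of `H`, as the ping-pong lemma requires.
  obtain ⟨a, ha⟩ := hX.exists_injective_freeGroupLift (ι := ULift ℕ) (U := U ∘ n)
    (fun s => hopen (n s)) (fun s => (hinf (n s)).nonempty) (hdisj.comp_of_injective hn)
  obtain ⟨e, he⟩ := exists_injective_nat ι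
  exact ⟨(FreeGroup.lift a).comp (FreeGroup.map (ULift.up ∘ e)),
    ha.comp (FreeGroup.map_injective (ULift.up_injective.comp he))⟩

/-- Glasner's Theorem: if a group `H` acts by homeomorphisms on a compact
metric space `X` with at least three points, and the action is minimal and
extremely proximal, then `H` contains a free subgroup on two generators. -/
theorem free_subgroup_of_extremely_proximal
    {H X : Type*} [Group H] [MetricSpace X] [CompactSpace X] [MulAction H X]
    (hcont : ∀ g : H, Continuous fun x : X => g • x)
    (hcard : ∃ x y z : X, x ≠ y ∧ x ≠ z ∧ y ≠ z)
    (hmin : ∀ x : X, Dense (MulAction.orbit H x))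
    (hext : ∀ Y : Set X, IsClosed Y → Y.Nonempty → Y ≠ Set.univ →
      ∃ (g : ℕ → H) (x : X),
        Tendsto (fun k => Metric.hausdorffDist ((fun y => g k • y) '' Y) {x})
          atTop (nhds 0)) :
    ∃ f : FreeGroup (Fin 2) →* H, Function.Injective f :=
  have : ContinuousConstSMul H X := ⟨hcont⟩
  have : MulAction.IsMinimal H X := ⟨hmin⟩
  free_subgroup_of_extremely_proximal_general hcard <|
    IsExtremelyProximal.isStrongBoundaryAction hext
end

section
/- Let H be a discrete group acting by homeomorphisms on compact metric spaces X_1, …, X_n, each action being minimal and strongly proximal. Then the diagonal action of H on the product X_1 × ⋯ × X_n (with the product topology) is strongly proximal. -/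
/-!
The action on `X` is strongly proximal when the orbit closure of every measure in the space `P(X)`
of probability measures contains a point mass. The space `P(∏ i, X i)` is compact, so the orbit
closure of `μ` contains a `ν` whose own orbit closure is minimal. For each `i`, strong proximality
of `X i` gives some `ω` in the orbit closure of `ν` whose `i`-th marginal is a point mass. By
minimality `ν` lies in the orbit closure of `ω`, and point masses form a closed invariant set, so
the `i`-th marginal of `ν` is itself a point mass. This holds for the same `ν` and every `i`, so
`ν` is a point mass.
-/

open Filter MeasureTheory

open Set TopologicalSpace Topology
open MulAction (orbit)

section OrbitClosure

variable {M Y Z : Type*} [TopologicalSpace Y] [TopologicalSpace Z]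

lemma mem_closure_orbit_iff_exists_seq [SMul M Y] [FrechetUrysohnSpace Y] {y z : Y} :
    z ∈ closure (orbit M y) ↔ ∃ g : ℕ → M, Tendsto (fun k => g k • y) atTop (𝓝 z) := by
  rw [mem_closure_iff_seq_limit]
  constructor
  · rintro ⟨u, hu, hlim⟩
    choose g hg using hu
    exact ⟨g, by simpa only [hg] using hlim⟩
  · rintro ⟨g, hlim⟩
    exact ⟨fun k => g k • y, fun k => ⟨g k, rfl⟩, hlim⟩

lemma image_closure_orbit [CompactSpace Y] [T2Space Z] [SMul M Y] [SMul M Z] {f : Y → Z}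
    (hf : Continuous f) (hfM : ∀ (c : M) (y : Y), f (c • y) = c • f y) (y : Y) :
    f '' closure (orbit M y) = closure (orbit M (f y)) := by
  rw [← hf.isClosedMap.closure_image_eq_of_continuous hf, orbit, ← range_comp]
  simp only [Function.comp_def, hfM, orbit]

variable [Monoid M] [MulAction M Y]

lemma nonempty_sInter_of_isChain_closure_orbit [CompactSpace Y] {C : Set (Set Y)}
    (hC : C ⊆ range fun y : Y => closure (orbit M y)) (hchain : IsChain (· ⊆ ·) C)
    (hne : C.Nonempty) : (⋂₀ C).Nonempty := by
  have := hne.to_subtype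
  have isClosed_of_mem : ∀ K ∈ C, IsClosed K := by
    intro K hK
    obtain ⟨y, rfl⟩ := hC hK
    exact isClosed_closure
  refine IsCompact.nonempty_sInter_of_directed_nonempty_isCompact_isClosed
    (show IsChain (· ⊇ ·) C from hchain.symm).directedOn (fun K hK => ?_)
    (fun K hK => (isClosed_of_mem K hK).isCompact) isClosed_of_mem
  obtain ⟨y, rfl⟩ := hC hK
  exact (MulAction.nonempty_orbit y).closure

variable [ContinuousConstSMul M Y]

lemma closure_orbit_subset_closure_orbit {y z : Y} (hz : z ∈ closure (orbit M y)) :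
    closure (orbit M z) ⊆ closure (orbit M y) :=
  closure_minimal
    (range_subset_iff.2 fun c => smul_closure_orbit_subset c y (smul_mem_smul_set hz))
    isClosed_closure

variable (M) in
lemma exists_mem_closure_orbit_forall_mem_closure_orbit [CompactSpace Y] (y : Y) :
    ∃ z ∈ closure (orbit M y), ∀ w ∈ closure (orbit M z), z ∈ closure (orbit M w) := by
  have mem_closure_self (w : Y) : w ∈ closure (orbit M w) :=
    subset_closure (MulAction.mem_orbit_self w)
  have exists_lower_bound : ∀ C ⊆ range (fun w : Y => closure (orbit M w)),
      IsChain (· ⊆ ·) C → C.Nonempty →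
        ∃ L ∈ range (fun w : Y => closure (orbit M w)), ∀ K ∈ C, L ⊆ K := by
    intro C hC hchain hne
    obtain ⟨w, hw⟩ := nonempty_sInter_of_isChain_closure_orbit hC hchain hne
    refine ⟨_, ⟨w, rfl⟩, fun K hK => ?_⟩
    obtain ⟨v, rfl⟩ := hC hK
    exact closure_orbit_subset_closure_orbit (hw _ hK)
  obtain ⟨_, hzy, ⟨z, rfl⟩, hmin⟩ := zorn_superset_nonempty _ exists_lower_bound _ ⟨y, rfl⟩
  exact ⟨z, hzy (mem_closure_self z), fun w hw =>
    hmin ⟨w, rfl⟩ (closure_orbit_subset_closure_orbit hw) (mem_closure_self z)⟩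

end OrbitClosure

section PushforwardAction

variable {M X : Type*} [Monoid M] [MulAction M X] [MeasurableSpace X] [MeasurableConstSMul M X]

/-- The action of `M` on probability measures by pushforward, which turns strong proximality into a
statement about orbit closures. -/
noncomputable instance probabilityMeasureMulAction : MulAction M (ProbabilityMeasure X) where
  smul c μ := μ.map (measurable_const_smul c).aemeasurable
  one_smul μ := Subtype.ext <| by
    change (μ : Measure X).map (fun x => (1 : M) • x) = μ
    simp only [one_smul, Measure.map_id']
  mul_smul c d μ := Subtype.ext <| by
    change (μ : Measure X).map (fun x => (c * d) • x) = ((μ : Measure X).map (d • ·)).map (c • ·)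
    rw [Measure.map_map (measurable_const_smul c) (measurable_const_smul d)]
    simp only [Function.comp_def, mul_smul]

lemma toMeasure_smul (c : M) (μ : ProbabilityMeasure X) :
    ((c • μ : ProbabilityMeasure X) : Measure X) = (μ : Measure X).map (c • ·) :=
  rfl

lemma smul_diracProba (c : M) (x : X) : c • diracProba x = diracProba (c • x) :=
  ProbabilityMeasure.toMeasure_injective <| Measure.map_dirac' (measurable_const_smul c) x

lemma map_smul_of_equivariant {Y : Type*} [MulAction M Y] [MeasurableSpace Y]
    [MeasurableConstSMul M Y] {f : X → Y} (hf : Measurable f)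
    (hfM : ∀ (c : M) (x : X), f (c • x) = c • f x) (c : M) (μ : ProbabilityMeasure X) :
    (c • μ).map hf.aemeasurable = c • μ.map hf.aemeasurable := by
  apply ProbabilityMeasure.toMeasure_injective
  simp only [ProbabilityMeasure.toMeasure_map, toMeasure_smul,
    Measure.map_map hf (measurable_const_smul c), Measure.map_map (measurable_const_smul c) hf,
    Function.comp_def, hfM]

lemma tendsto_smul_diracProba_iff [TopologicalSpace X] [OpensMeasurableSpace X] {ι : Type*}
    {l : Filter ι} {g : ι → M} {μ : ProbabilityMeasure X} {x : X} :
    Tendsto (fun k => g k • μ) l (𝓝 (diracProba x)) ↔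
      ∀ f : BoundedContinuousFunction X ℝ,
        Tendsto (fun k => ∫ y, f (g k • y) ∂(μ : Measure X)) l (𝓝 (f x)) := by
  have integral_smul (f : BoundedContinuousFunction X ℝ) (c : M) :
      ∫ y, f y ∂((c • μ : ProbabilityMeasure X) : Measure X) = ∫ y, f (c • y) ∂(μ : Measure X) :=
    integral_map (measurable_const_smul c).aemeasurable f.continuous.aestronglyMeasurable
  have integral_diracProba (f : BoundedContinuousFunction X ℝ) :
      ∫ y, f y ∂(diracProba x : Measure X) = f x :=
    integral_dirac' f x f.continuous.stronglyMeasurable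
  simp only [ProbabilityMeasure.tendsto_iff_forall_integral_tendsto, integral_smul,
    integral_diracProba]

instance probabilityMeasureContinuousConstSMul [TopologicalSpace X] [BorelSpace X]
    [ContinuousConstSMul M X] : ContinuousConstSMul M (ProbabilityMeasure X) where
  continuous_const_smul c := ProbabilityMeasure.continuous_map (continuous_const_smul c)

end PushforwardAction

section PointMass

variable {M X Y ι : Type*} [MeasurableSpace X] [MeasurableSpace Y]

lemma mem_range_diracProba_of_forall_map [Countable ι] {X : ι → Type*} [∀ i, MeasurableSpace (X i)]
    [∀ i, MeasurableSingletonClass (X i)] {f : ∀ i, Y → X i} (hf : ∀ i, Measurable (f i))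
    (hinj : Function.Injective fun y i => f i y) {ν : ProbabilityMeasure Y}
    (hν : ∀ i, ν.map (hf i).aemeasurable ∈ range (diracProba (X := X i))) :
    ν ∈ range (diracProba (X := Y)) := by
  choose x hx using hν
  have ae_eq (i : ι) : ∀ᵐ y ∂(ν : Measure Y), f i y = x i :=
    ProbabilityTheory.HasLaw.ae_eq_of_dirac
      ⟨(hf i).aemeasurable, congrArg ProbabilityMeasure.toMeasure (hx i).symm⟩
  have ae_forall : ∀ᵐ y ∂(ν : Measure Y), ∀ i, f i y = x i := ae_all_iff.2 ae_eq
  obtain ⟨y₀, hy₀⟩ := ae_forall.exists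
  have ae_eq_const : id =ᵐ[(ν : Measure Y)] fun _ => y₀ :=
    ae_forall.mono fun y hy => hinj <| funext fun i => (hy i).trans (hy₀ i).symm
  have map_id_eq : (ν : Measure Y).map id = Measure.dirac y₀ :=
    (ProbabilityTheory.hasLaw_dirac_of_ae_eq ae_eq_const).map_eq
  exact ⟨y₀, ProbabilityMeasure.toMeasure_injective (map_id_eq.symm.trans Measure.map_id)⟩

lemma closure_orbit_diracProba_subset [TopologicalSpace X] [CompactSpace X] [HasOuterApproxClosed X]
    [BorelSpace X] [Monoid M] [MulAction M X] [MeasurableConstSMul M X] (x : X) :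
    closure (orbit M (diracProba x)) ⊆ range (diracProba (X := X)) :=
  closure_minimal (range_subset_iff.2 fun c => ⟨c • x, (smul_diracProba c x).symm⟩)
    (isCompact_range continuous_diracProba).isClosed

end PointMass

/-- Strong proximality of an action: every probability measure on `X` has a sequence of translates
converging weakly to a point mass. Convergence of `g k • μ` to the point mass at `x` is tested on
bounded continuous functions, with the translate moved from the measure to the integrand. -/
def StronglyProximal (M X : Type*) [SMul M X] [TopologicalSpace X] [MeasurableSpace X] : Prop :=
  ∀ μ : Measure X, IsProbabilityMeasure μ →
    ∃ (g : ℕ → M) (x : X), ∀ f : BoundedContinuousFunction X ℝ,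
      Tendsto (fun k => ∫ y, f (g k • y) ∂μ) atTop (𝓝 (f x))

section StronglyProximal

variable {M Y : Type*} [Monoid M] [TopologicalSpace Y] [MulAction M Y] [ContinuousConstSMul M Y]
  [MeasurableSpace Y] [BorelSpace Y]

lemma stronglyProximal_iff_exists_diracProba_mem_closure_orbit [PseudoMetrizableSpace Y]
    [SeparableSpace Y] :
    StronglyProximal M Y ↔
      ∀ μ : ProbabilityMeasure Y, ∃ y, diracProba y ∈ closure (orbit M μ) := by
  simp only [mem_closure_orbit_iff_exists_seq, tendsto_smul_diracProba_iff]
  exact ⟨fun h μ => exists_comm.1 (h μ inferInstance),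
    fun h μ hμ => exists_comm.1 (h ⟨μ, hμ⟩)⟩

theorem StronglyProximal.of_jointly_injective [CompactSpace Y] {ι : Type*} [Countable ι]
    {X : ι → Type*} [∀ i, TopologicalSpace (X i)] [∀ i, CompactSpace (X i)] [∀ i, T2Space (X i)]
    [∀ i, SecondCountableTopology (X i)] [∀ i, MulAction M (X i)]
    [∀ i, ContinuousConstSMul M (X i)] [∀ i, MeasurableSpace (X i)] [∀ i, BorelSpace (X i)]
    {f : ∀ i, Y → X i} (hf : ∀ i, Continuous (f i))
    (hfM : ∀ (i : ι) (c : M) (y : Y), f i (c • y) = c • f i y)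
    (hinj : Function.Injective fun y i => f i y) (hX : ∀ i, StronglyProximal M (X i)) :
    StronglyProximal M Y := by
  have isEmbedding := ((continuous_pi hf).isClosedEmbedding hinj).isEmbedding
  have := isEmbedding.t2Space
  have := isEmbedding.secondCountableTopology
  simp only [stronglyProximal_iff_exists_diracProba_mem_closure_orbit] at hX ⊢
  intro μ
  obtain ⟨ν, hνμ, hmin⟩ := exists_mem_closure_orbit_forall_mem_closure_orbit M μ
  let push (i : ι) (ω : ProbabilityMeasure Y) : ProbabilityMeasure (X i) :=
    ω.map (hf i).measurable.aemeasurable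
  have image_push (i : ι) (ω : ProbabilityMeasure Y) :
      push i '' closure (orbit M ω) = closure (orbit M (push i ω)) :=
    image_closure_orbit (ProbabilityMeasure.continuous_map (hf i))
      (map_smul_of_equivariant (hf i).measurable (hfM i)) ω
  have push_mem (i : ι) : push i ν ∈ range (diracProba (X := X i)) := by
    obtain ⟨x, hx⟩ := hX i (push i ν)
    obtain ⟨ω, hων, hωx⟩ := (image_push i ν).ge hx
    apply closure_orbit_diracProba_subset (M := M) x
    rw [← hωx, ← image_push]
    exact mem_image_of_mem _ (hmin ω hων)
  obtain ⟨y, rfl⟩ := mem_range_diracProba_of_forall_map (fun i => (hf i).measurable) hinj push_mem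
  exact ⟨y, hνμ⟩

end StronglyProximal

theorem stronglyProximal_pi_general {M ι : Type*} [Monoid M] [Countable ι] {X : ι → Type*}
    [∀ i, TopologicalSpace (X i)] [∀ i, CompactSpace (X i)] [∀ i, T2Space (X i)]
    [∀ i, SecondCountableTopology (X i)] [∀ i, MulAction M (X i)]
    [∀ i, ContinuousConstSMul M (X i)] [∀ i, MeasurableSpace (X i)] [∀ i, BorelSpace (X i)]
    [MeasurableSpace (∀ i, X i)] [BorelSpace (∀ i, X i)] (hX : ∀ i, StronglyProximal M (X i)) :
    StronglyProximal M (∀ i, X i) :=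
  .of_jointly_injective continuous_apply (fun _ _ _ => rfl) (fun _ _ h => h) hX

/-- A product of finitely many minimal and strongly proximal actions of a group
`H` on compact metric spaces, with the diagonal `H`-action, is strongly
proximal. -/
theorem stronglyProximal_pi
    {H : Type*} [Group H] {n : ℕ} (X : Fin n → Type*)
    [∀ i, MetricSpace (X i)] [∀ i, CompactSpace (X i)] [∀ i, MulAction H (X i)]
    [∀ i, MeasurableSpace (X i)] [∀ i, BorelSpace (X i)]
    [MeasurableSpace (∀ i, X i)] [BorelSpace (∀ i, X i)]
    (hcont : ∀ (i : Fin n) (g : H), Continuous fun x : X i => g • x)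
    (hmin : ∀ (i : Fin n) (x : X i), Dense (MulAction.orbit H x))
    (hprox : ∀ i : Fin n, ∀ μ : Measure (X i), IsProbabilityMeasure μ →
      ∃ (g : ℕ → H) (x : X i), ∀ f : BoundedContinuousFunction (X i) ℝ,
        Tendsto (fun k => ∫ y, f (g k • y) ∂μ) atTop (nhds (f x))) :
    ∀ μ : Measure (∀ i, X i), IsProbabilityMeasure μ →
      ∃ (g : ℕ → H) (x : ∀ i, X i), ∀ f : BoundedContinuousFunction (∀ i, X i) ℝ,
        Tendsto (fun k => ∫ y, f (g k • y) ∂μ) atTop (nhds (f x)) := by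
  have (i : Fin n) : ContinuousConstSMul H (X i) := ⟨hcont i⟩
  exact stronglyProximal_pi_general hprox
end
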